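/- arXiv:1409.3922 — 3 statements merged into one kernel-verified Lean document; each statement's English description precedes it below -/
import Mathlib

section
/- Let (X,μ) be a good Cantor measure space. For any meager F_σ-sets A, B ⊆ X with μ(A) = μ(B) = μ(X), there exists a measure-preserving homeomorphism h of X with h(A) = B. -/
/-!
The homeomorphism is built by a back-and-forth construction on the closed nowhere dense pieces of
`A` and `B`, resting on three facts.

* Stone duality (`exists_homeo_of_rel`): a measure-preserving matching of clopen sets that respects
  intersections and complements and is total on both sides comes from a measure-preserving
  homeomorphism. Every limit below is taken in this form, so that no metric is needed.

* Room (`exists_split_dom`, `exists_split_cod`, `Matched.exists_homeo`): let `P` be closed and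
  nowhere dense, `E` closed, and suppose that matched cells `U`, `V` of two partitions have equal
  measure and satisfy `μ (P ∩ U) < μ (E ∩ V)` whenever `U` meets `P`. Both partitions can be refined
  along any clopen set keeping this invariant. A clopen neighbourhood `N` of `P ∩ U` with
  `μ N < μ (E ∩ V)` is placed by the Subset Condition inside a clopen neighbourhood `E'` of `E ∩ V`
  so tight that `μ (E' \ E)` is below the measures of the pieces of `N \ P`; the latter are positive
  because `P` is nowhere dense. In the limit each point of `P` has an image all of whose
  neighbourhoods meet `E`. An `F_σ` set of full measure contains a closed set `E` with enough room,
  so `P` can be carried into it (`exists_homeo_into`).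

* Gluing (`exists_homeo_fixing`): the complement of a closed set `L` is a disjoint union of clopen
  sets `R n`. Applying the previous fact on each `R n`, with more and more clopen sets kept
  invariant, gives a homeomorphism that is the identity on `L` and carries `P \ L` into the given
  `F_σ` set.

With these, `Stage.step` alternately absorbs the pieces of `A` and of `B` into a growing closed set
of target points that are never moved again, while the preimages and images of the first `n` clopen
sets are frozen from step `n` on. The approximations then converge in the sense of Stone duality,
and the limit maps `A` onto `B`.
-/

open MeasureTheory Set

set_option linter.unusedSectionVars false

section Helpers

variable {X : Type*} [TopologicalSpace X] [CompactSpace X] [T2Space X]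
  [TopologicalSpace.MetrizableSpace X] [TotallyDisconnectedSpace X]
  [MeasurableSpace X] [BorelSpace X]
  {μ : MeasureTheory.Measure X} [MeasureTheory.IsFiniteMeasure μ]

/-! ### Clopen sets of prescribed measure -/

/-- The Subset Condition in real-valued form, including the case of equal measures. -/
def SubsetCond (μ : Measure X) : Prop :=
  ∀ U V : Set X, IsClopen U → IsClopen V → μ.real U ≤ μ.real V →
    ∃ W, W ⊆ V ∧ IsClopen W ∧ μ.real W = μ.real U

theorem subsetCond_of_lt
    (hsc : ∀ U V : Set X, IsClopen U → IsClopen V → μ U < μ V →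
      ∃ W, W ⊆ V ∧ IsClopen W ∧ μ W = μ U) : SubsetCond μ := by
  intro U V hU hV h
  rcases h.lt_or_eq with h | h
  · have : μ U < μ V := (ENNReal.toReal_lt_toReal (by finiteness) (by finiteness)).1 h
    obtain ⟨W, h1, h2, h3⟩ := hsc U V hU hV this
    exact ⟨W, h1, h2, by simp [Measure.real, h3]⟩
  · exact ⟨V, subset_rfl, hV, h.symm⟩

theorem exists_clopen_between {K U : Set X} (hK : IsClosed K) (hU : IsOpen U) (h : K ⊆ U) :
    ∃ N, IsClopen N ∧ K ⊆ N ∧ N ⊆ U := by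
  have hb := isTopologicalBasis_isClopen (X := X)
  have : ∀ x ∈ K, ∃ N : Set X, N ∈ nhdsWithin x K ∧ ∃ M, IsClopen M ∧ N ⊆ M ∧ M ⊆ U := by
    intro x hx
    obtain ⟨M, hM, hxM, hMU⟩ := hb.exists_subset_of_mem_open (h hx) hU
    exact ⟨M, mem_nhdsWithin_of_mem_nhds (hM.isOpen.mem_nhds hxM), M, hM, subset_rfl, hMU⟩
  refine hK.isCompact.induction_on (p := fun N => ∃ M, IsClopen M ∧ N ⊆ M ∧ M ⊆ U)
    ⟨∅, isClopen_empty, by simp, by simp⟩ ?_ ?_ this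
  · rintro s t hst ⟨M, h1, h2, h3⟩
    exact ⟨M, h1, hst.trans h2, h3⟩
  · rintro s t ⟨M, h1, h2, h3⟩ ⟨M', h1', h2', h3'⟩
    exact ⟨M ∪ M', h1.union h1', union_subset_union h2 h2', union_subset h3 h3'⟩

theorem exists_clopen_between_lt {K U : Set X} (hK : IsClosed K) (hU : IsOpen U) (h : K ⊆ U)
    {r : ℝ} (hr : μ.real K < r) :
    ∃ N, IsClopen N ∧ K ⊆ N ∧ N ⊆ U ∧ μ.real N < r := by
  have hr0 : 0 < r := lt_of_le_of_lt measureReal_nonneg hr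
  have : μ K < ENNReal.ofReal r := by
    rw [← ofReal_measureReal (μ := μ) (s := K)]
    exact (ENNReal.ofReal_lt_ofReal_iff hr0).2 hr
  obtain ⟨O, hKO, hO, hOr⟩ := K.exists_isOpen_lt_of_lt _ this
  obtain ⟨N, h1, h2, h3⟩ := exists_clopen_between hK (hO.inter hU) (subset_inter hKO h)
  refine ⟨N, h1, h2, h3.trans inter_subset_right, ?_⟩
  have h4 : μ N < ENNReal.ofReal r := (measure_mono (h3.trans inter_subset_left)).trans_lt hOr
  rw [Measure.real, ← ENNReal.toReal_ofReal hr0.le]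
  exact (ENNReal.toReal_lt_toReal (by finiteness) (by finiteness)).2 h4

/-- Since `μ` has no atoms, the measures of clopen subsets of `N` are dense in `[0, μ N]`. -/
theorem exists_clopen_subset_between (hcont : ∀ x : X, μ {x} = 0) {N : Set X} (hN : IsClopen N)
    {a b : ℝ} (hab : a < b) (hb : 0 < b) (ha : a < μ.real N) :
    ∃ M, IsClopen M ∧ M ⊆ N ∧ a < μ.real M ∧ μ.real M < b := by
  have hsmall : ∀ x ∈ N, ∃ s ∈ nhdsWithin x N, ∃ t : Finset (Set X),
      (∀ u ∈ t, IsClopen u ∧ μ.real u < b - a) ∧ s ⊆ ⋃ u ∈ t, u := by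
    intro x hx
    obtain ⟨u, hu, hxu, -, hlt⟩ := exists_clopen_between_lt (μ := μ) (K := {x}) isClosed_singleton
      isOpen_univ (subset_univ _) (r := b - a) (by simp [Measure.real, hcont, hab])
    exact ⟨u, mem_nhdsWithin_of_mem_nhds (hu.isOpen.mem_nhds (hxu rfl)), {u}, by simp [hu, hlt],
      by simp⟩
  obtain ⟨t, ht, hNt⟩ := hN.isClosed.isCompact.induction_on
    (p := fun s => ∃ t : Finset (Set X),
      (∀ u ∈ t, IsClopen u ∧ μ.real u < b - a) ∧ s ⊆ ⋃ u ∈ t, u)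
    ⟨∅, by simp⟩ (fun s s' h ⟨t, h1, h2⟩ => ⟨t, h1, h.trans h2⟩)
    (fun s s' ⟨t, h1, h2⟩ ⟨t', h1', h2'⟩ => by
      classical
      refine ⟨t ∪ t', fun u hu => ?_, ?_⟩
      · rcases Finset.mem_union.1 hu with h | h
        exacts [h1 u h, h1' u h]
      · rw [Finset.set_biUnion_union]
        exact union_subset_union h2 h2') hsmall
  have main : ∀ t : Finset (Set X), (∀ u ∈ t, IsClopen u ∧ μ.real u < b - a) →
      a < μ.real (N ∩ ⋃ u ∈ t, u) →
      ∃ M, IsClopen M ∧ M ⊆ N ∧ a < μ.real M ∧ μ.real M < b := by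
    classical
    intro t
    induction t using Finset.induction_on with
    | empty =>
      intro _ h
      exact ⟨∅, isClopen_empty, by simp, by simpa using h, by simpa using hb⟩
    | insert v t _ ih =>
      intro ht h
      have ht' : ∀ u ∈ t, IsClopen u ∧ μ.real u < b - a :=
        fun u hu => ht u (Finset.mem_insert_of_mem hu)
      by_cases h' : a < μ.real (N ∩ ⋃ u ∈ t, u)
      · exact ih ht' h'
      · have hc : IsClopen (⋃ u ∈ insert v t, u) :=
          Set.Finite.isClopen_biUnion (Finset.finite_toSet _) fun u hu => (ht u hu).1
        refine ⟨N ∩ ⋃ u ∈ insert v t, u, hN.inter hc, inter_subset_left, h, ?_⟩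
        have h1 : N ∩ ⋃ u ∈ insert v t, u ⊆ (N ∩ ⋃ u ∈ t, u) ∪ v := by
          rw [Finset.set_biUnion_insert]
          intro x hx
          rcases hx.2 with h | h
          exacts [Or.inr h, Or.inl ⟨hx.1, h⟩]
        have h2 := (measureReal_mono (μ := μ) h1).trans (measureReal_union_le _ _)
        have h3 := (ht v (Finset.mem_insert_self _ _)).2
        linarith
  exact main t ht (by rwa [inter_eq_left.2 hNt])

/-- If `N₁`, `N₂` are disjoint in `U`, and `V₁ ⊆ V` and its complement in `V` are large enough to
hold copies of them, then `U` splits as `V` does, with `N₁` and `N₂` on different sides. -/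
theorem exists_fill (hsc : SubsetCond μ) {U V N₁ N₂ V₁ : Set X} (hU : IsClopen U)
    (hN₁ : IsClopen N₁) (hN₂ : IsClopen N₂) (hV₁ : IsClopen V₁)
    (h₁ : N₁ ⊆ U) (h₂ : N₂ ⊆ U) (hd : Disjoint N₁ N₂) (hV : V₁ ⊆ V)
    (hUV : μ.real U = μ.real V) (hm₁ : μ.real N₁ ≤ μ.real V₁)
    (hm₂ : μ.real N₂ ≤ μ.real (V \ V₁)) :
    ∃ U₁, IsClopen U₁ ∧ N₁ ⊆ U₁ ∧ U₁ ⊆ U ∧ Disjoint U₁ N₂ ∧ μ.real U₁ = μ.real V₁ := by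
  obtain ⟨V', hV'1, hV'c, hV'm⟩ := hsc _ _ hN₁ hV₁ hm₁
  have e1 : μ.real (V₁ \ V') = μ.real V₁ - μ.real V' :=
    measureReal_sdiff hV'1 hV'c.isOpen.measurableSet
  have e2 : μ.real (V \ V₁) = μ.real V - μ.real V₁ :=
    measureReal_sdiff hV hV₁.isOpen.measurableSet
  have e3 : μ.real (U \ (N₁ ∪ N₂)) = μ.real U - μ.real (N₁ ∪ N₂) :=
    measureReal_sdiff (union_subset h₁ h₂) (hN₁.union hN₂).isOpen.measurableSet
  have e4 : μ.real (N₁ ∪ N₂) = μ.real N₁ + μ.real N₂ :=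
    measureReal_union hd hN₂.isOpen.measurableSet
  obtain ⟨W, hW1, hWc, hWm⟩ := hsc (V₁ \ V') (U \ (N₁ ∪ N₂)) (hV₁.diff hV'c)
    (hU.diff (hN₁.union hN₂)) (by linarith)
  have hdW : Disjoint N₁ W :=
    disjoint_left.2 fun x hx hxW => (hW1 hxW).2 (Or.inl hx)
  refine ⟨N₁ ∪ W, hN₁.union hWc, subset_union_left, union_subset h₁ (hW1.trans sdiff_subset),
    disjoint_union_left.2 ⟨hd, disjoint_left.2 fun x hxW hx => (hW1 hxW).2 (Or.inr hx)⟩, ?_⟩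
  rw [measureReal_union hdW hWc.isOpen.measurableSet]
  linarith

/-- The invariant of a pair of cells `U`, `V` in the construction of a homeomorphism carrying `P`
into `E`: there is more room in `E ∩ V` than `P ∩ U` needs. -/
def Room (μ : Measure X) (P E U V : Set X) : Prop :=
  P ∩ U = ∅ ∨ μ.real (P ∩ U) < μ.real (E ∩ V)

/-- Refining a matched pair of cells along a clopen subset `S` of the domain side. -/
theorem exists_split_dom (hsc : SubsetCond μ)
    (hpos : ∀ U : Set X, IsOpen U → U.Nonempty → 0 < μ U)
    {P E : Set X} (hP : IsClosed P) (hPi : interior P = ∅) (hE : IsClosed E)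
    {U V S : Set X} (hU : IsClopen U) (hV : IsClopen V) (hS : IsClopen S)
    (hUV : μ.real U = μ.real V) (hR : Room μ P E U V) :
    ∃ V₁, IsClopen V₁ ∧ V₁ ⊆ V ∧ μ.real (U ∩ S) = μ.real V₁ ∧
      Room μ P E (U ∩ S) V₁ ∧ Room μ P E (U \ S) (V \ V₁) := by
  rcases hR with hR | hR
  · obtain ⟨V₁, h1, h2, h3⟩ := hsc (U ∩ S) V (hU.inter hS) hV
      (hUV ▸ measureReal_mono inter_subset_left)
    refine ⟨V₁, h2, h1, h3.symm, Or.inl ?_, Or.inl ?_⟩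
    · exact subset_empty_iff.1 (hR ▸ inter_subset_inter_right _ inter_subset_left)
    · exact subset_empty_iff.1 (hR ▸ inter_subset_inter_right _ sdiff_subset)
  obtain ⟨N, hN, hPN, hNU, hNE⟩ := exists_clopen_between_lt (hP.inter hU.isClosed) hU.isOpen
    inter_subset_right hR
  -- a nonempty clopen set is not exhausted by the nowhere dense set `P`
  have hδ : ∀ M : Set X, IsClopen M → ∃ δ > 0, M = ∅ ∨ δ ≤ μ.real (M \ P) := by
    intro M hM
    rcases M.eq_empty_or_nonempty with h | h
    · exact ⟨1, one_pos, Or.inl h⟩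
    · refine ⟨μ.real (M \ P), ENNReal.toReal_pos (hpos _ (hM.isOpen.sdiff hP) ?_).ne'
        (by finiteness), Or.inr le_rfl⟩
      by_contra hne
      have : M ⊆ interior P :=
        interior_maximal (sdiff_eq_empty.1 (not_nonempty_iff_eq_empty.1 hne)) hM.isOpen
      rw [hPi] at this
      exact h.ne_empty (subset_empty_iff.1 this)
  have hN₁ := hN.inter hS
  have hN₂ := hN.diff hS
  obtain ⟨δ₁, hδ₁, hN₁δ⟩ := hδ _ hN₁
  obtain ⟨δ₂, hδ₂, hN₂δ⟩ := hδ _ hN₂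
  obtain ⟨E', hE', hEE', hE'V, hE'm⟩ := exists_clopen_between_lt (μ := μ) (hE.inter hV.isClosed)
    hV.isOpen inter_subset_right (lt_add_of_pos_right _ (lt_min hδ₁ hδ₂))
  have hE'd : μ.real (E' \ (E ∩ V)) < min δ₁ δ₂ := by
    rw [measureReal_sdiff hEE' (hE.inter hV.isClosed).measurableSet]
    linarith
  have hNN : μ.real (N ∩ S) + μ.real (N \ S) = μ.real N :=
    measureReal_inter_add_sdiff hS.isOpen.measurableSet
  have hEE'm : μ.real (E ∩ V) ≤ μ.real E' := measureReal_mono hEE'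
  obtain ⟨Q₁, hQ₁E, hQ₁, hQ₁m⟩ := hsc _ E' hN₁ hE' (by
    have : 0 ≤ μ.real (N \ S) := measureReal_nonneg
    linarith)
  obtain ⟨Q₂, hQ₂E, hQ₂, hQ₂m⟩ := hsc _ (E' \ Q₁) hN₂ (hE'.diff hQ₁) (by
    rw [measureReal_sdiff hQ₁E hQ₁.isOpen.measurableSet]; linarith)
  obtain ⟨V₁, hV₁, hQV₁, hV₁V, hd, hV₁m⟩ := exists_fill hsc (V := U) (V₁ := U ∩ S) hV hQ₁ hQ₂
    (hU.inter hS) (hQ₁E.trans hE'V) (hQ₂E.trans (sdiff_subset.trans hE'V))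
    (disjoint_left.2 fun x hx hx' => (hQ₂E hx').2 hx) inter_subset_left hUV.symm
    (hQ₁m ▸ measureReal_mono (inter_subset_inter_left _ hNU))
    (hQ₂m ▸ measureReal_mono (fun x hx => ⟨hNU hx.1, fun h => hx.2 h.2⟩))
  have room : ∀ (U' V' M Q : Set X) (δ : ℝ), M = ∅ ∨ δ ≤ μ.real (M \ P) → min δ₁ δ₂ ≤ δ →
      P ∩ U' ⊆ M → Q ⊆ V' → Q ⊆ E' → μ.real Q = μ.real M → Room μ P E U' V' := by
    intro U' V' M Q δ hM hδ hU' hV' hQ hQM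
    rcases hM with hM | hM
    · exact Or.inl (subset_empty_iff.1 (hM ▸ hU'))
    right
    have a1 : μ.real (M ∩ P) + μ.real (M \ P) = μ.real M :=
      measureReal_inter_add_sdiff hP.measurableSet
    have a2 : μ.real (Q ∩ E) + μ.real (Q \ E) = μ.real Q :=
      measureReal_inter_add_sdiff hE.measurableSet
    have a3 : μ.real (Q \ E) ≤ μ.real (E' \ (E ∩ V)) :=
      measureReal_mono fun x hx => ⟨hQ hx.1, fun h => hx.2 h.1⟩
    have a4 : μ.real (P ∩ U') ≤ μ.real (M ∩ P) :=
      measureReal_mono fun x hx => ⟨hU' hx, hx.1⟩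
    have a5 : μ.real (Q ∩ E) ≤ μ.real (E ∩ V') :=
      measureReal_mono fun x hx => ⟨hx.2, hV' hx.1⟩
    linarith
  refine ⟨V₁, hV₁, hV₁V, hV₁m.symm, ?_, ?_⟩
  · exact room _ _ _ Q₁ _ hN₁δ (min_le_left _ _) (fun x hx => ⟨hPN ⟨hx.1, hx.2.1⟩, hx.2.2⟩)
      hQV₁ hQ₁E hQ₁m
  · exact room _ _ _ Q₂ _ hN₂δ (min_le_right _ _) (fun x hx => ⟨hPN ⟨hx.1, hx.2.1⟩, hx.2.2⟩)
      (fun x hx => ⟨hE'V (hQ₂E hx).1, fun h => disjoint_left.1 hd h hx⟩)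
      (hQ₂E.trans sdiff_subset) hQ₂m

/-- Refining a matched pair of cells along a clopen subset `T` of the target side. -/
theorem exists_split_cod (hsc : SubsetCond μ) (hcont : ∀ x : X, μ {x} = 0)
    {P E : Set X} (hP : IsClosed P)
    {U V T : Set X} (hU : IsClopen U) (hV : IsClopen V) (hT : IsClopen T)
    (hUV : μ.real U = μ.real V) (hR : Room μ P E U V) :
    ∃ U₁, IsClopen U₁ ∧ U₁ ⊆ U ∧ μ.real U₁ = μ.real (V ∩ T) ∧
      Room μ P E U₁ (V ∩ T) ∧ Room μ P E (U \ U₁) (V \ T) := by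
  rcases hR with hR | hR
  · obtain ⟨U₁, h1, h2, h3⟩ := hsc (V ∩ T) U (hV.inter hT) hU
      (hUV ▸ measureReal_mono inter_subset_left)
    refine ⟨U₁, h2, h1, h3, Or.inl ?_, Or.inl ?_⟩
    · exact subset_empty_iff.1 (hR ▸ inter_subset_inter_right _ h1)
    · exact subset_empty_iff.1 (hR ▸ inter_subset_inter_right _ sdiff_subset)
  obtain ⟨N, hN, hPN, hNU, hNE⟩ := exists_clopen_between_lt (hP.inter hU.isClosed) hU.isOpen
    inter_subset_right hR
  have hEs : μ.real (E ∩ (V ∩ T)) + μ.real (E ∩ (V \ T)) = μ.real (E ∩ V) := by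
    rw [← measureReal_inter_add_sdiff (s := E ∩ V) hT.isOpen.measurableSet, inter_assoc,
      inter_sdiff_assoc]
  have n1 : 0 ≤ μ.real (E ∩ (V ∩ T)) := measureReal_nonneg
  have n2 : 0 ≤ μ.real (E ∩ (V \ T)) := measureReal_nonneg
  obtain ⟨N₁, hN₁, hN₁N, h1, h2⟩ : ∃ N₁, IsClopen N₁ ∧ N₁ ⊆ N ∧
      (N₁ = ∅ ∨ μ.real N₁ < μ.real (E ∩ (V ∩ T))) ∧
      (N \ N₁ = ∅ ∨ μ.real (N \ N₁) < μ.real (E ∩ (V \ T))) := by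
    rcases n1.eq_or_lt with z1 | z1
    · exact ⟨∅, isClopen_empty, empty_subset _, Or.inl rfl, Or.inr (by rw [sdiff_empty]; linarith)⟩
    rcases n2.eq_or_lt with z2 | z2
    · exact ⟨N, hN, subset_rfl, Or.inr (by linarith), Or.inl Set.sdiff_self⟩
    obtain ⟨M, hM, hMN, hM1, hM2⟩ := exists_clopen_subset_between hcont hN
      (a := μ.real N - μ.real (E ∩ (V \ T))) (b := μ.real (E ∩ (V ∩ T)))
      (by linarith) z1 (by linarith)
    refine ⟨M, hM, hMN, Or.inr hM2, Or.inr ?_⟩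
    rw [measureReal_sdiff hMN hM.isOpen.measurableSet]
    linarith
  have bound : ∀ M V', (M = ∅ ∨ μ.real M < μ.real (E ∩ V')) → μ.real M ≤ μ.real V' := by
    rintro M V' (h | h)
    · rw [h, measureReal_empty]; exact measureReal_nonneg
    · exact h.le.trans (measureReal_mono inter_subset_right)
  obtain ⟨U₁, hU₁, hN₁U₁, hU₁U, hd, hU₁m⟩ := exists_fill hsc (V := V) (V₁ := V ∩ T) hU hN₁
    (hN.diff hN₁) (hV.inter hT) (hN₁N.trans hNU) (sdiff_subset.trans hNU) disjoint_sdiff_right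
    inter_subset_left hUV (bound _ _ h1) (by rw [sdiff_self_inter]; exact bound _ _ h2)
  have room : ∀ U' V' M, (M = ∅ ∨ μ.real M < μ.real (E ∩ V')) → P ∩ U' ⊆ M →
      Room μ P E U' V' := by
    rintro U' V' M (h | h) hM
    · exact Or.inl (subset_empty_iff.1 (h ▸ hM))
    · exact Or.inr ((measureReal_mono hM).trans_lt h)
  refine ⟨U₁, hU₁, hU₁U, hU₁m, room _ _ _ h1 ?_, room _ _ _ h2 ?_⟩
  · intro x hx
    by_contra hn
    exact disjoint_left.1 hd hx.2 ⟨hPN ⟨hx.1, hU₁U hx.2⟩, hn⟩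
  · exact fun x hx => ⟨hPN ⟨hx.1, hx.2.1⟩, fun h => hx.2.2 (hN₁U₁ h)⟩

/-! ### Homeomorphisms from matchings of clopen sets -/

theorem eq_of_clopen {x y : X} (h : ∀ S : Set X, IsClopen S → x ∈ S → y ∈ S) : x = y := by
  by_contra hne
  obtain ⟨S, hS, hxS, hyS⟩ := exists_isClopen_of_totally_separated hne
  exact hyS (h S hS hxS)

/-- A relation on clopen sets compatible with the Boolean operations and total on the left
determines a point map, by compactness. -/
theorem exists_map_of_rel (R : Set X → Set X → Prop)
    (hcl : ∀ S T, R S T → IsClopen S ∧ IsClopen T)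
    (hinter : ∀ S T S' T', R S T → R S' T' → R (S ∩ S') (T ∩ T'))
    (hcompl : ∀ S T, R S T → R Sᶜ Tᶜ)
    (hne : ∀ S T, R S T → S.Nonempty → T.Nonempty)
    (htot : ∀ S, IsClopen S → ∃ T, R S T) :
    ∃ f : X → X, ∀ S T, R S T → ∀ x, f x ∈ T ↔ x ∈ S := by
  have key : ∀ x, ∃ y, ∀ S T, R S T → x ∈ S → y ∈ T := by
    intro x
    let C : Set (Set X) := {T | ∃ S, x ∈ S ∧ R S T}
    obtain ⟨T₀, hT₀⟩ := htot univ isClopen_univ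
    have hCne : C.Nonempty := ⟨T₀, univ, mem_univ x, hT₀⟩
    have : Nonempty C := hCne.to_subtype
    have h := IsCompact.nonempty_sInter_of_directed_nonempty_isCompact_isClosed (S := C)
      (by
        rintro T ⟨S, hx, hR⟩ T' ⟨S', hx', hR'⟩
        exact ⟨T ∩ T', ⟨S ∩ S', ⟨hx, hx'⟩, hinter _ _ _ _ hR hR'⟩, inter_subset_left,
          inter_subset_right⟩)
      (by rintro T ⟨S, hx, hR⟩; exact hne _ _ hR ⟨x, hx⟩)
      (by rintro T ⟨S, hx, hR⟩; exact (hcl _ _ hR).2.isClosed.isCompact)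
      (by rintro T ⟨S, hx, hR⟩; exact (hcl _ _ hR).2.isClosed)
    obtain ⟨y, hy⟩ := h
    exact ⟨y, fun S T hR hx => hy T ⟨S, hx, hR⟩⟩
  choose f hf using key
  refine ⟨f, fun S T hR x => ⟨fun h => ?_, hf x S T hR⟩⟩
  by_contra hx
  exact hf x _ _ (hcompl _ _ hR) hx h

/-- Stone duality for measure-preserving homeomorphisms: a measure-preserving Boolean matching of
clopen sets, total on both sides, is induced by a measure-preserving homeomorphism. -/
theorem exists_homeo_of_rel (hpos : ∀ U : Set X, IsOpen U → U.Nonempty → 0 < μ U)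
    (R : Set X → Set X → Prop)
    (hcl : ∀ S T, R S T → IsClopen S ∧ IsClopen T)
    (hinter : ∀ S T S' T', R S T → R S' T' → R (S ∩ S') (T ∩ T'))
    (hcompl : ∀ S T, R S T → R Sᶜ Tᶜ)
    (hm : ∀ S T, R S T → μ S = μ T)
    (hS : ∀ S, IsClopen S → ∃ T, R S T) (hT : ∀ T, IsClopen T → ∃ S, R S T) :
    ∃ h : X ≃ₜ X, MeasurePreserving h μ μ ∧ ∀ S T, R S T → h ⁻¹' T = S := by
  have ne : ∀ {S T : Set X}, IsOpen S → μ S = μ T → S.Nonempty → T.Nonempty := by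
    intro S T hS h hne
    exact nonempty_of_measure_ne_zero (h ▸ (hpos S hS hne).ne')
  obtain ⟨f, hf⟩ := exists_map_of_rel R hcl hinter hcompl
    (fun S T h => ne (hcl _ _ h).1.isOpen (hm _ _ h)) hS
  obtain ⟨g, hg⟩ := exists_map_of_rel (fun T S => R S T) (fun S T h => (hcl _ _ h).symm)
    (fun _ _ _ _ h h' => hinter _ _ _ _ h h') (fun _ _ h => hcompl _ _ h)
    (fun S T h => ne (hcl _ _ h).2.isOpen (hm _ _ h).symm) hT
  have hgf : ∀ x, g (f x) = x := fun x => (eq_of_clopen fun S hSc hx => by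
    obtain ⟨T, hR⟩ := hS S hSc
    exact (hg _ _ hR _).2 ((hf _ _ hR _).2 hx)).symm
  have hfg : ∀ x, f (g x) = x := fun x => (eq_of_clopen fun T hTc hx => by
    obtain ⟨S, hR⟩ := hT T hTc
    exact (hf _ _ hR _).2 ((hg _ _ hR _).2 hx)).symm
  have hpre : ∀ S T, R S T → f ⁻¹' T = S := fun S T hR => Set.ext fun x => hf S T hR x
  have hcont : Continuous f := by
    refine isTopologicalBasis_isClopen.continuous_iff.2 fun T hTc => ?_
    obtain ⟨S, hR⟩ := hT T hTc
    rw [hpre _ _ hR]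
    exact (hcl _ _ hR).1.isOpen
  let e : X ≃ X := ⟨f, g, hgf, hfg⟩
  refine ⟨Continuous.homeoOfEquivCompactToT2 (f := e) hcont, ⟨hcont.measurable, ?_⟩, hpre⟩
  have : SecondCountableTopology X := by
    let _ := TopologicalSpace.metrizableSpaceMetric X
    infer_instance
  have : IsFiniteMeasure (μ.map f) := inferInstance
  refine ext_of_generate_finite {S : Set X | IsClopen S} ?_ ?_ ?_ ?_
  · rw [BorelSpace.measurable_eq (α := X),
      isTopologicalBasis_isClopen.borel_eq_generateFrom]
  · exact fun S hS T hT _ => hS.inter hT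
  · intro T hTc
    obtain ⟨S, hR⟩ := hT T hTc
    change μ.map f T = μ T
    rw [Measure.map_apply hcont.measurable hTc.isOpen.measurableSet, hpre _ _ hR, hm _ _ hR]
  · change μ.map f univ = μ univ
    rw [Measure.map_apply hcont.measurable MeasurableSet.univ, preimage_univ]

/-- The clopen sets of a compact metrizable space can be enumerated. -/
theorem exists_clopen_enum (X : Type*) [TopologicalSpace X] [CompactSpace X] [T2Space X]
    [TopologicalSpace.MetrizableSpace X] [TotallyDisconnectedSpace X] :
    ∃ c : ℕ → Set X, (∀ n, IsClopen (c n)) ∧ ∀ S, IsClopen S → ∃ n, c n = S := by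
  have : SecondCountableTopology X := by
    let _ := TopologicalSpace.metrizableSpaceMetric X
    infer_instance
  have : Countable (TopologicalSpace.Clopens X) :=
    TopologicalSpace.Clopens.countable_iff_secondCountable.2 inferInstance
  obtain ⟨f, hf⟩ := exists_surjective_nat (TopologicalSpace.Clopens X)
  refine ⟨fun n => f n, fun n => (f n).isClopen, fun S hS => ?_⟩
  obtain ⟨n, hn⟩ := hf ⟨S, hS⟩
  exact ⟨n, congrArg SetLike.coe hn⟩

/-! ### Carrying a closed nowhere dense set into a closed set of larger measure -/

/-- Labellings `p`, `q` of `X` on the domain and target side, whose fibres with the same label are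
clopen sets of the same measure satisfying `Room`. A label is the list of outcomes of the binary
splittings performed so far, the latest first. -/
def Matched (μ : Measure X) (P E : Set X) (p q : X → List Bool) : Prop :=
  ∀ k, IsClopen (p ⁻¹' {k}) ∧ IsClopen (q ⁻¹' {k}) ∧
    μ.real (p ⁻¹' {k}) = μ.real (q ⁻¹' {k}) ∧ Room μ P E (p ⁻¹' {k}) (q ⁻¹' {k})

open Classical in
/-- The labelling `p` refined by splitting off the part `U k` of the fibre over `k`. -/
noncomputable def splitLabel (p : X → List Bool) (U : List Bool → Set X) (x : X) : List Bool :=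
  decide (x ∈ U (p x)) :: p x

theorem splitLabel_true (p : X → List Bool) (U : List Bool → Set X) (k : List Bool)
    (h : U k ⊆ p ⁻¹' {k}) : splitLabel p U ⁻¹' {true :: k} = U k := by
  ext x
  simp only [splitLabel, mem_preimage, mem_singleton_iff, List.cons.injEq, decide_eq_true_eq]
  exact ⟨fun ⟨h1, h2⟩ => h2 ▸ h1, fun hx => by have := h hx; simp at this; simp [this, hx]⟩

theorem splitLabel_false (p : X → List Bool) (U : List Bool → Set X) (k : List Bool) :
    splitLabel p U ⁻¹' {false :: k} = p ⁻¹' {k} \ U k := by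
  ext x
  simp only [splitLabel, mem_preimage, mem_singleton_iff, List.cons.injEq, decide_eq_false_iff_not,
    mem_sdiff]
  exact ⟨fun ⟨h1, h2⟩ => ⟨h2, h2 ▸ h1⟩, fun ⟨h1, h2⟩ => ⟨h1 ▸ h2, h1⟩⟩

theorem splitLabel_nil (p : X → List Bool) (U : List Bool → Set X) :
    splitLabel p U ⁻¹' {[]} = ∅ := by
  ext x; simp [splitLabel]

theorem splitLabel_sat (p : X → List Bool) (S : Set X) :
    splitLabel p (fun k => p ⁻¹' {k} ∩ S) ⁻¹' {l | l.head? = some true} = S := by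
  ext x; simp [splitLabel]

theorem Matched.split {P E : Set X} {p q : X → List Bool} (h : Matched μ P E p q)
    (U V : List Bool → Set X) (hU : ∀ k, IsClopen (U k) ∧ U k ⊆ p ⁻¹' {k})
    (hV : ∀ k, IsClopen (V k) ∧ V k ⊆ q ⁻¹' {k}) (hUV : ∀ k, μ.real (U k) = μ.real (V k))
    (hR : ∀ k, Room μ P E (U k) (V k) ∧ Room μ P E (p ⁻¹' {k} \ U k) (q ⁻¹' {k} \ V k)) :
    Matched μ P E (splitLabel p U) (splitLabel q V) := by
  rintro (_ | ⟨_ | _, k⟩)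
  · simp [splitLabel_nil, isClopen_empty, Room]
  · obtain ⟨h1, h2, h3, -⟩ := h k
    rw [splitLabel_false, splitLabel_false]
    refine ⟨h1.diff (hU k).1, h2.diff (hV k).1, ?_, (hR k).2⟩
    rw [measureReal_sdiff (hU k).2 (hU k).1.isOpen.measurableSet,
      measureReal_sdiff (hV k).2 (hV k).1.isOpen.measurableSet, h3, hUV k]
  · rw [splitLabel_true _ _ _ (hU k).2, splitLabel_true _ _ _ (hV k).2]
    exact ⟨(hU k).1, (hV k).1, hUV k, (hR k).1⟩

/-- One round of the back-and-forth: `S` becomes a union of cells on both sides. -/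
theorem Matched.step (hsc : SubsetCond μ) (hcont : ∀ x : X, μ {x} = 0)
    (hpos : ∀ U : Set X, IsOpen U → U.Nonempty → 0 < μ U)
    {P E : Set X} (hP : IsClosed P) (hPi : interior P = ∅) (hE : IsClosed E)
    {p q : X → List Bool} (h : Matched μ P E p q) {S : Set X} (hS : IsClopen S) :
    ∃ p' q', Matched μ P E p' q' ∧ (∃ r : List Bool → List Bool, p = r ∘ p' ∧ q = r ∘ q') ∧
      (∃ F, S = p' ⁻¹' F) ∧ (∃ F, S = q' ⁻¹' F) := by
  choose V hVc hV hVm hV1 hV2 using fun k =>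
    exists_split_dom hsc hpos hP hPi hE (h k).1 (h k).2.1 hS (h k).2.2.1 (h k).2.2.2
  have h' := h.split (fun k => p ⁻¹' {k} ∩ S) V
    (fun k => ⟨(h k).1.inter hS, inter_subset_left⟩) (fun k => ⟨hVc k, hV k⟩) hVm
    (fun k => ⟨hV1 k, by simpa only [sdiff_self_inter] using hV2 k⟩)
  have hsat := splitLabel_sat p S
  set p₁ := splitLabel p (fun k => p ⁻¹' {k} ∩ S) with hp₁
  set q₁ := splitLabel q V with hq₁
  choose U hUc hU hUm hU1 hU2 using fun k =>
    exists_split_cod hsc hcont hP (h' k).1 (h' k).2.1 hS (h' k).2.2.1 (h' k).2.2.2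
  have h'' := h'.split U (fun k => q₁ ⁻¹' {k} ∩ S) (fun k => ⟨hUc k, hU k⟩)
    (fun k => ⟨(h' k).2.1.inter hS, inter_subset_left⟩) hUm
    (fun k => ⟨hU1 k, by simpa only [sdiff_self_inter] using hU2 k⟩)
  refine ⟨_, _, h'', ⟨List.tail ∘ List.tail, rfl, rfl⟩,
    ⟨List.tail ⁻¹' {l | l.head? = some true}, ?_⟩, ⟨_, (splitLabel_sat q₁ S).symm⟩⟩
  exact hsat.symm

theorem Matched.clopen {P E : Set X} {p q : X → List Bool} (h : Matched μ P E p q)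
    (F : Set (List Bool)) : IsClopen (p ⁻¹' F) ∧ IsClopen (q ⁻¹' F) := by
  have aux : ∀ p : X → List Bool, (∀ k, IsClopen (p ⁻¹' {k})) → ∀ F, IsOpen (p ⁻¹' F) := by
    intro p hp F
    rw [← biUnion_preimage_singleton]
    exact isOpen_biUnion fun k _ => (hp k).isOpen
  have h1 := aux p fun k => (h k).1
  have h2 := aux q fun k => (h k).2.1
  exact ⟨⟨⟨h1 Fᶜ⟩, h1 F⟩, ⟨⟨h2 Fᶜ⟩, h2 F⟩⟩

theorem Matched.measure_eq {P E : Set X} {p q : X → List Bool} (h : Matched μ P E p q)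
    (F : Set (List Bool)) : μ (p ⁻¹' F) = μ (q ⁻¹' F) := by
  have aux : ∀ p : X → List Bool, (∀ k, IsClopen (p ⁻¹' {k})) →
      μ (p ⁻¹' F) = ∑' k : F, μ (p ⁻¹' {(k : List Bool)}) := by
    intro p hp
    rw [← biUnion_preimage_singleton, measure_biUnion F.to_countable]
    · intro i _ j _ hij
      exact Disjoint.preimage _ (disjoint_singleton.2 hij)
    · exact fun k _ => (hp k).isOpen.measurableSet
  rw [aux p fun k => (h k).1, aux q fun k => (h k).2.1]
  congr 1
  ext k
  exact (measureReal_eq_measureReal_iff).1 (h k).2.2.1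

/-- Any matching of partitions extends to a homeomorphism carrying `P` into `E`. -/
theorem Matched.exists_homeo (hsc : SubsetCond μ) (hcont : ∀ x : X, μ {x} = 0)
    (hpos : ∀ U : Set X, IsOpen U → U.Nonempty → 0 < μ U)
    {P E : Set X} (hP : IsClosed P) (hPi : interior P = ∅) (hE : IsClosed E)
    {p q : X → List Bool} (h : Matched μ P E p q) :
    ∃ g : X ≃ₜ X, MeasurePreserving g μ μ ∧ (∀ x, q (g x) = p x) ∧ ∀ x ∈ P, g x ∈ E := by
  obtain ⟨c, hc, hcs⟩ := exists_clopen_enum X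
  let St := {s : (X → List Bool) × (X → List Bool) // Matched μ P E s.1 s.2}
  have hstep : ∀ (n : ℕ) (s : St), ∃ s' : St,
      (∃ r : List Bool → List Bool, s.1.1 = r ∘ s'.1.1 ∧ s.1.2 = r ∘ s'.1.2) ∧
      (∃ F, c n = s'.1.1 ⁻¹' F) ∧ (∃ F, c n = s'.1.2 ⁻¹' F) := by
    intro n s
    obtain ⟨p', q', h', h1, h2, h3⟩ := s.2.step hsc hcont hpos hP hPi hE (hc n)
    exact ⟨⟨(p', q'), h'⟩, h1, h2, h3⟩
  choose f hf using hstep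
  let s : ℕ → St := fun n => Nat.rec ⟨(p, q), h⟩ (fun n t => f n t) n
  have hs : ∀ n, s (n + 1) = f n (s n) := fun n => rfl
  have href : ∀ m n, m ≤ n →
      ∃ r : List Bool → List Bool, (s m).1.1 = r ∘ (s n).1.1 ∧ (s m).1.2 = r ∘ (s n).1.2 := by
    intro m n hmn
    induction n, hmn using Nat.le_induction with
    | base => exact ⟨id, rfl, rfl⟩
    | succ n _ ih =>
      obtain ⟨r, h1, h2⟩ := ih
      obtain ⟨r', h1', h2'⟩ := (hf n (s n)).1
      rw [← hs] at h1' h2'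
      exact ⟨r ∘ r', by rw [h1, h1']; rfl, by rw [h2, h2']; rfl⟩
  let R : Set X → Set X → Prop := fun S T =>
    ∀ᶠ n in Filter.atTop, ∃ F, S = (s n).1.1 ⁻¹' F ∧ T = (s n).1.2 ⁻¹' F
  -- sets that correspond at one stage correspond at all later ones
  have hR : ∀ n F, R ((s n).1.1 ⁻¹' F) ((s n).1.2 ⁻¹' F) := by
    intro n F
    filter_upwards [Filter.eventually_ge_atTop n] with m hm
    obtain ⟨r, h1, h2⟩ := href n m hm
    exact ⟨r ⁻¹' F, by rw [h1]; rfl, by rw [h2]; rfl⟩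
  obtain ⟨g, hgm, hg⟩ := exists_homeo_of_rel hpos R
    (fun S T hST => by
      obtain ⟨n, F, rfl, rfl⟩ := hST.exists
      exact (s n).2.clopen F)
    (fun S T S' T' h h' => by
      filter_upwards [h, h'] with n ⟨F, h1, h2⟩ ⟨F', h1', h2'⟩
      exact ⟨F ∩ F', by rw [h1, h1']; rfl, by rw [h2, h2']; rfl⟩)
    (fun S T h => by
      filter_upwards [h] with n ⟨F, h1, h2⟩
      exact ⟨Fᶜ, by rw [h1]; rfl, by rw [h2]; rfl⟩)
    (fun S T hST => by
      obtain ⟨n, F, rfl, rfl⟩ := hST.exists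
      exact (s n).2.measure_eq F)
    (fun S hS => by
      obtain ⟨n, rfl⟩ := hcs S hS
      obtain ⟨F, hF⟩ := (hf n (s n)).2.1
      rw [← hs] at hF
      exact ⟨_, hF ▸ hR (n + 1) F⟩)
    (fun S hS => by
      obtain ⟨n, rfl⟩ := hcs S hS
      obtain ⟨F, hF⟩ := (hf n (s n)).2.2
      rw [← hs] at hF
      exact ⟨_, hF ▸ hR (n + 1) F⟩)
  have hlab : ∀ n x, (s n).1.2 (g x) = (s n).1.1 x := by
    intro n x
    have := hg _ _ (hR n {(s n).1.1 x})
    have hx : x ∈ g ⁻¹' ((s n).1.2 ⁻¹' {(s n).1.1 x}) := by rw [this]; rfl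
    exact hx
  refine ⟨g, hgm, hlab 0, fun x hx => ?_⟩
  by_contra hgx
  obtain ⟨T, hT, hxT, hTE⟩ := isTopologicalBasis_isClopen.exists_subset_of_mem_open
    (show g x ∈ Eᶜ from hgx) hE.isOpen_compl
  obtain ⟨n, rfl⟩ := hcs T hT
  obtain ⟨F, hF⟩ := (hf n (s n)).2.2
  rw [← hs] at hF
  -- the cell of `x` meets `P`, so its partner, which lies inside `T`, meets `E`
  rcases ((s (n + 1)).2 ((s (n + 1)).1.1 x)).2.2.2 with h0 | h0
  · exact (h0 ▸ (⟨hx, rfl⟩ : x ∈ P ∩ (s (n + 1)).1.1 ⁻¹' {(s (n + 1)).1.1 x}) : x ∈ (∅ : Set X))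
  · obtain ⟨e, heE, he⟩ := nonempty_of_measureReal_ne_zero
      (lt_of_le_of_lt measureReal_nonneg h0).ne'
    refine hTE ?_ heE
    have hxF : (s (n + 1)).1.1 x ∈ F := hlab (n + 1) x ▸ (hF ▸ hxT : g x ∈ (s (n + 1)).1.2 ⁻¹' F)
    have he' : (s (n + 1)).1.2 e = (s (n + 1)).1.1 x := he
    rw [hF]
    exact (he'.symm ▸ hxF : (s (n + 1)).1.2 e ∈ F)

/-- Every finite list of clopen sets is refined by a finite clopen labelling. -/
theorem exists_label (l : List (Set X)) (hl : ∀ S ∈ l, IsClopen S) :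
    ∃ p : X → List Bool, (∀ k, IsClopen (p ⁻¹' {k})) ∧ (range p).Finite ∧
      ∀ S ∈ l, ∃ F, S = p ⁻¹' F := by
  induction l with
  | nil =>
    refine ⟨fun _ => [], fun k => ?_, (finite_singleton []).subset (by rintro _ ⟨x, rfl⟩; rfl),
      by simp⟩
    by_cases h : [] = k
    · simp [h, isClopen_univ]
    · simp [h, isClopen_empty]
  | cons S l ih =>
    obtain ⟨p, hp, hfin, hsat⟩ := ih fun T hT => hl T (List.mem_cons_of_mem _ hT)
    have hS : IsClopen S := hl S List.mem_cons_self
    refine ⟨splitLabel p fun k => p ⁻¹' {k} ∩ S, ?_, ?_, ?_⟩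
    · rintro (_ | ⟨_ | _, k⟩)
      · rw [splitLabel_nil]; exact isClopen_empty
      · rw [splitLabel_false]; exact (hp k).diff ((hp k).inter hS)
      · rw [splitLabel_true _ _ _ inter_subset_left]; exact (hp k).inter hS
    · refine ((finite_univ (α := Bool)).image2 List.cons hfin).subset ?_
      rintro _ ⟨x, rfl⟩
      exact ⟨_, mem_univ _, p x, mem_range_self x, rfl⟩
    · intro T hT
      rcases List.mem_cons.1 hT with rfl | hT
      · exact ⟨_, (splitLabel_sat p T).symm⟩
      · obtain ⟨F, hF⟩ := hsat T hT
        exact ⟨List.tail ⁻¹' F, hF⟩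

/-- A closed nowhere dense set can be carried into any `F_σ` set of full measure by a
measure-preserving homeomorphism leaving invariant finitely many prescribed clopen sets. -/
theorem exists_homeo_into (hsc : SubsetCond μ) (hcont : ∀ x : X, μ {x} = 0)
    (hpos : ∀ U : Set X, IsOpen U → U.Nonempty → 0 < μ U)
    {P : Set X} (hP : IsClosed P) (hPi : interior P = ∅)
    {F : ℕ → Set X} (hF : ∀ n, IsClosed (F n)) (hfull : μ (⋃ n, F n) = μ univ)
    (l : List (Set X)) (hl : ∀ S ∈ l, IsClopen S) :
    ∃ g : X ≃ₜ X, MeasurePreserving g μ μ ∧ (∀ S ∈ l, g ⁻¹' S = S) ∧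
      ∀ x ∈ P, g x ∈ ⋃ n, F n := by
  obtain ⟨p, hp, hfin, hsat⟩ := exists_label l hl
  have hnull : μ (⋃ n, F n)ᶜ = 0 := by
    rw [measure_compl (MeasurableSet.iUnion fun n => (hF n).measurableSet) (by finiteness),
      hfull, tsub_self]
  -- finitely many of the `F n` have enough room for `P` in every cell
  have hroom : ∀ k ∈ range p, ∀ᶠ m in Filter.atTop,
      Room μ P (accumulate F m) (p ⁻¹' {k}) (p ⁻¹' {k}) := by
    rintro k ⟨x, rfl⟩
    set U := p ⁻¹' {p x} with hU
    have hUc : IsClopen U := hp _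
    have h1 : μ (P ∩ U) < μ U := by
      have h2 : 0 < μ (U \ P) := by
        refine hpos _ (hUc.isOpen.sdiff hP) ?_
        by_contra hne
        have : U ⊆ interior P :=
          interior_maximal (sdiff_eq_empty.1 (not_nonempty_iff_eq_empty.1 hne)) hUc.isOpen
        rw [hPi] at this
        exact this (show x ∈ U from rfl)
      rw [← measure_inter_add_sdiff U hP.measurableSet, inter_comm P U]
      exact ENNReal.lt_add_right (by finiteness) h2.ne'
    have h3 : Filter.Tendsto (fun m => μ (accumulate F m ∩ U)) Filter.atTop (nhds (μ U)) := by
      have h4 : μ (⋃ m, accumulate F m ∩ U) = μ U := by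
        rw [← iUnion_inter, iUnion_accumulate, inter_comm]
        exact measure_inter_conull hnull
      rw [← h4]
      exact tendsto_measure_iUnion_atTop fun i j hij =>
        inter_subset_inter_left _ (monotone_accumulate hij)
    filter_upwards [h3.eventually_const_lt h1] with m hm
    exact Or.inr ((ENNReal.toReal_lt_toReal (by finiteness) (by finiteness)).2 hm)
  obtain ⟨m, hm⟩ := ((Filter.eventually_all_finite hfin).2 hroom).exists
  have hE : IsClosed (accumulate F m) := by
    rw [accumulate_def]
    exact (finite_le_nat m).isClosed_biUnion fun i _ => hF i
  have hM : Matched μ P (accumulate F m) p p := by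
    intro k
    refine ⟨hp k, hp k, rfl, ?_⟩
    by_cases hk : k ∈ range p
    · exact hm k hk
    · refine Or.inl ?_
      rw [preimage_singleton_eq_empty.2 hk, inter_empty]
  obtain ⟨g, hg, hgp, hgP⟩ := hM.exists_homeo hsc hcont hpos hP hPi hE
  refine ⟨g, hg, fun S hS => ?_, fun x hx => accumulate_subset_iUnion m (hgP x hx)⟩
  obtain ⟨G, rfl⟩ := hsat S hS
  ext x
  simp [hgp]

/-! ### Gluing homeomorphisms along a clopen partition of an open set -/

/-- If `G n` leaves invariant `R n` and the first `n` of the sets `c k`, the result of applying the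
`G n` on the disjoint sets `R n` and the identity elsewhere pulls back each `c k` to a clopen
set. -/
theorem exists_glue_preimage {c R : ℕ → Set X} (hc : ∀ n, IsClopen (c n))
    (hR : ∀ n, IsClopen (R n)) (hd : Pairwise (Function.onFun Disjoint R)) {L : Set X}
    (hRL : ∀ n, Disjoint (R n) L) (G : ℕ → X → X) (hG : ∀ n, Continuous (G n))
    (hGc : ∀ n k, k ≤ n → G n ⁻¹' c k = c k) (k : ℕ) :
    ∃ S, IsClopen S ∧ (∀ n, G n ⁻¹' c k ∩ R n = S ∩ R n) ∧ S ∩ L = c k ∩ L := by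
  have hfin : (Iio k).Finite := finite_Iio k
  refine ⟨(⋃ n ∈ Iio k, G n ⁻¹' c k ∩ R n) ∪ (c k \ ⋃ n ∈ Iio k, R n), ?_, fun n => ?_, ?_⟩
  · exact (hfin.isClopen_biUnion fun n _ => ((hc k).preimage (hG n)).inter (hR n)).union
      ((hc k).diff (hfin.isClopen_biUnion fun n _ => hR n))
  · have huniq : ∀ x ∈ R n, ∀ i, x ∈ R i → i = n := by
      intro x hx i hi
      by_contra hne
      exact disjoint_left.1 (hd hne) hi hx
    ext x
    simp only [mem_inter_iff, mem_union, mem_iUnion, mem_sdiff, mem_Iio, exists_prop, not_exists,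
      not_and, and_congr_left_iff]
    intro hx
    constructor
    · intro hxc
      by_cases hn : n < k
      · exact Or.inl ⟨n, hn, hxc, hx⟩
      · refine Or.inr ⟨by rwa [hGc n k (not_lt.1 hn)] at hxc, fun i hi hxi => ?_⟩
        exact hn (huniq x hx i hxi ▸ hi)
    · rintro (⟨i, -, hi, hxi⟩ | ⟨hxc, hno⟩)
      · exact huniq x hx i hxi ▸ hi
      · have hn : ¬ n < k := fun hn => hno n hn hx
        rwa [hGc n k (not_lt.1 hn)]
  · ext x
    simp only [mem_inter_iff, mem_union, mem_iUnion, mem_sdiff, mem_Iio, exists_prop, not_exists,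
      not_and, and_congr_left_iff]
    intro hx
    have hno : ∀ i, x ∉ R i := fun i hi => disjoint_left.1 (hRL i) hi hx
    simp [hno]

/-- The homeomorphism of `exists_homeo_into` may be chosen to be the identity on a closed set `L`,
if only the part of `P` outside `L` is to be moved. -/
theorem exists_homeo_fixing (hsc : SubsetCond μ) (hcont : ∀ x : X, μ {x} = 0)
    (hpos : ∀ U : Set X, IsOpen U → U.Nonempty → 0 < μ U)
    {L P : Set X} (hL : IsClosed L) (hP : IsClosed P) (hPi : interior P = ∅)
    {F : ℕ → Set X} (hF : ∀ n, IsClosed (F n)) (hfull : μ (⋃ n, F n) = μ univ)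
    (l : List (Set X)) (hl : ∀ S ∈ l, IsClopen S) :
    ∃ g : X ≃ₜ X, MeasurePreserving g μ μ ∧ (∀ x ∈ L, g x = x) ∧ (∀ S ∈ l, g ⁻¹' S = S) ∧
      ∀ x ∈ P, x ∉ L → g x ∈ ⋃ n, F n := by
  classical
  obtain ⟨c, hc, hcs⟩ := exists_clopen_enum X
  let D : ℕ → Set X := fun n => if c n ⊆ Lᶜ then c n else ∅
  have hDc : ∀ n, IsClopen (D n) := by
    intro n
    dsimp only [D]
    split_ifs
    exacts [hc n, isClopen_empty]
  have hDL : ∀ n, D n ⊆ Lᶜ := by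
    intro n
    dsimp only [D]
    split_ifs with h
    exacts [h, empty_subset _]
  have hDU : ⋃ n, D n = Lᶜ := by
    refine subset_antisymm (iUnion_subset hDL) fun x hx => ?_
    obtain ⟨T, hT, hxT, hTL⟩ := isTopologicalBasis_isClopen.exists_subset_of_mem_open hx
      hL.isOpen_compl
    obtain ⟨n, rfl⟩ := hcs T hT
    exact mem_iUnion.2 ⟨n, by simp only [D, if_pos hTL]; exact hxT⟩
  let R : ℕ → Set X := disjointed D
  have hR : ∀ n, IsClopen (R n) := fun n =>
    disjointedRec (p := IsClopen) (fun t i ht => ht.diff (hDc i)) (hDc n)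
  have hRU : ⋃ n, R n = Lᶜ := by rw [← hDU]; exact iUnion_disjointed
  have hd : Pairwise (Function.onFun Disjoint R) := disjoint_disjointed D
  have hRL : ∀ n, Disjoint (R n) L := fun n =>
    disjoint_left.2 fun x hx hxL => (hRU ▸ mem_iUnion.2 ⟨n, hx⟩ : x ∈ Lᶜ) hxL
  choose G hGm hGl hGP using fun n => exists_homeo_into hsc hcont hpos hP hPi hF hfull
    (R n :: (l ++ (List.range (n + 1)).map c)) (by
      intro S hS
      simp only [List.mem_cons, List.mem_append, List.mem_map] at hS
      rcases hS with rfl | hS | ⟨i, -, rfl⟩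
      exacts [hR n, hl S hS, hc i])
  have hGR : ∀ n x, G n x ∈ R n ↔ x ∈ R n := fun n x =>
    Set.ext_iff.1 (hGl n (R n) (by simp)) x
  have hGc : ∀ n k, k ≤ n → G n ⁻¹' c k = c k := fun n k hk =>
    hGl n (c k) (by
      simp only [List.mem_cons, List.mem_append, List.mem_map, List.mem_range]
      exact Or.inr (Or.inr ⟨k, by omega, rfl⟩))
  have hGc' : ∀ n k, k ≤ n → (G n).symm ⁻¹' c k = c k := fun n k hk => by
    conv_lhs => rw [← hGc n k hk]
    ext x; simp
  let Q : Set X → Set X → Prop := fun S T => IsClopen S ∧ IsClopen T ∧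
    (∀ n, ∀ x ∈ R n, G n x ∈ T ↔ x ∈ S) ∧ ∀ x ∈ L, x ∈ T ↔ x ∈ S
  have hsum : ∀ S, IsClopen S → μ S = μ (S ∩ L) + ∑' n, μ (S ∩ R n) := by
    intro S hS
    rw [← measure_inter_add_sdiff S hL.measurableSet, sdiff_eq, ← hRU, inter_iUnion,
      measure_iUnion]
    · exact fun i j hij => (hd hij).mono inter_subset_right inter_subset_right
    · exact fun n => (hS.inter (hR n)).isOpen.measurableSet
  have hQT : ∀ T, IsClopen T → ∃ S, Q S T := by
    intro T hT
    obtain ⟨k, rfl⟩ := hcs T hT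
    obtain ⟨S, hS, h1, h2⟩ := exists_glue_preimage hc hR hd hRL (fun n => G n)
      (fun n => (G n).continuous) hGc k
    refine ⟨S, hS, hc k, fun n x hx => ?_, fun x hx => ?_⟩
    · have := Set.ext_iff.1 (h1 n) x
      simpa [hx] using this
    · have := Set.ext_iff.1 h2 x
      simpa [hx, Iff.comm] using this
  obtain ⟨g, hgm, hg⟩ := exists_homeo_of_rel hpos Q
    (fun S T h => ⟨h.1, h.2.1⟩)
    (fun S T S' T' h h' => ⟨h.1.inter h'.1, h.2.1.inter h'.2.1,
      fun n x hx => and_congr (h.2.2.1 n x hx) (h'.2.2.1 n x hx),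
      fun x hx => and_congr (h.2.2.2 x hx) (h'.2.2.2 x hx)⟩)
    (fun S T h => ⟨h.1.compl, h.2.1.compl, fun n x hx => not_congr (h.2.2.1 n x hx),
      fun x hx => not_congr (h.2.2.2 x hx)⟩)
    (fun S T h => by
      rw [hsum S h.1, hsum T h.2.1]
      congr 1
      · congr 1
        ext x
        exact and_congr_left fun hx => (h.2.2.2 x hx).symm
      · congr 1
        ext n
        rw [← (hGm n).measure_preimage (h.2.1.inter (hR n)).isOpen.measurableSet.nullMeasurableSet]
        congr 1
        ext x
        simp only [mem_inter_iff, mem_preimage, hGR]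
        exact and_congr_left fun hx => (h.2.2.1 n x hx).symm)
    (fun S hS => by
      obtain ⟨k, rfl⟩ := hcs S hS
      obtain ⟨T, hT, h1, h2⟩ := exists_glue_preimage hc hR hd hRL (fun n => (G n).symm)
        (fun n => (G n).symm.continuous) hGc' k
      refine ⟨T, hc k, hT, fun n x hx => ?_, fun x hx => ?_⟩
      · have := Set.ext_iff.1 (h1 n) (G n x)
        simpa [hGR, hx, Iff.comm] using this
      · simpa [hx] using Set.ext_iff.1 h2 x)
    hQT
  have hgT : ∀ T, IsClopen T → ∃ S, Q S T ∧ g ⁻¹' T = S := fun T hT => by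
    obtain ⟨S, hQ⟩ := hQT T hT
    exact ⟨S, hQ, hg S T hQ⟩
  have hgL : ∀ x ∈ L, g x = x := by
    intro x hx
    refine (eq_of_clopen fun T hT hxT => ?_).symm
    obtain ⟨S, hQ, hS⟩ := hgT T hT
    have : x ∈ g ⁻¹' T := hS ▸ (hQ.2.2.2 x hx).1 hxT
    exact this
  have hgR : ∀ n, ∀ x ∈ R n, g x = G n x := by
    intro n x hx
    refine (eq_of_clopen fun T hT hxT => ?_).symm
    obtain ⟨S, hQ, hS⟩ := hgT T hT
    have : x ∈ g ⁻¹' T := hS ▸ (hQ.2.2.1 n x hx).1 hxT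
    exact this
  have hcover : ∀ x, x ∉ L → ∃ n, x ∈ R n := fun x hx => by
    have : x ∈ ⋃ n, R n := hRU ▸ hx
    exact mem_iUnion.1 this
  refine ⟨g, hgm, hgL, fun S hS => ?_, fun x hx hxL => ?_⟩
  · ext x
    by_cases hx : x ∈ L
    · simp [hgL x hx]
    · obtain ⟨n, hn⟩ := hcover x hx
      rw [mem_preimage, hgR n x hn]
      exact Set.ext_iff.1 (hGl n S (by simp [hS])) x
  · obtain ⟨n, hn⟩ := hcover x hxL
    rw [hgR n x hn]
    exact hGP n x hx

/-! ### The back-and-forth between `A` and `B` -/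

theorem MeasurePreserving.homeo_symm {h : X ≃ₜ X} (hm : MeasurePreserving h μ μ) :
    MeasurePreserving h.symm μ μ :=
  MeasurePreserving.symm h.toMeasurableEquiv hm

theorem measure_homeo_image {h : X ≃ₜ X} (hm : MeasurePreserving h μ μ) {S : Set X}
    (hS : MeasurableSet S) : μ (h '' S) = μ S := by
  rw [h.image_eq_preimage_symm]
  exact (MeasurePreserving.homeo_symm hm).measure_preimage hS.nullMeasurableSet

/-- An approximation `h` to the final homeomorphism, with a closed set `L` of target points whose
preimage under the final homeomorphism is already decided, consistently with `h '' A = B`. -/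
structure Stage (μ : Measure X) (A B : Set X) where
  h : X ≃ₜ X
  L : Set X
  mp : MeasurePreserving h μ μ
  closed : IsClosed L
  sub_image : L ⊆ h '' A
  sub_target : L ⊆ B

/-- One back-and-forth step: closed nowhere dense pieces of `A` and of `B` are absorbed, without
moving decided points and without changing the preimages of finitely many clopen sets. -/
theorem Stage.step (hsc : SubsetCond μ) (hcont : ∀ x : X, μ {x} = 0)
    (hpos : ∀ U : Set X, IsOpen U → U.Nonempty → 0 < μ U)
    {A B : Set X} {F F' : ℕ → Set X} (hF : ∀ n, IsClosed (F n)) (hF' : ∀ n, IsClosed (F' n))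
    (hA : A = ⋃ n, F n) (hB : B = ⋃ n, F' n) (hFi : ∀ n, interior (F n) = ∅)
    (hFi' : ∀ n, interior (F' n) = ∅) (hAfull : μ A = μ univ) (hBfull : μ B = μ univ)
    (s : Stage μ A B) (n : ℕ) (l : List (Set X)) (hl : ∀ S ∈ l, IsClopen S) :
    ∃ s' : Stage μ A B, s.L ⊆ s'.L ∧ (∀ x, s.h x ∈ s.L → s'.h x = s.h x) ∧
      (∀ S ∈ l, s'.h ⁻¹' S = s.h ⁻¹' S) ∧ (∀ x ∈ F n, s'.h x ∈ s'.L) ∧ F' n ⊆ s'.L := by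
  obtain ⟨g, hgm, hgL, hgl, hgP⟩ := exists_homeo_fixing hsc hcont hpos s.closed
    (P := s.h '' F n) (s.h.isClosed_image.2 (hF n))
    (by rw [← s.h.image_interior, hFi, image_empty]) hF' (hB ▸ hBfull) l hl
  let h₁ : X ≃ₜ X := s.h.trans g
  have hh₁ : MeasurePreserving h₁ μ μ := hgm.comp s.mp
  let L₁ : Set X := s.L ∪ h₁ '' F n
  have hL₁ : IsClosed L₁ := s.closed.union (h₁.isClosed_image.2 (hF n))
  have hAm : MeasurableSet A := hA ▸ MeasurableSet.iUnion fun n => (hF n).measurableSet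
  obtain ⟨k, hkm, hkL, hkl, hkP⟩ := exists_homeo_fixing hsc hcont hpos hL₁ (hF' n) (hFi' n)
    (F := fun i => h₁ '' F i) (fun i => h₁.isClosed_image.2 (hF i))
    (by rw [← image_iUnion, ← hA, measure_homeo_image hh₁ hAm, hAfull]) l hl
  have hkL' : ∀ y ∈ L₁, k.symm y = y := fun y hy => by
    rw [Homeomorph.symm_apply_eq, hkL y hy]
  have hL₁A : L₁ ⊆ (h₁.trans k.symm) '' A := by
    rintro y (hy | ⟨a, ha, rfl⟩)
    · obtain ⟨a, ha, rfl⟩ := s.sub_image hy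
      exact ⟨a, ha, by simpa [h₁, hgL _ hy] using hkL' _ (Or.inl hy)⟩
    · exact ⟨a, hA ▸ mem_iUnion.2 ⟨n, ha⟩, hkL' _ (Or.inr ⟨a, ha, rfl⟩)⟩
  refine ⟨⟨h₁.trans k.symm, L₁ ∪ F' n, (MeasurePreserving.homeo_symm hkm).comp hh₁,
    hL₁.union (hF' n), union_subset hL₁A ?_, ?_⟩, ?_, ?_, ?_, ?_, ?_⟩
  · intro y hy
    by_cases hyL : y ∈ L₁
    · exact hL₁A hyL
    · have := hkP y hy hyL
      rw [← image_iUnion, ← hA] at this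
      obtain ⟨a, ha, hay⟩ := this
      exact ⟨a, ha, by rw [Homeomorph.trans_apply, hay, Homeomorph.symm_apply_apply]⟩
  · rintro y ((hy | ⟨a, ha, rfl⟩) | hy)
    · exact s.sub_target hy
    · by_cases haL : s.h a ∈ s.L
      · change g (s.h a) ∈ B
        rw [hgL _ haL]
        exact s.sub_target haL
      · exact hB ▸ hgP _ ⟨a, ha, rfl⟩ haL
    · exact hB ▸ mem_iUnion.2 ⟨n, hy⟩
  · exact fun y hy => Or.inl (Or.inl hy)
  · intro x hx
    change k.symm (g (s.h x)) = s.h x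
    rw [hgL _ hx, hkL' _ (Or.inl hx)]
  · intro S hS
    ext x
    have h1 := Set.ext_iff.1 (hkl S hS) (k.symm (g (s.h x)))
    have h2 := Set.ext_iff.1 (hgl S hS) (s.h x)
    simp only [mem_preimage, Homeomorph.apply_symm_apply] at h1 h2
    exact h1.symm.trans h2
  · intro x hx
    have : h₁ x ∈ L₁ := Or.inr ⟨x, hx, rfl⟩
    change k.symm (h₁ x) ∈ L₁ ∪ F' n
    rw [hkL' _ this]
    exact Or.inl this
  · exact subset_union_right

theorem interior_eq_empty_of_isMeagre {A : Set X} (hA : IsMeagre A) {F : Set X} (hF : F ⊆ A) :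
    interior F = ∅ := by
  by_contra h
  exact not_isMeagre_of_isOpen isOpen_interior (nonempty_iff_ne_empty.2 h)
    (hA.mono (interior_subset.trans hF))

end Helpers

/-- Any two meager Fσ-sets of full measure are equivalent under a
measure-preserving homeomorphism. -/
theorem stmt8 {X : Type*} [TopologicalSpace X] [CompactSpace X] [T2Space X]
    [TopologicalSpace.MetrizableSpace X] [TotallyDisconnectedSpace X]
    [MeasurableSpace X] [BorelSpace X]
    (μ : MeasureTheory.Measure X) [MeasureTheory.IsFiniteMeasure μ]
    (hperf : ∀ x : X, ¬ IsOpen ({x} : Set X))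
    (hcont : ∀ x : X, μ {x} = 0)
    (hpos : ∀ U : Set X, IsOpen U → U.Nonempty → 0 < μ U)
    (hsc : ∀ U V : Set X, IsClopen U → IsClopen V → μ U < μ V →
      ∃ W, W ⊆ V ∧ IsClopen W ∧ μ W = μ U)
    (A B : Set X) (hAm : IsMeagre A) (hBm : IsMeagre B)
    (hAF : ∃ F : ℕ → Set X, (∀ n, IsClosed (F n)) ∧ A = ⋃ n, F n)
    (hBF : ∃ F : ℕ → Set X, (∀ n, IsClosed (F n)) ∧ B = ⋃ n, F n)
    (hAfull : μ A = μ Set.univ) (hBfull : μ B = μ Set.univ) :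
    ∃ h : X ≃ₜ X, (∀ S : Set X, MeasurableSet S → μ (h '' S) = μ S) ∧
      h '' A = B := by
  have hsc' := subsetCond_of_lt hsc
  obtain ⟨F, hF, hA⟩ := hAF
  obtain ⟨F', hF', hB⟩ := hBF
  obtain ⟨c, hc, hcs⟩ := exists_clopen_enum X
  have hstep : ∀ (n : ℕ) (s : Stage μ A B), ∃ s' : Stage μ A B, s.L ⊆ s'.L ∧
      (∀ x, s.h x ∈ s.L → s'.h x = s.h x) ∧
      (∀ i ≤ n, s'.h ⁻¹' c i = s.h ⁻¹' c i ∧ s'.h ⁻¹' (s.h '' c i) = c i) ∧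
      (∀ x ∈ F n, s'.h x ∈ s'.L) ∧ F' n ⊆ s'.L := by
    intro n s
    obtain ⟨s', h1, h2, h3, h4, h5⟩ := s.step hsc' hcont hpos hF hF' hA hB
      (fun n => interior_eq_empty_of_isMeagre hAm (hA ▸ subset_iUnion F n))
      (fun n => interior_eq_empty_of_isMeagre hBm (hB ▸ subset_iUnion F' n)) hAfull hBfull n
      ((List.range (n + 1)).map c ++ (List.range (n + 1)).map fun i => s.h '' c i) (by
        intro S hS
        simp only [List.mem_append, List.mem_map] at hS
        rcases hS with ⟨i, -, rfl⟩ | ⟨i, -, rfl⟩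
        · exact hc i
        · exact ⟨s.h.isClosed_image.2 (hc i).1, s.h.isOpen_image.2 (hc i).2⟩)
    refine ⟨s', h1, h2, fun i hi => ⟨h3 _ ?_, ?_⟩, h4, h5⟩
    · exact List.mem_append_left _ (List.mem_map.2 ⟨i, by simp; omega, rfl⟩)
    · rw [h3 _ (List.mem_append_right _ (List.mem_map.2 ⟨i, by simp; omega, rfl⟩)),
        s.h.preimage_image]
  choose f hf1 hf2 hf3 hf4 hf5 using hstep
  let s₀ : Stage μ A B := ⟨Homeomorph.refl X, ∅, MeasurePreserving.id μ, isClosed_empty,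
    empty_subset _, empty_subset _⟩
  let s : ℕ → Stage μ A B := fun n => Nat.rec s₀ (fun n t => f n t) n
  have hs : ∀ n, s (n + 1) = f n (s n) := fun n => rfl
  have hL : Monotone fun n => (s n).L := monotone_nat_of_le_succ fun n => hf1 n (s n)
  -- the approximations stabilise on every clopen set, in both directions
  have hpre : ∀ i n, i ≤ n → (s n).h ⁻¹' c i = (s i).h ⁻¹' c i := by
    intro i n hin
    induction n, hin using Nat.le_induction with
    | base => rfl
    | succ n hin ih => rw [← ih]; exact (hf3 n (s n) i hin).1
  have himg : ∀ i n, i ≤ n → (s n).h ⁻¹' ((s i).h '' c i) = c i := by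
    intro i n hin
    suffices (s n).h '' c i = (s i).h '' c i by rw [← this, (s n).h.preimage_image]
    induction n, hin using Nat.le_induction with
    | base => rfl
    | succ n hin ih =>
      rw [← ih, ← (s (n + 1)).h.image_preimage ((s n).h '' c i)]
      congr 1
      exact (hf3 n (s n) i hin).2.symm
  have hfix : ∀ m x, (s m).h x ∈ (s m).L → ∀ n, m ≤ n → (s n).h x = (s m).h x := by
    intro m x hx n hmn
    induction n, hmn using Nat.le_induction with
    | base => rfl
    | succ n hmn ih =>
      rw [← ih]
      exact hf2 n (s n) x (ih ▸ hL hmn hx)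
  obtain ⟨h, hm, hh⟩ := exists_homeo_of_rel hpos
    (fun S T => (IsClopen S ∧ IsClopen T) ∧ ∀ᶠ n in Filter.atTop, (s n).h ⁻¹' T = S)
    (fun S T h => h.1)
    (fun S T S' T' h h' => ⟨⟨h.1.1.inter h'.1.1, h.1.2.inter h'.1.2⟩, by
      filter_upwards [h.2, h'.2] with n hn hn'
      rw [preimage_inter, hn, hn']⟩)
    (fun S T h => ⟨⟨h.1.1.compl, h.1.2.compl⟩, by
      filter_upwards [h.2] with n hn
      rw [preimage_compl, hn]⟩)
    (fun S T h => by
      obtain ⟨n, rfl⟩ := h.2.exists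
      exact (s n).mp.measure_preimage h.1.2.isOpen.measurableSet.nullMeasurableSet)
    (fun S hS => by
      obtain ⟨i, rfl⟩ := hcs S hS
      exact ⟨(s i).h '' c i,
        ⟨hc i, (s i).h.isClosed_image.2 (hc i).1, (s i).h.isOpen_image.2 (hc i).2⟩,
        Filter.eventually_atTop.2 ⟨i, himg i⟩⟩)
    (fun T hT => by
      obtain ⟨i, rfl⟩ := hcs T hT
      exact ⟨(s i).h ⁻¹' c i, ⟨(hc i).preimage (s i).h.continuous, hc i⟩,
        Filter.eventually_atTop.2 ⟨i, hpre i⟩⟩)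
  have hlim : ∀ m x, (s m).h x ∈ (s m).L → h x = (s m).h x := by
    intro m x hx
    refine (eq_of_clopen fun T hT hxT => ?_).symm
    obtain ⟨i, rfl⟩ := hcs T hT
    have e := hh ((s i).h ⁻¹' c i) (c i) ⟨⟨(hc i).preimage (s i).h.continuous, hc i⟩,
      Filter.eventually_atTop.2 ⟨i, hpre i⟩⟩
    rw [← mem_preimage, e, ← hpre i (max i m) (le_max_left _ _), mem_preimage,
      hfix m x hx _ (le_max_right _ _)]
    exact hxT
  refine ⟨h, fun S hS => measure_homeo_image hm hS, subset_antisymm ?_ fun y hy => ?_⟩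
  · rintro _ ⟨x, hx, rfl⟩
    rw [hA] at hx
    obtain ⟨n, hn⟩ := mem_iUnion.1 hx
    have h1 : (s (n + 1)).h x ∈ (s (n + 1)).L := hf4 n (s n) x hn
    rw [hlim (n + 1) x h1]
    exact (s (n + 1)).sub_target h1
  · rw [hB] at hy
    obtain ⟨n, hn⟩ := mem_iUnion.1 hy
    have h1 : y ∈ (s (n + 1)).L := hf5 n (s n) hn
    obtain ⟨a, ha, rfl⟩ := (s (n + 1)).sub_image h1
    exact ⟨a, ha, hlim (n + 1) a h1⟩
end

section
/- Let (X,μ) be a good Cantor measure space and I an invariant ideal on X with analytic base. If I is not contained in the ideal of countable sets, then I contains every closed μ-null subset of X. -/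
/-!
Every homeomorphism between closed null sets of a good Cantor measure space extends to a
measure-preserving homeomorphism of the whole space (`IsNullGraph.exists_homeomorph`). This is a
back-and-forth construction of finer and finer matched clopen partitions on the two sides. The step
is possible because a null set takes up no measure: small clopen neighbourhoods of the two closed
null sets to be separated are chosen first, and the Subset Condition then provides a clopen set of
exactly the required measure in the remainder (`exists_isClopen_separating`). The limit is a
homeomorphism because a nonempty cell has positive measure, hence so does its partner.

An uncountable member of the ideal is contained in an uncountable analytic member `B`. By the perfect
set theorem for analytic sets (`AnalyticSet.exists_nat_bool_injection`) `B` contains a Cantor set,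
and that Cantor set contains a null one (`exists_null_nat_bool_injection`). A closed null set `E`
embeds in this null Cantor set, and extending the embedding to a measure-preserving homeomorphism `h`
shows that `E` is contained in the preimage of `B` under `h`, which lies in the ideal.
-/

open MeasureTheory Set

/-! ### Perfect sets in analytic sets -/

/-- If `f` takes uncountably many values on a closed set `C`, then `C` has two small closed subsets
on which `f` still takes uncountably many values and whose images are disjoint: all but countably
many values are attained at points near which `f` takes uncountably many values. -/
lemma exists_split_of_uncountable_image {α X : Type*} [MetricSpace α]
    [SecondCountableTopology α] [TopologicalSpace X] [T2Space X] {f : α → X} (hf : Continuous f)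
    {C : Set α} (hC : IsClosed C) (hunc : ¬ (f '' C).Countable) {ε : ENNReal} (hε : 0 < ε) :
    ∃ C₀ C₁ : Set α,
      (IsClosed C₀ ∧ ¬ (f '' C₀).Countable ∧ C₀ ⊆ C ∧ Metric.ediam C₀ ≤ ε) ∧
      (IsClosed C₁ ∧ ¬ (f '' C₁).Countable ∧ C₁ ⊆ C ∧ Metric.ediam C₁ ≤ ε) ∧
      Disjoint (f '' C₀) (f '' C₁) := by
  obtain ⟨B, hBc, -, hB⟩ := TopologicalSpace.exists_countable_basis α
  -- `N` is the part of `C` covered by the basic open sets with countable image.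
  let N : Set α := ⋃ b ∈ {b ∈ B | (f '' (b ∩ C)).Countable}, b ∩ C
  have hN : (f '' N).Countable := by
    simp only [N, image_iUnion]
    exact (hBc.mono (sep_subset _ _)).biUnion fun b hb => hb.2
  have hcond : ∀ x ∈ C \ N, ∀ O : Set α, IsOpen O → x ∈ O → ¬ (f '' (O ∩ C)).Countable := by
    rintro x ⟨hxC, hxN⟩ O hO hxO hc
    obtain ⟨b, hb, hxb, hbO⟩ := hB.exists_subset_of_mem_open hxO hO
    refine hxN (mem_biUnion (x := b) ⟨hb, hc.mono ?_⟩ ⟨hxb, hxC⟩)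
    exact image_mono (inter_subset_inter_left _ hbO)
  have hM : ¬ (f '' (C \ N)).Countable := fun h => hunc <| (h.union hN).mono <| by
    rw [← image_union]
    exact image_mono (by rw [sdiff_union_self]; exact subset_union_left)
  have hnt : (f '' (C \ N)).Nontrivial := by
    by_contra h
    exact hM (not_nontrivial_iff.1 h).countable
  obtain ⟨_, ⟨x, hx, rfl⟩, _, ⟨y, hy, rfl⟩, hxy⟩ := hnt
  obtain ⟨O, O', hO, hO', hxO, hyO, hd⟩ := t2_separation hxy
  have key : ∀ z ∈ C \ N, ∀ W : Set X, IsOpen W → f z ∈ W → ∃ D : Set α,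
      (IsClosed D ∧ ¬ (f '' D).Countable ∧ D ⊆ C ∧ Metric.ediam D ≤ ε) ∧ f '' D ⊆ W := by
    intro z hz W hW hzW
    obtain ⟨r, hr, hrW⟩ := Metric.nhds_basis_closedEBall.mem_iff.1 ((hW.preimage hf).mem_nhds hzW)
    have hs : 0 < min r (ε / 2) := lt_min hr (ENNReal.div_pos hε.ne' (by simp))
    refine ⟨Metric.closedEBall z (min r (ε / 2)) ∩ C,
      ⟨Metric.isClosed_closedEBall.inter hC, fun h => ?_, inter_subset_right, ?_⟩, ?_⟩
    · refine hcond z hz _ Metric.isOpen_eball (Metric.mem_eball_self hs) (h.mono ?_)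
      exact image_mono (inter_subset_inter_left _ Metric.eball_subset_closedEBall)
    · refine (Metric.ediam_mono inter_subset_left).trans (Metric.ediam_closedEBall_le.trans ?_)
      calc 2 * min r (ε / 2) ≤ 2 * (ε / 2) := by gcongr; exact min_le_right _ _
        _ = ε := ENNReal.mul_div_cancel (by simp) (by simp)
    · rintro _ ⟨w, hw, rfl⟩
      exact hrW (Metric.closedEBall_subset_closedEBall (min_le_left _ _) hw.1)
  obtain ⟨C₀, h₀, h₀'⟩ := key x hx O hO hxO
  obtain ⟨C₁, h₁, h₁'⟩ := key y hy O' hO' hyO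
  exact ⟨C₀, C₁, h₀, h₁, hd.mono h₀' h₁'⟩

open CantorScheme PiNat Filter in
/-- The perfect set theorem for analytic sets. -/
lemma AnalyticSet.exists_nat_bool_injection {X : Type*} [TopologicalSpace X] [T2Space X]
    {B : Set X} (hB : AnalyticSet B) (hunc : ¬ B.Countable) :
    ∃ g : (ℕ → Bool) → X, Continuous g ∧ Function.Injective g ∧ range g ⊆ B := by
  rw [AnalyticSet] at hB
  rcases hB with rfl | ⟨f, hf, rfl⟩
  · exact absurd countable_empty hunc
  let := TopologicalSpace.upgradeIsCompletelyMetrizable (ℕ → ℕ)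
  obtain ⟨u, -, upos', hu⟩ := exists_seq_strictAnti_tendsto' (zero_lt_one' ENNReal)
  have upos := fun n => (upos' n).1
  let P := Subtype fun C : Set (ℕ → ℕ) => IsClosed C ∧ ¬ (f '' C).Countable
  choose C0 C1 h0 h1 hdisj using
    fun {C : Set (ℕ → ℕ)} (hC : IsClosed C) (hunc : ¬ (f '' C).Countable) {ε : ENNReal}
      (hε : 0 < ε) => exists_split_of_uncountable_image hf hC hunc hε
  let DP : List Bool → P := fun l => by
    induction l with
    | nil => exact ⟨univ, isClosed_univ, by rwa [image_univ]⟩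
    | cons a l ih =>
      cases a
      · exact ⟨C0 ih.2.1 ih.2.2 (upos (l.length + 1)), (h0 _ _ _).1, (h0 _ _ _).2.1⟩
      · exact ⟨C1 ih.2.1 ih.2.2 (upos (l.length + 1)), (h1 _ _ _).1, (h1 _ _ _).2.1⟩
  let D : List Bool → Set (ℕ → ℕ) := fun l => (DP l).val
  have hanti : ClosureAntitone D := by
    refine Antitone.closureAntitone ?_ fun l => (DP l).property.1
    intro l a
    cases a
    · exact (h0 _ _ _).2.2.1
    · exact (h1 _ _ _).2.2.1
  have hdiam : VanishingDiam D := by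
    intro x
    apply tendsto_of_tendsto_of_tendsto_of_le_of_le' tendsto_const_nhds hu
    · simp
    rw [eventually_atTop]
    refine ⟨1, fun m (hm : 1 ≤ m) => ?_⟩
    obtain ⟨n, rfl⟩ := Nat.exists_eq_succ_of_ne_zero (Nat.one_le_iff_ne_zero.1 hm)
    dsimp
    cases x n
    · convert! (h0 _ _ _).2.2.2
      rw [PiNat.res_length]
    · convert! (h1 _ _ _).2.2.2
      rw [PiNat.res_length]
  have hdisj' : ∀ (l : List Bool) (a b : Bool), a ≠ b →
      Disjoint (f '' D (a :: l)) (f '' D (b :: l)) := by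
    rintro l (a | a) (b | b) hab <;> try contradiction
    · exact hdisj _ _ _
    · exact (hdisj _ _ _).symm
  have hne : ∀ l, (D l).Nonempty := fun l => by
    rw [nonempty_iff_ne_empty]
    intro h
    exact (DP l).2.2 (by change (f '' D l).Countable; simp [h])
  have hdom : ∀ {x : ℕ → Bool}, x ∈ (inducedMap D).1 := fun {x} => by
    rw [hanti.map_of_vanishingDiam hdiam hne]
    apply mem_univ
  refine ⟨fun x => f ((inducedMap D).2 ⟨x, hdom⟩), ?_, ?_, ?_⟩
  · exact hf.comp (hdiam.map_continuous.comp (by fun_prop))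
  · intro x y hxy
    apply res_injective
    ext n : 1
    induction n with
    | zero => simp
    | succ n ih =>
      simp only [res_succ, List.cons.injEq]
      refine ⟨?_, ih⟩
      by_contra hne
      refine disjoint_left.1 (hdisj' (res x n) _ _ hne) ⟨_, ?_, rfl⟩ ⟨_, ?_, hxy.symm⟩
      · rw [← res_succ]
        exact map_mem (A := D) ⟨x, hdom⟩ (n + 1)
      · rw [ih, ← res_succ]
        exact map_mem (A := D) ⟨y, hdom⟩ (n + 1)
  · rintro _ ⟨x, rfl⟩
    exact mem_range_self _

/-- A Cantor set contains uncountably many pairwise disjoint Cantor sets, so one of them is null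
for a given finite measure. -/
lemma exists_null_nat_bool_injection {X : Type*} [TopologicalSpace X] [T2Space X]
    [MeasurableSpace X] [BorelSpace X] (μ : Measure X) [IsFiniteMeasure μ]
    {g : (ℕ → Bool) → X} (hg : Continuous g) (hinj : Function.Injective g) :
    ∃ g' : (ℕ → Bool) → X, Continuous g' ∧ Function.Injective g' ∧ range g' ⊆ range g ∧
      μ (range g') = 0 := by
  let J : (ℕ → Bool) → (ℕ → Bool) → ℕ → Bool :=
    fun t s n => if n % 2 = 0 then t (n / 2) else s (n / 2)
  have hJc : ∀ t, Continuous (J t) := fun t => continuous_pi fun n => by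
    by_cases h : n % 2 = 0 <;> simp only [J, h, if_true, if_false] <;> fun_prop
  have hJt : ∀ t t' s s', J t s = J t' s' → t = t' := fun t t' s s' h => by
    funext n
    have := congrFun h (2 * n)
    simpa [J] using this
  have hJs : ∀ t s s', J t s = J t s' → s = s' := fun t s s' h => by
    funext n
    have := congrFun h (2 * n + 1)
    have h2 : (2 * n + 1) / 2 = n := by omega
    simpa [J, Nat.add_mod, h2] using this
  have hmeas : ∀ t, MeasurableSet (range fun s => g (J t s)) := fun t =>
    (isCompact_range (hg.comp (hJc t))).isClosed.measurableSet
  have hdisj : Pairwise (Function.onFun Disjoint fun t => range fun s => g (J t s)) := by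
    intro t t' htt'
    refine disjoint_left.2 ?_
    rintro _ ⟨s, rfl⟩ ⟨s', h⟩
    exact htt' (hJt _ _ _ _ (hinj h.symm))
  have hcount := Measure.countable_meas_pos_of_disjoint_iUnion (μ := μ) hmeas hdisj
  have : ∃ t, μ (range fun s => g (J t s)) = 0 := by
    by_contra! h
    have huniv : {t | 0 < μ (range fun s => g (J t s))} = univ :=
      eq_univ_of_forall fun t => pos_iff_ne_zero.2 (h t)
    have hu : Countable (ℕ → Bool) := countable_univ_iff.1 (huniv ▸ hcount)
    obtain ⟨φ, hφ⟩ := exists_injective_nat (ℕ → Bool)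
    classical
    refine Function.cantor_injective (fun S : Set ℕ => φ fun n => decide (n ∈ S)) ?_
    intro S T h
    ext n
    simpa using congrFun (hφ h) n
  obtain ⟨t, ht⟩ := this
  exact ⟨fun s => g (J t s), hg.comp (hJc t), fun s s' h => hJs _ _ _ (hinj h),
    range_comp_subset_range (J t) g, ht⟩

/-- A compact metrizable zero-dimensional space is separated by its countably many clopen sets, so
it embeds in the Cantor space. -/
lemma exists_injective_nat_bool (X : Type*) [TopologicalSpace X] [CompactSpace X]
    [T2Space X] [SecondCountableTopology X] [TotallyDisconnectedSpace X] :
    ∃ j : X → ℕ → Bool, Continuous j ∧ Function.Injective j := by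
  have : Countable (TopologicalSpace.Clopens X) :=
    TopologicalSpace.Clopens.countable_iff_secondCountable.2 inferInstance
  obtain ⟨A, hA⟩ := exists_surjective_nat (TopologicalSpace.Clopens X)
  classical
  refine ⟨fun x n => decide (x ∈ A n), continuous_pi fun n => ?_, fun x y h => ?_⟩
  · rw [continuous_discrete_rng]
    rintro (_ | _)
    · convert (A n).isClopen.compl.isOpen using 1; ext; simp
    · convert (A n).isClopen.isOpen using 1; ext; simp
  · by_contra hxy
    obtain ⟨U, hU, hxU, hyU⟩ := exists_isClopen_of_totally_separated hxy
    obtain ⟨n, hn⟩ := hA ⟨U, hU⟩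
    have := congrFun h n
    simp only [hn, decide_eq_decide] at this
    exact hyU (this.1 hxU)

/-! ### Clopen sets of prescribed measure -/

lemma exists_isClopen_measure_lt {X : Type*} [TopologicalSpace X] [CompactSpace X] [T2Space X]
    [TopologicalSpace.MetrizableSpace X] [TotallyDisconnectedSpace X]
    [MeasurableSpace X] [BorelSpace X] (μ : Measure X) [IsFiniteMeasure μ]
    {K O : Set X} (hK : IsClosed K) (hK0 : μ K = 0) (hO : IsOpen O) (hKO : K ⊆ O)
    {ε : ENNReal} (hε : 0 < ε) : ∃ V, IsClopen V ∧ K ⊆ V ∧ V ⊆ O ∧ μ V < ε := by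
  obtain ⟨O', hKO', hO', hlt⟩ := K.exists_isOpen_lt_of_lt (μ := μ) ε (by rwa [hK0])
  obtain ⟨V, hV, hKV, hVO⟩ := exists_clopen_of_closed_subset_open hK (hO.inter hO')
    (subset_inter hKO hKO')
  exact ⟨V, hV, hKV, hVO.trans inter_subset_left,
    (measure_mono (hVO.trans inter_subset_right)).trans_lt hlt⟩

lemma measure_add_sdiff_of_isClopen {X : Type*} [TopologicalSpace X] [MeasurableSpace X]
    [BorelSpace X] (μ : Measure X) {V Q : Set X} (hV : IsClopen V) (hVQ : V ⊆ Q) :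
    μ V + μ (Q \ V) = μ Q := by
  rw [← measure_inter_add_sdiff Q hV.isOpen.measurableSet, inter_eq_right.2 hVQ]

/-- If `μ A + μ B = μ Q`, then `Q` has a clopen part of measure `μ A` that contains one given closed
null subset of `Q` and avoids another. Small clopen neighbourhoods of the two null sets are set
aside, and the Subset Condition supplies the missing measure in the rest of `Q`. -/
lemma exists_isClopen_separating {X : Type*} [TopologicalSpace X] [CompactSpace X] [T2Space X]
    [TopologicalSpace.MetrizableSpace X] [TotallyDisconnectedSpace X]
    [MeasurableSpace X] [BorelSpace X] (μ : Measure X) [IsFiniteMeasure μ]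
    (hpos : ∀ U : Set X, IsOpen U → U.Nonempty → 0 < μ U)
    (hsc : ∀ U V : Set X, IsClopen U → IsClopen V → μ U < μ V →
      ∃ W, W ⊆ V ∧ IsClopen W ∧ μ W = μ U)
    {A B Q K₁ K₂ : Set X} (hA : IsClopen A) (hB : IsClopen B) (hQ : IsClopen Q)
    (hAB : μ A + μ B = μ Q) (hK₁ : IsClosed K₁) (hK₂ : IsClosed K₂) (hK₁0 : μ K₁ = 0)
    (hK₂0 : μ K₂ = 0) (hK₁Q : K₁ ⊆ Q) (hK₂Q : K₂ ⊆ Q) (hd : Disjoint K₁ K₂)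
    (hAK : A = ∅ → K₁ = ∅) (hBK : B = ∅ → K₂ = ∅) :
    ∃ V, IsClopen V ∧ V ⊆ Q ∧ K₁ ⊆ V ∧ Disjoint V K₂ ∧ μ V = μ A := by
  rcases A.eq_empty_or_nonempty with hA0 | hAne
  · exact ⟨∅, isClopen_empty, empty_subset _, (hAK hA0).subset, empty_disjoint _, by rw [hA0]⟩
  rcases B.eq_empty_or_nonempty with hB0 | hBne
  · refine ⟨Q, hQ, Subset.rfl, hK₁Q, by rw [hBK hB0]; exact disjoint_empty _, ?_⟩
    rw [← hAB, hB0, measure_empty, add_zero]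
  obtain ⟨V₁, hV₁, hKV₁, hV₁O, hV₁lt⟩ := exists_isClopen_measure_lt μ hK₁ hK₁0
    (hQ.isOpen.inter hK₂.isOpen_compl) (subset_inter hK₁Q (subset_compl_iff_disjoint_right.2 hd))
    (hpos A hA.isOpen hAne)
  obtain ⟨V₂, hV₂, hKV₂, hV₂O, hV₂lt⟩ := exists_isClopen_measure_lt μ hK₂ hK₂0
    (hQ.isOpen.inter hV₁.compl.isOpen)
    (subset_inter hK₂Q fun x hx hx' => (hV₁O hx').2 hx) (hpos B hB.isOpen hBne)
  -- The missing measure `μ A - μ V₁` is that of the clopen set `A \ W`.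
  obtain ⟨W, hWA, hW, hWm⟩ := hsc V₁ A hV₁ hA hV₁lt
  have hAW : μ (A \ W) + μ V₁ = μ A := by
    rw [← hWm, add_comm]
    exact measure_add_sdiff_of_isClopen μ hW hWA
  have hQ1 : μ ((Q \ V₁) \ V₂) + μ V₂ + μ V₁ = μ Q := by
    have h1 : μ ((Q \ V₁) \ V₂) + μ V₂ = μ (Q \ V₁) := by
      rw [add_comm]
      exact measure_add_sdiff_of_isClopen μ hV₂
        fun x hx => ⟨(hV₂O hx).1, (hV₂O hx).2⟩
    rw [h1, add_comm]
    exact measure_add_sdiff_of_isClopen μ hV₁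
      (hV₁O.trans inter_subset_left)
  have hlt : μ (A \ W) < μ ((Q \ V₁) \ V₂) := by
    have h2 : μ (A \ W) + μ B + μ V₁ = μ ((Q \ V₁) \ V₂) + μ V₂ + μ V₁ := by
      rw [hQ1, ← hAB, ← hAW]; ring
    have h3 := (ENNReal.add_left_inj (measure_ne_top μ V₁)).1 h2
    by_contra! h4
    have h5 : μ ((Q \ V₁) \ V₂) + μ V₂ < μ (A \ W) + μ B :=
      ENNReal.add_lt_add_of_le_of_lt (measure_ne_top _ _) h4 hV₂lt
    exact h5.ne' h3
  obtain ⟨Z, hZ, hZc, hZm⟩ := hsc _ _ (hA.diff hW) ((hQ.diff hV₁).diff hV₂) hlt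
  refine ⟨V₁ ∪ Z, hV₁.union hZc, ?_, hKV₁.trans subset_union_left, ?_, ?_⟩
  · exact union_subset (hV₁O.trans inter_subset_left) fun x hx => (hZ hx).1.1
  · refine disjoint_left.2 ?_
    rintro x (hx | hx) hx2
    · exact (hV₁O hx).2 hx2
    · exact (hZ hx).2 (hKV₂ hx2)
  · rw [measure_union (disjoint_left.2 fun x hx hx' => (hZ hx').1.2 hx) hZc.isOpen.measurableSet, hZm,
      add_comm, hAW]

/-! ### Back and forth -/

/-- A compact graph of a bijection between two null sets. A relation, unlike a map, makes the roles
of source and target interchangeable. -/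
structure IsNullGraph {X : Type*} [TopologicalSpace X] [MeasurableSpace X] (μ : Measure X)
    (R : Set (X × X)) : Prop where
  isCompact : IsCompact R
  eq_snd : ∀ x y y', (x, y) ∈ R → (x, y') ∈ R → y = y'
  eq_fst : ∀ x x' y, (x, y) ∈ R → (x', y) ∈ R → x = x'
  null_fst : μ (Prod.fst '' R) = 0
  null_snd : μ (Prod.snd '' R) = 0

/-- Two clopen partitions of `X`, given as the fibres of continuous labellings `p` and `q`, such
that cells with the same label have the same measure and correspond to each other under `R`. -/
structure IsMatched {X : Type*} [TopologicalSpace X] [MeasurableSpace X] (μ : Measure X)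
    (R : Set (X × X)) (p q : X → ℕ) : Prop where
  continuous_left : Continuous p
  continuous_right : Continuous q
  measure_eq : ∀ i, μ (p ⁻¹' {i}) = μ (q ⁻¹' {i})
  eq_of_mem : ∀ x y, (x, y) ∈ R → p x = q y

lemma IsNullGraph.swap {X : Type*} [TopologicalSpace X] [MeasurableSpace X] {μ : Measure X}
    {R : Set (X × X)} (hR : IsNullGraph μ R) : IsNullGraph μ (Prod.swap ⁻¹' R) where
  isCompact := by
    rw [← image_swap_eq_preimage_swap]
    exact hR.isCompact.image continuous_swap
  eq_snd x y y' h h' := hR.eq_fst _ _ _ h h'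
  eq_fst x x' y h h' := hR.eq_snd _ _ _ h h'
  null_fst := by
    rw [← image_swap_eq_preimage_swap, image_image]
    exact hR.null_snd
  null_snd := by
    rw [← image_swap_eq_preimage_swap, image_image]
    exact hR.null_fst

lemma IsMatched.swap {X : Type*} [TopologicalSpace X] [MeasurableSpace X] {μ : Measure X}
    {R : Set (X × X)} {p q : X → ℕ} (h : IsMatched μ R p q) :
    IsMatched μ (Prod.swap ⁻¹' R) q p :=
  ⟨h.2, h.1, fun i => (h.3 i).symm, fun x y hxy => (h.4 y x hxy).symm⟩

lemma IsMatched.measure_preimage {X : Type*} [TopologicalSpace X] [MeasurableSpace X]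
    [BorelSpace X] {μ : Measure X} {R : Set (X × X)} {p q : X → ℕ} (h : IsMatched μ R p q)
    (T : Set ℕ) : μ (p ⁻¹' T) = μ (q ⁻¹' T) := by
  have hp := h.1.measurable
  have hq := h.2.measurable
  have hmap : μ.map p = μ.map q := by
    refine Measure.ext_iff_singleton.2 fun i => ?_
    rw [Measure.map_apply hp (.singleton i), Measure.map_apply hq (.singleton i), h.3]
  rw [← Measure.map_apply hp (.of_discrete), ← Measure.map_apply hq (.of_discrete), hmap]

open Classical in
/-- The labelling refined by the set `U`: the last binary digit records membership in `U`. -/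
noncomputable def refineBy {X : Type*} (p : X → ℕ) (U : Set X) (x : X) : ℕ :=
  2 * p x + if x ∈ U then 1 else 0

lemma refineBy_div {X : Type*} (p : X → ℕ) (U : Set X) (x : X) : refineBy p U x / 2 = p x := by
  unfold refineBy
  split_ifs <;> omega

lemma refineBy_mod {X : Type*} (p : X → ℕ) (U : Set X) (x : X) :
    refineBy p U x % 2 = 1 ↔ x ∈ U := by
  unfold refineBy
  split_ifs with h <;> simp [h]

lemma preimage_refineBy_odd {X : Type*} (p : X → ℕ) (U : Set X) {m : ℕ} (hm : m % 2 = 1) :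
    refineBy p U ⁻¹' {m} = p ⁻¹' {m / 2} ∩ U := by
  ext x
  simp only [mem_preimage, mem_singleton_iff, mem_inter_iff, ← refineBy_mod p U, ← refineBy_div p U]
  omega

lemma preimage_refineBy_even {X : Type*} (p : X → ℕ) (U : Set X) {m : ℕ} (hm : m % 2 = 0) :
    refineBy p U ⁻¹' {m} = p ⁻¹' {m / 2} \ U := by
  ext x
  simp only [mem_preimage, mem_singleton_iff, mem_sdiff, ← refineBy_mod p U, ← refineBy_div p U]
  omega

lemma continuous_refineBy {X : Type*} [TopologicalSpace X] {p : X → ℕ} (hp : Continuous p)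
    {U : Set X} (hU : IsClopen U) : Continuous (refineBy p U) := by
  rw [continuous_discrete_rng]
  intro m
  rcases Nat.mod_two_eq_zero_or_one m with hm | hm
  · rw [preimage_refineBy_even p U hm]
    exact ((isOpen_discrete _).preimage hp).sdiff hU.isClosed
  · rw [preimage_refineBy_odd p U hm]
    exact ((isOpen_discrete _).preimage hp).inter hU.isOpen

/-- One half of the back-and-forth step: cutting the left partition along a clopen set `U` can be
matched by cutting the right partition, cell by cell, along a clopen set `V`. -/
lemma IsMatched.exists_refine {X : Type*} [TopologicalSpace X] [CompactSpace X] [T2Space X]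
    [TopologicalSpace.MetrizableSpace X] [TotallyDisconnectedSpace X]
    [MeasurableSpace X] [BorelSpace X] {μ : Measure X} [IsFiniteMeasure μ]
    (hpos : ∀ U : Set X, IsOpen U → U.Nonempty → 0 < μ U)
    (hsc : ∀ U V : Set X, IsClopen U → IsClopen V → μ U < μ V →
      ∃ W, W ⊆ V ∧ IsClopen W ∧ μ W = μ U)
    {R : Set (X × X)} (hR : IsNullGraph μ R) {p q : X → ℕ} (h : IsMatched μ R p q)
    {U : Set X} (hU : IsClopen U) :
    ∃ V, IsClopen V ∧ IsMatched μ R (refineBy p U) (refineBy q V) := by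
  have hcell : ∀ i, ∃ V, IsClopen V ∧ V ⊆ q ⁻¹' {i} ∧
      (∀ x y, (x, y) ∈ R → q y = i → (x ∈ U ↔ y ∈ V)) ∧ μ V = μ (p ⁻¹' {i} ∩ U) := by
    intro i
    have hP : IsClopen (p ⁻¹' {i}) := (isClopen_discrete _).preimage h.1
    have hQ : IsClopen (q ⁻¹' {i}) := (isClopen_discrete _).preimage h.2
    have hclosed : ∀ S : Set X, IsClopen S →
        IsClosed (Prod.snd '' (R ∩ Prod.fst ⁻¹' S) ∩ q ⁻¹' {i}) := fun S hS =>
      ((hR.isCompact.inter_right (hS.isClosed.preimage continuous_fst)).image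
        continuous_snd).isClosed.inter hQ.isClosed
    have hnull : ∀ S : Set X, μ (Prod.snd '' (R ∩ Prod.fst ⁻¹' S) ∩ q ⁻¹' {i}) = 0 := fun S =>
      measure_mono_null (inter_subset_left.trans (image_mono inter_subset_left)) hR.null_snd
    have hempty : ∀ S : Set X, p ⁻¹' {i} ∩ S = ∅ →
        Prod.snd '' (R ∩ Prod.fst ⁻¹' S) ∩ q ⁻¹' {i} = ∅ := by
      intro S hS
      refine eq_empty_iff_forall_notMem.2 ?_
      rintro _ ⟨⟨⟨x, y⟩, ⟨hxy, hx⟩, rfl⟩, hy⟩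
      exact eq_empty_iff_forall_notMem.1 hS x ⟨(h.eq_of_mem x y hxy).trans hy, hx⟩
    obtain ⟨V, hV, hVQ, hKV, hVK, hVm⟩ := exists_isClopen_separating μ hpos hsc
      (hP.inter hU) (hP.inter hU.compl) hQ
      (by rw [← h.measure_eq i, ← sdiff_eq]; exact measure_inter_add_sdiff _ hU.isOpen.measurableSet)
      (hclosed U hU) (hclosed Uᶜ hU.compl) (hnull _) (hnull _) inter_subset_right
      inter_subset_right
      (by
        refine disjoint_left.2 ?_
        rintro _ ⟨⟨⟨x, y⟩, ⟨hxy, hx⟩, rfl⟩, hy⟩ ⟨⟨⟨x', y'⟩, ⟨hxy', hx'⟩, rfl : y' = y⟩, -⟩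
        exact hx' (hR.eq_fst _ _ _ hxy hxy' ▸ hx))
      (hempty _) (hempty _)
    refine ⟨V, hV, hVQ, fun x y hxy hy => ⟨fun hx => hKV ⟨⟨_, ⟨hxy, hx⟩, rfl⟩, hy⟩, fun hyV => ?_⟩,
      hVm⟩
    by_contra hx
    exact disjoint_left.1 hVK hyV ⟨⟨_, ⟨hxy, hx⟩, rfl⟩, hy⟩
  choose V hV hVQ hVR hVm using hcell
  let V' : Set X := {y | y ∈ V (q y)}
  have hopen : ∀ S : ℕ → Set X, (∀ i, IsOpen (S i)) → IsOpen {y | y ∈ S (q y)} := by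
    intro S hS
    have : {y | y ∈ S (q y)} = ⋃ i, q ⁻¹' {i} ∩ S i := by ext; simp
    rw [this]
    exact isOpen_iUnion fun i => ((isOpen_discrete _).preimage h.2).inter (hS i)
  have hV' : IsClopen V' :=
    ⟨isOpen_compl_iff.1 (hopen (fun i => (V i)ᶜ) fun i => (hV i).compl.isOpen),
      hopen V fun i => (hV i).isOpen⟩
  have hQV : ∀ i, q ⁻¹' {i} ∩ V' = V i := by
    intro i
    ext y
    refine ⟨?_, fun hy => ?_⟩
    · rintro ⟨rfl, hy⟩
      exact hy
    · obtain rfl : q y = i := hVQ i hy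
      exact ⟨rfl, hy⟩
  have hinter : ∀ i, μ (p ⁻¹' {i} ∩ U) = μ (q ⁻¹' {i} ∩ V') := fun i => by rw [hQV, hVm]
  refine ⟨V', hV', continuous_refineBy h.1 hU, continuous_refineBy h.2 hV', fun m => ?_,
    fun x y hxy => ?_⟩
  · rcases Nat.mod_two_eq_zero_or_one m with hm | hm
    · rw [preimage_refineBy_even p U hm, preimage_refineBy_even q V' hm]
      refine (ENNReal.add_right_inj (measure_ne_top μ (p ⁻¹' {m / 2} ∩ U))).1 ?_
      rw [measure_inter_add_sdiff _ hU.isOpen.measurableSet, hinter,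
        measure_inter_add_sdiff _ hV'.isOpen.measurableSet, h.measure_eq]
    · rw [preimage_refineBy_odd p U hm, preimage_refineBy_odd q V' hm, hinter]
  · have h1 := h.eq_of_mem x y hxy
    have h2 : x ∈ U ↔ y ∈ V' := hVR (q y) x y hxy rfl
    by_cases hx : x ∈ U
    · simp [refineBy, h1, hx, h2.1 hx]
    · simp [refineBy, h1, hx, mt h2.2 hx]

/-- A full back-and-forth step: the matched partitions can be refined so that a given clopen set is a
union of cells on both sides. -/
lemma IsMatched.exists_step {X : Type*} [TopologicalSpace X] [CompactSpace X] [T2Space X]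
    [TopologicalSpace.MetrizableSpace X] [TotallyDisconnectedSpace X]
    [MeasurableSpace X] [BorelSpace X] {μ : Measure X} [IsFiniteMeasure μ]
    (hpos : ∀ U : Set X, IsOpen U → U.Nonempty → 0 < μ U)
    (hsc : ∀ U V : Set X, IsClopen U → IsClopen V → μ U < μ V →
      ∃ W, W ⊆ V ∧ IsClopen W ∧ μ W = μ U)
    {R : Set (X × X)} (hR : IsNullGraph μ R) {p q : X → ℕ} (h : IsMatched μ R p q)
    {A : Set X} (hA : IsClopen A) :
    ∃ p' q', IsMatched μ R p' q' ∧ (∀ x, p x = p' x / 4) ∧ (∀ x, q x = q' x / 4) ∧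
      (∃ T, A = p' ⁻¹' T) ∧ ∃ T, A = q' ⁻¹' T := by
  obtain ⟨V, -, h₁⟩ := h.exists_refine hpos hsc hR hA
  obtain ⟨U, -, h₂⟩ := h₁.swap.exists_refine hpos hsc hR.swap hA
  refine ⟨_, _, h₂.swap, fun x => ?_, fun x => ?_, ⟨{m | m / 2 % 2 = 1}, ?_⟩,
    {m | m % 2 = 1}, ?_⟩
  · rw [← Nat.div_div_eq_div_mul _ 2 2, refineBy_div, refineBy_div]
  · rw [← Nat.div_div_eq_div_mul _ 2 2, refineBy_div, refineBy_div]
  · ext x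
    simp [refineBy_div, refineBy_mod]
  · ext x
    simp [refineBy_mod]

/-- A homeomorphism between closed null sets extends to a measure-preserving homeomorphism. -/
lemma IsNullGraph.exists_homeomorph {X : Type*} [TopologicalSpace X] [CompactSpace X] [T2Space X]
    [TopologicalSpace.MetrizableSpace X] [TotallyDisconnectedSpace X]
    [MeasurableSpace X] [BorelSpace X] {μ : Measure X} [IsFiniteMeasure μ]
    (hpos : ∀ U : Set X, IsOpen U → U.Nonempty → 0 < μ U)
    (hsc : ∀ U V : Set X, IsClopen U → IsClopen V → μ U < μ V →
      ∃ W, W ⊆ V ∧ IsClopen W ∧ μ W = μ U)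
    {R : Set (X × X)} (hR : IsNullGraph μ R) :
    ∃ h : X ≃ₜ X, MeasurePreserving h μ μ ∧ ∀ x y, (x, y) ∈ R → h x = y := by
  have : SecondCountableTopology X := by
    let := TopologicalSpace.metrizableSpaceMetric X
    infer_instance
  have : Countable (TopologicalSpace.Clopens X) :=
    TopologicalSpace.Clopens.countable_iff_secondCountable.2 inferInstance
  obtain ⟨A, hA⟩ := exists_surjective_nat (TopologicalSpace.Clopens X)
  let S := {s : (X → ℕ) × (X → ℕ) // IsMatched μ R s.1 s.2}
  have hstep : ∀ (n : ℕ) (s : S), ∃ s' : S, (∀ x, s.1.1 x = s'.1.1 x / 4) ∧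
      (∀ x, s.1.2 x = s'.1.2 x / 4) ∧ (∃ T, (A n : Set X) = s'.1.1 ⁻¹' T) ∧
      ∃ T, (A n : Set X) = s'.1.2 ⁻¹' T := by
    rintro n ⟨⟨p, q⟩, hs⟩
    obtain ⟨p', q', h', h⟩ := hs.exists_step hpos hsc hR (A n).isClopen
    exact ⟨⟨⟨p', q'⟩, h'⟩, h⟩
  choose next hp hq hTp hTq using hstep
  let s₀ : S := ⟨⟨fun _ => 0, fun _ => 0⟩, continuous_const, continuous_const, fun _ => rfl,
    fun _ _ _ => rfl⟩
  let s : ℕ → S := fun n => Nat.rec s₀ next n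
  let P : X → ℕ → ℕ := fun x n => (s n).1.1 x
  let Q : X → ℕ → ℕ := fun x n => (s n).1.2 x
  have hP : Continuous P := continuous_pi fun n => (s n).2.1
  have hQ : Continuous Q := continuous_pi fun n => (s n).2.2
  have hPdiv : ∀ x n, P x n = P x (n + 1) / 4 := fun x n => hp n (s n) x
  have hQdiv : ∀ x n, Q x n = Q x (n + 1) / 4 := fun x n => hq n (s n) x
  have hmeas : ∀ n (T : Set ℕ), μ {x | P x n ∈ T} = μ {x | Q x n ∈ T} := fun n T =>
    (s n).2.measure_preimage T
  have hPA : ∀ n, ∃ T : Set ℕ, ∀ x, x ∈ A n ↔ P x (n + 1) ∈ T := fun n => by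
    obtain ⟨T, hT⟩ := hTp n (s n)
    exact ⟨T, fun x => Set.ext_iff.1 hT x⟩
  have hQA : ∀ n, ∃ T : Set ℕ, ∀ x, x ∈ A n ↔ Q x (n + 1) ∈ T := fun n => by
    obtain ⟨T, hT⟩ := hTq n (s n)
    exact ⟨T, fun x => Set.ext_iff.1 hT x⟩
  -- The labels of a point determine it, since every clopen set is eventually a union of cells.
  have hinj : ∀ F : X → ℕ → ℕ, (∀ n, ∃ T : Set ℕ, ∀ x, x ∈ A n ↔ F x (n + 1) ∈ T) →
      Function.Injective F := by
    intro F hF x y hxy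
    by_contra hne
    obtain ⟨U, hU, hxU, hyU⟩ := exists_isClopen_of_totally_separated hne
    obtain ⟨n, hn⟩ := hA ⟨U, hU⟩
    obtain ⟨T, hT⟩ := hF n
    rw [hn] at hT
    exact hyU ((hT y).2 (hxy ▸ (hT x).1 hxU))
  -- A nonempty cell has positive measure, so its partner is nonempty; compactness yields a point.
  have hsurj : ∀ F G : X → ℕ → ℕ, Continuous F → Continuous G →
      (∀ x n, G x n = G x (n + 1) / 4) → (∀ x n, F x n = F x (n + 1) / 4) →
      (∀ n (T : Set ℕ), μ {x | F x n ∈ T} = μ {x | G x n ∈ T}) → ∀ x, ∃ y, G y = F x := by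
    intro F G hF hG hGdiv hFdiv hFG x
    have hcl : ∀ n, IsClopen {y | G y n = F x n} := fun n =>
      (isClopen_discrete {F x n}).preimage ((continuous_apply n).comp hG)
    have hne : (⋂ n, {y | G y n = F x n}).Nonempty := by
      refine IsCompact.nonempty_iInter_of_sequence_nonempty_isCompact_isClosed _ (fun n y hy => ?_)
        (fun n => ?_) (hcl 0).isClosed.isCompact fun n => (hcl n).isClosed
      · have hy' : G y (n + 1) = F x (n + 1) := hy
        change G y n = F x n
        rw [hGdiv, hFdiv, hy']
      · refine nonempty_of_measure_ne_zero (μ := μ) (ne_of_gt ?_)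
        have := hFG n {F x n}
        simp only [mem_singleton_iff] at this
        rw [← this]
        exact hpos _ ((isOpen_discrete {F x n}).preimage ((continuous_apply n).comp hF)) ⟨x, rfl⟩
    obtain ⟨y, hy⟩ := hne
    exact ⟨y, funext fun n => mem_iInter.1 hy n⟩
  have hPi := hinj P hPA
  have hQi := hinj Q hQA
  choose φ hφ using hsurj P Q hP hQ hQdiv hPdiv hmeas
  have hφc : Continuous φ := by
    rw [(hQ.isClosedEmbedding hQi).isInducing.continuous_iff]
    exact (funext hφ : Q ∘ φ = P) ▸ hP
  have hφb : Function.Bijective φ := by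
    refine ⟨fun x y hxy => hPi (by rw [← hφ x, hxy, hφ y]), fun y => ?_⟩
    obtain ⟨x, hx⟩ := hsurj Q P hQ hP hPdiv hQdiv (fun n T => (hmeas n T).symm) y
    exact ⟨x, hQi ((hφ x).trans hx)⟩
  let e := Equiv.ofBijective φ hφb
  let h : X ≃ₜ X := Continuous.homeoOfEquivCompactToT2 (f := e) hφc
  refine ⟨h, ⟨hφc.measurable, ?_⟩, fun x y hxy => ?_⟩
  · -- It suffices to compare the measures on the clopen sets, a π-system generating the Borel sets.
    have hbasis := isTopologicalBasis_isClopen (X := X)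
    refine ext_of_generate_finite {U : Set X | IsClopen U}
      (by rw [BorelSpace.measurable_eq (α := X), hbasis.borel_eq_generateFrom]) ?_ ?_ ?_
    · exact fun U hU V hV _ => hU.inter hV
    · intro U (hU : IsClopen U)
      obtain ⟨n, hn⟩ := hA ⟨U, hU⟩
      obtain ⟨T, hT⟩ := hQA n
      simp only [hn] at hT
      have hT' : ∀ x, x ∈ U ↔ Q x (n + 1) ∈ T := hT
      have h1 : φ ⁻¹' U = {x | P x (n + 1) ∈ T} := by
        ext x
        rw [mem_preimage, hT', hφ x]
        rfl
      have h2 : U = {x | Q x (n + 1) ∈ T} := Set.ext hT'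
      rw [Measure.map_apply h.continuous.measurable hU.isOpen.measurableSet]
      change μ (φ ⁻¹' U) = _
      exact h1 ▸ (hmeas (n + 1) T).trans (congrArg μ h2.symm)
    · rw [Measure.map_apply h.continuous.measurable .univ, preimage_univ]
  · refine hQi ((hφ x).trans (funext fun n => ?_))
    exact (s n).2.eq_of_mem x y hxy

/-! ### Invariant ideals -/

/-- An invariant ideal with analytic base not contained in the countable sets
contains every closed null set. -/
theorem stmt10 {X : Type*} [TopologicalSpace X] [CompactSpace X] [T2Space X]
    [TopologicalSpace.MetrizableSpace X] [TotallyDisconnectedSpace X]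
    [MeasurableSpace X] [BorelSpace X]
    (μ : MeasureTheory.Measure X) [MeasureTheory.IsFiniteMeasure μ]
    (hperf : ∀ x : X, ¬ IsOpen ({x} : Set X))
    (hcont : ∀ x : X, μ {x} = 0)
    (hpos : ∀ U : Set X, IsOpen U → U.Nonempty → 0 < μ U)
    (hsc : ∀ U V : Set X, IsClopen U → IsClopen V → μ U < μ V →
      ∃ W, W ⊆ V ∧ IsClopen W ∧ μ W = μ U)
    (I : Set (Set X))
    (hdown : ∀ A ∈ I, ∀ B : Set X, B ⊆ A → B ∈ I)
    (hcup : ∀ A ∈ I, ∀ B ∈ I, A ∪ B ∈ I)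
    (hinv : ∀ h : X ≃ₜ X, (∀ S : Set X, MeasurableSet S → μ (h '' S) = μ S) →
      ∀ A ∈ I, h '' A ∈ I)
    (hbase : ∀ A ∈ I, ∃ B ∈ I, A ⊆ B ∧ MeasureTheory.AnalyticSet B)
    (hbig : ∃ A ∈ I, ¬ A.Countable) :
    ∀ E : Set X, IsClosed E → μ E = 0 → E ∈ I := by
  intro E hE hE0
  have : SecondCountableTopology X := by
    let := TopologicalSpace.metrizableSpaceMetric X
    infer_instance
  obtain ⟨A, hAI, hA⟩ := hbig
  obtain ⟨B, hBI, hAB, hB⟩ := hbase A hAI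
  obtain ⟨g, hg, hgi, hgB⟩ := AnalyticSet.exists_nat_bool_injection hB fun h => hA (h.mono hAB)
  obtain ⟨g', hg', hgi', hgg', hnull⟩ := exists_null_nat_bool_injection μ hg hgi
  obtain ⟨j, hj, hji⟩ := exists_injective_nat_bool X
  let e : X → X := g' ∘ j
  have hei : Function.Injective e := hgi'.comp hji
  have heB : ∀ x, e x ∈ range g' := fun x => mem_range_self _
  have hR : IsNullGraph μ ((fun x => (x, e x)) '' E) := by
    refine ⟨hE.isCompact.image (continuous_id.prodMk (hg'.comp hj)), ?_, ?_, ?_, ?_⟩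
    · rintro x y y' ⟨a, -, ha⟩ ⟨b, -, hb⟩
      simp only [Prod.mk.injEq] at ha hb
      rw [← ha.2, ← hb.2, ha.1, hb.1]
    · rintro x x' y ⟨a, -, ha⟩ ⟨b, -, hb⟩
      simp only [Prod.mk.injEq] at ha hb
      rw [← ha.1, ← hb.1]
      exact hei (ha.2.trans hb.2.symm)
    · rw [image_image]
      simpa using hE0
    · rw [image_image]
      refine measure_mono_null ?_ hnull
      rintro _ ⟨x, -, rfl⟩
      exact heB x
  obtain ⟨h, hh, hhR⟩ := hR.exists_homeomorph hpos hsc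
  -- `h` carries `E` into `B`, so `E` lies in the image of `B` under the inverse of `h`.
  refine hdown (h.symm '' B) (hinv h.symm (fun S hS => ?_) B hBI) E fun x hx => ?_
  · rw [h.image_symm]
    exact hh.measure_preimage hS.nullMeasurableSet
  · rw [h.image_symm, mem_preimage, hhR x (e x) (mem_image_of_mem _ hx)]
    exact hgB (hgg' (heB x))
end

section
/- Let (X,μ) be a good Cantor measure space and I an invariant ideal on X with analytic base. If I is not contained in the σ-ideal E generated by closed μ-null sets, then I contains every nowhere dense μ-null subset of X. -/
open MeasureTheory Set

/-!
An analytic set `B ∈ I` outside the σ-ideal generated by the closed null sets contains the range of a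
continuous map `f : Z → X` on a Polish space such that `closure (f '' V)` has positive measure for
every nonempty open `V` (`exists_polish_kernel`). Given a nowhere dense null set `N`, cover
the space by finitely many clopen sets `C` with `μ C < μ (closure (range f))`. It suffices to find,
for `K = closure N ∩ C` and `M = N ∩ C`, a measure-preserving homeomorphism moving `M` into
`range f` (`Setup.exists_homeo`); its inverse then maps `B` to a member of `I` containing `N ∩ C`.

The homeomorphism is the limit of a tree of pairs `(p, q)` of clopen sets of equal measure
(`exists_homeo_of_scheme`). A pair for which `p` meets `K` carries an open `V ⊆ Z`, and the invariant is
`μ (p ∩ K) < μ (q ∩ closure (f '' V))`. As `K` is closed with empty interior and the measure is good, a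
cut of either side can be matched by a cut of the other side that keeps the invariant
(`IsGood.cut_left`, `IsGood.cut_right`), so the cells can be made to shrink to points on both sides.

For a point `x ∈ M` the image should be `f z`, with `z` the limit of the sets `V` along the branch of
`x`, so along this branch `V` has to shrink to a point. The points of `K` cannot all pass to a
smaller `V' ⊆ V` at once, because `closure (f '' V')` may have much smaller measure than `K ∩ p`. But `M`
is null: it is covered by an increasing union `⋃ n, D n` of clopen sets, of measure less than that of
`closure (f '' V')`. So a reserve, a set `V'` of small diameter with `f '' V'` inside a small clopen
`qs ⊆ q`, is set aside, and at each stage the points of `K` in `D n` are moved to the reserve. The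
points not yet moved are subdivided with parameter set `V` and need finer reserves of their own. The
finer reserves are chosen before the index `k` of the set `D k` that is moved, and `k` is taken so
large that the rest of `⋃ n, D n` fits into each of them (`Setup.live_step`). A point of `M` lies in some
`D n`, hence passes to a reserve after finitely many stages, and does so infinitely often.
-/

set_option linter.unusedSectionVars false

namespace GoodCantor

/-! ### Homeomorphisms from trees of clopen cells -/

section Scheme

variable {X S : Type*}

/-- `T` is a set of states whose `P`-cells partition `p` and whose `Q`-cells partition `q`.
Distinct states have disjoint cells on both sides; empty cells are allowed. -/
structure IsPart (P Q : S → Set X) (p q : Set X) (T : Set S) : Prop where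
  subP : ∀ t ∈ T, P t ⊆ p
  subQ : ∀ t ∈ T, Q t ⊆ q
  covP : ∀ x ∈ p, ∃ t ∈ T, x ∈ P t
  covQ : ∀ x ∈ q, ∃ t ∈ T, x ∈ Q t
  disjP : ∀ t ∈ T, ∀ t' ∈ T, ∀ x, x ∈ P t → x ∈ P t' → t = t'
  disjQ : ∀ t ∈ T, ∀ t' ∈ T, ∀ x, x ∈ Q t → x ∈ Q t' → t = t'

lemma IsPart.union {P Q : S → Set X} {p₁ q₁ p₂ q₂ : Set X} {T₁ T₂ : Set S}
    (h₁ : IsPart P Q p₁ q₁ T₁) (h₂ : IsPart P Q p₂ q₂ T₂)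
    (hp : Disjoint p₁ p₂) (hq : Disjoint q₁ q₂) :
    IsPart P Q (p₁ ∪ p₂) (q₁ ∪ q₂) (T₁ ∪ T₂) where
  subP := by
    rintro t (ht | ht)
    · exact (h₁.subP t ht).trans subset_union_left
    · exact (h₂.subP t ht).trans subset_union_right
  subQ := by
    rintro t (ht | ht)
    · exact (h₁.subQ t ht).trans subset_union_left
    · exact (h₂.subQ t ht).trans subset_union_right
  covP := by
    rintro x (hx | hx)
    · obtain ⟨t, ht, h⟩ := h₁.covP x hx
      exact ⟨t, Or.inl ht, h⟩
    · obtain ⟨t, ht, h⟩ := h₂.covP x hx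
      exact ⟨t, Or.inr ht, h⟩
  covQ := by
    rintro x (hx | hx)
    · obtain ⟨t, ht, h⟩ := h₁.covQ x hx
      exact ⟨t, Or.inl ht, h⟩
    · obtain ⟨t, ht, h⟩ := h₂.covQ x hx
      exact ⟨t, Or.inr ht, h⟩
  disjP := by
    rintro t (ht | ht) t' (ht' | ht') x hx hx'
    · exact h₁.disjP t ht t' ht' x hx hx'
    · exact (disjoint_left.1 hp (h₁.subP t ht hx) (h₂.subP t' ht' hx')).elim
    · exact (disjoint_left.1 hp (h₁.subP t' ht' hx') (h₂.subP t ht hx)).elim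
    · exact h₂.disjP t ht t' ht' x hx hx'
  disjQ := by
    rintro t (ht | ht) t' (ht' | ht') x hx hx'
    · exact h₁.disjQ t ht t' ht' x hx hx'
    · exact (disjoint_left.1 hq (h₁.subQ t ht hx) (h₂.subQ t' ht' hx')).elim
    · exact (disjoint_left.1 hq (h₁.subQ t' ht' hx') (h₂.subQ t ht hx)).elim
    · exact h₂.disjQ t ht t' ht' x hx hx'

lemma IsPart.range {ι : Type*} {P Q : S → Set X} {p q : Set X} (s : ι → S)
    (hP : ⋃ i, P (s i) = p) (hQ : ⋃ i, Q (s i) = q)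
    (dP : ∀ i j x, x ∈ P (s i) → x ∈ P (s j) → i = j)
    (dQ : ∀ i j x, x ∈ Q (s i) → x ∈ Q (s j) → i = j) :
    IsPart P Q p q (range s) where
  subP := by
    rintro _ ⟨i, rfl⟩
    rw [← hP]
    exact subset_iUnion (fun i => P (s i)) i
  subQ := by
    rintro _ ⟨i, rfl⟩
    rw [← hQ]
    exact subset_iUnion (fun i => Q (s i)) i
  covP := by
    intro x hx
    rw [← hP] at hx
    obtain ⟨i, hi⟩ := mem_iUnion.1 hx
    exact ⟨s i, ⟨i, rfl⟩, hi⟩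
  covQ := by
    intro x hx
    rw [← hQ] at hx
    obtain ⟨i, hi⟩ := mem_iUnion.1 hx
    exact ⟨s i, ⟨i, rfl⟩, hi⟩
  disjP := by
    rintro _ ⟨i, rfl⟩ _ ⟨j, rfl⟩ x hx hx'
    rw [dP i j x hx hx']
  disjQ := by
    rintro _ ⟨i, rfl⟩ _ ⟨j, rfl⟩ x hx hx'
    rw [dQ i j x hx hx']

/-- `A` lies on one side of `U`. -/
def Decided (U A : Set X) : Prop := A ⊆ U ∨ Disjoint A U

lemma Decided.mono {U A B : Set X} (h : Decided U A) (hB : B ⊆ A) : Decided U B :=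
  h.elim (fun h => Or.inl (hB.trans h)) (fun h => Or.inr (h.mono_left hB))

/-- A point of the root cell runs through a branch of the tree of cells. -/
lemma exists_branch {T : ℕ → S → Set S} {P : S → Set X} {inv : S → Prop} {s₀ : S} {x : X}
    (h₀ : inv s₀) (hx : x ∈ P s₀)
    (hT : ∀ n s, inv s → x ∈ P s → ∃ t ∈ T n s, inv t ∧ x ∈ P t) :
    ∃ σ : ℕ → S, σ 0 = s₀ ∧ (∀ n, σ (n + 1) ∈ T n (σ n)) ∧ ∀ n, x ∈ P (σ n) := by
  choose! g hg using hT
  let σ : ℕ → S := fun n => Nat.rec s₀ (fun n s => g n s) n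
  have key : ∀ n, inv (σ n) ∧ x ∈ P (σ n) := by
    intro n
    induction n with
    | zero => exact ⟨h₀, hx⟩
    | succ n ih => exact (hg n _ ih.1 ih.2).2
  exact ⟨σ, rfl, fun n => (hg n _ (key n).1 (key n).2).1, fun n => (key n).2⟩

/-- Two branches whose cells at level `n` meet agree up to level `n`. -/
lemma branch_unique {T : ℕ → S → Set S} {P : S → Set X} {inv : S → Prop} {s₀ : S}
    (h₀ : inv s₀) (hinv : ∀ n s, inv s → ∀ t ∈ T n s, inv t)
    (hsub : ∀ n s, inv s → ∀ t ∈ T n s, P t ⊆ P s)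
    (hdis : ∀ n s, inv s → ∀ t ∈ T n s, ∀ t' ∈ T n s, ∀ x, x ∈ P t → x ∈ P t' → t = t')
    {σ τ : ℕ → S} (hσ0 : σ 0 = s₀) (hσ : ∀ n, σ (n + 1) ∈ T n (σ n))
    (hτ0 : τ 0 = s₀) (hτ : ∀ n, τ (n + 1) ∈ T n (τ n)) {x : X} (n : ℕ)
    (h1 : x ∈ P (σ n)) (h2 : x ∈ P (τ n)) : σ n = τ n := by
  have hi : ∀ n, inv (σ n) := by
    intro n
    induction n with
    | zero => rw [hσ0]; exact h₀
    | succ n ih => exact hinv n _ ih _ (hσ n)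
  have hi' : ∀ n, inv (τ n) := by
    intro n
    induction n with
    | zero => rw [hτ0]; exact h₀
    | succ n ih => exact hinv n _ ih _ (hτ n)
  induction n with
  | zero => rw [hσ0, hτ0]
  | succ n ih =>
    have e := ih (hsub n _ (hi n) _ (hσ n) h1) (hsub n _ (hi' n) _ (hτ n) h2)
    have h3 := hτ n
    rw [← e] at h3
    exact hdis n _ (hi n) _ (hσ n) _ h3 x h1 h2

variable [TopologicalSpace X] [CompactSpace X] [T2Space X]
    [TopologicalSpace.MetrizableSpace X] [TotallyDisconnectedSpace X]
    [MeasurableSpace X] [BorelSpace X]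

/-- A tree of pairs of clopen cells of equal measure, refining on both sides until all points are
separated, defines a measure-preserving homeomorphism carrying each left cell onto the
corresponding right cell. -/
theorem exists_homeo_of_scheme (μ : Measure X) [IsFiniteMeasure μ]
    (hpos : ∀ U : Set X, IsOpen U → U.Nonempty → 0 < μ U)
    (U : ℕ → Set X) (hU : ∀ W : Set X, IsClopen W → ∃ n, U n = W)
    (P Q : S → Set X) (inv : S → Prop) (R : ℕ → S → S → Prop)
    (hP : ∀ s, inv s → IsClopen (P s)) (hQ : ∀ s, inv s → IsClopen (Q s))
    (hm : ∀ s, inv s → μ (P s) = μ (Q s))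
    (hstep : ∀ n s, inv s → ∃ T : Set S, IsPart P Q (P s) (Q s) T ∧
      ∀ t ∈ T, inv t ∧ R n s t ∧ Decided (U n) (P t) ∧ Decided (U n) (Q t))
    (s₀ : S) (h₀ : inv s₀) (hP₀ : P s₀ = univ) (hQ₀ : Q s₀ = univ) :
    ∃ h : X ≃ₜ X, (∀ A : Set X, MeasurableSet A → μ (h '' A) = μ A) ∧
      ∀ x, ∃ σ : ℕ → S, σ 0 = s₀ ∧ (∀ n, inv (σ n)) ∧ (∀ n, R n (σ n) (σ (n + 1))) ∧
        (∀ n, x ∈ P (σ n)) ∧ (∀ n, h x ∈ Q (σ n)) ∧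
        (∀ n, Q (σ (n + 1)) ⊆ Q (σ n)) ∧ ∀ n, Decided (U n) (Q (σ (n + 1))) := by
  have sep : ∀ x y : X, x ≠ y → ∃ n, x ∈ U n ∧ y ∉ U n := by
    intro x y hxy
    obtain ⟨W, hW, hxW, hWs⟩ := isTopologicalBasis_isClopen.mem_nhds_iff.1
      (isOpen_compl_singleton.mem_nhds (show x ∈ ({y} : Set X)ᶜ from hxy))
    obtain ⟨n, rfl⟩ := hU W hW
    exact ⟨n, hxW, fun h => hWs h rfl⟩
  choose! T hT hT' using hstep
  have hinvT : ∀ n s, inv s → ∀ t ∈ T n s, inv t := fun n s hs t ht => (hT' n s hs t ht).1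
  have binv : ∀ {σ : ℕ → S}, σ 0 = s₀ → (∀ n, σ (n + 1) ∈ T n (σ n)) → ∀ n, inv (σ n) := by
    intro σ h1 h2 n
    induction n with
    | zero => rw [h1]; exact h₀
    | succ n ih => exact hinvT n _ ih _ (h2 n)
  have uP : ∀ {σ τ : ℕ → S}, σ 0 = s₀ → (∀ n, σ (n + 1) ∈ T n (σ n)) → τ 0 = s₀ →
      (∀ n, τ (n + 1) ∈ T n (τ n)) → ∀ {x : X} (n : ℕ), x ∈ P (σ n) → x ∈ P (τ n) → σ n = τ n :=
    fun h1 h2 h3 h4 _ n => branch_unique (P := P) h₀ hinvT (fun n s hs => (hT n s hs).subP)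
      (fun n s hs => (hT n s hs).disjP) h1 h2 h3 h4 n
  have uQ : ∀ {σ τ : ℕ → S}, σ 0 = s₀ → (∀ n, σ (n + 1) ∈ T n (σ n)) → τ 0 = s₀ →
      (∀ n, τ (n + 1) ∈ T n (τ n)) → ∀ {x : X} (n : ℕ), x ∈ Q (σ n) → x ∈ Q (τ n) → σ n = τ n :=
    fun h1 h2 h3 h4 _ n => branch_unique (P := Q) h₀ hinvT (fun n s hs => (hT n s hs).subQ)
      (fun n s hs => (hT n s hs).disjQ) h1 h2 h3 h4 n
  have eP : ∀ x, ∃ σ : ℕ → S, σ 0 = s₀ ∧ (∀ n, σ (n + 1) ∈ T n (σ n)) ∧ ∀ n, x ∈ P (σ n) := by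
    intro x
    refine exists_branch h₀ (by rw [hP₀]; trivial) ?_
    intro n s hs hx
    obtain ⟨t, ht, h⟩ := (hT n s hs).covP x hx
    exact ⟨t, ht, hinvT n s hs t ht, h⟩
  have eQ : ∀ x, ∃ σ : ℕ → S, σ 0 = s₀ ∧ (∀ n, σ (n + 1) ∈ T n (σ n)) ∧ ∀ n, x ∈ Q (σ n) := by
    intro x
    refine exists_branch h₀ (by rw [hQ₀]; trivial) ?_
    intro n s hs hx
    obtain ⟨t, ht, h⟩ := (hT n s hs).covQ x hx
    exact ⟨t, ht, hinvT n s hs t ht, h⟩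
  choose σ hσ0 hσ hσP using eP
  have hσi : ∀ x n, inv (σ x n) := fun x => binv (hσ0 x) (hσ x)
  have hne : ∀ s, inv s → (P s).Nonempty → (Q s).Nonempty := by
    intro s hs hn
    by_contra hc
    rw [not_nonempty_iff_eq_empty] at hc
    have := hpos _ (hP s hs).isOpen hn
    rw [hm s hs, hc] at this
    simp at this
  have ex : ∀ x, ∃ y, ∀ n, y ∈ Q (σ x n) := by
    intro x
    obtain ⟨y, hy⟩ := IsCompact.nonempty_iInter_of_sequence_nonempty_isCompact_isClosed
      (fun n => Q (σ x n)) (fun n => (hT n _ (hσi x n)).subQ _ (hσ x n))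
      (fun n => hne _ (hσi x n) ⟨x, hσP x n⟩) (hQ _ (hσi x 0)).isClosed.isCompact
      (fun n => (hQ _ (hσi x n)).isClosed)
    exact ⟨y, fun n => mem_iInter.1 hy n⟩
  choose h hh using ex
  have hDP : ∀ x n, Decided (U n) (P (σ x (n + 1))) :=
    fun x n => (hT' n _ (hσi x n) _ (hσ x n)).2.2.1
  have hDQ : ∀ x n, Decided (U n) (Q (σ x (n + 1))) :=
    fun x n => (hT' n _ (hσi x n) _ (hσ x n)).2.2.2
  have hinj : Function.Injective h := by
    intro x x' hxx
    by_contra hne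
    obtain ⟨n, h1, h2⟩ := sep x x' hne
    have e : σ x (n + 1) = σ x' (n + 1) :=
      uQ (hσ0 x) (hσ x) (hσ0 x') (hσ x') (n + 1) (hh x _) (hxx ▸ hh x' (n + 1))
    rcases hDP x n with hd | hd
    · exact h2 (hd (e ▸ hσP x' (n + 1)))
    · exact disjoint_left.1 hd (hσP x (n + 1)) h1
  have hQsub : ∀ x y n, y ∈ Q (σ x (n + 1)) → (y ∈ U n ↔ h x ∈ U n) := by
    intro x y n hy
    rcases hDQ x n with hd | hd
    · exact ⟨fun _ => hd (hh x _), fun _ => hd hy⟩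
    · exact ⟨fun h1 => (disjoint_left.1 hd hy h1).elim,
        fun h1 => (disjoint_left.1 hd (hh x _) h1).elim⟩
  have hsurj : Function.Surjective h := by
    intro y
    obtain ⟨τ, hτ0, hτ, hτQ⟩ := eQ y
    have hτi := binv hτ0 hτ
    have hneP : ∀ n, (P (τ n)).Nonempty := by
      intro n
      by_contra hc
      rw [not_nonempty_iff_eq_empty] at hc
      have := hpos _ (hQ _ (hτi n)).isOpen ⟨y, hτQ n⟩
      rw [← hm _ (hτi n), hc] at this
      simp at this
    obtain ⟨x, hx⟩ := IsCompact.nonempty_iInter_of_sequence_nonempty_isCompact_isClosed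
      (fun n => P (τ n)) (fun n => (hT n _ (hτi n)).subP _ (hτ n)) hneP
      (hP _ (hτi 0)).isClosed.isCompact (fun n => (hP _ (hτi n)).isClosed)
    refine ⟨x, ?_⟩
    by_contra hc
    obtain ⟨n, h1, h2⟩ := sep _ _ hc
    have e : σ x (n + 1) = τ (n + 1) :=
      uP (hσ0 x) (hσ x) hτ0 hτ (n + 1) (hσP x _) (mem_iInter.1 hx _)
    exact h2 ((hQsub x y n (e ▸ hτQ (n + 1))).2 h1)
  have hcell : ∀ x n y, y ∈ P (σ x n) ↔ h y ∈ Q (σ x n) := by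
    intro x n y
    constructor
    · intro hy
      rw [uP (hσ0 x) (hσ x) (hσ0 y) (hσ y) n hy (hσP y n)]
      exact hh y n
    · intro hy
      rw [uQ (hσ0 x) (hσ x) (hσ0 y) (hσ y) n hy (hh y n)]
      exact hσP y n
  have hcont : Continuous h := by
    rw [isTopologicalBasis_isClopen.continuous_iff]
    intro W hW
    obtain ⟨n, rfl⟩ := hU W hW
    rw [isOpen_iff_forall_mem_open]
    intro x hx
    refine ⟨P (σ x (n + 1)), ?_, (hP _ (hσi x _)).isOpen, hσP x _⟩
    intro x' hx'
    exact (hQsub x _ n ((hcell x _ x').1 hx')).2 hx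
  let H : X ≃ₜ X := (Continuous.homeoOfEquivCompactToT2 (f := Equiv.ofBijective h ⟨hinj, hsurj⟩)
    hcont)
  have hH : ∀ x, H x = h x := fun x => rfl
  have himg : ∀ x n, H '' P (σ x n) = Q (σ x n) := by
    intro x n
    ext y
    constructor
    · rintro ⟨z, hz, rfl⟩
      exact (hcell x n z).1 hz
    · intro hy
      obtain ⟨z, rfl⟩ := hsurj y
      exact ⟨z, (hcell x n z).2 hy, rfl⟩
  -- the cells form a countable π-system generating the Borel sets
  let C : Set (Set X) := {A | ∃ x n, A = P (σ x n)}
  have hCb : TopologicalSpace.IsTopologicalBasis C := by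
    refine TopologicalSpace.isTopologicalBasis_of_isOpen_of_nhds ?_ ?_
    · rintro _ ⟨x, n, rfl⟩
      exact (hP _ (hσi x n)).isOpen
    · intro x O hx hO
      obtain ⟨W, hW, hxW, hWO⟩ := isTopologicalBasis_isClopen.mem_nhds_iff.1 (hO.mem_nhds hx)
      obtain ⟨n, rfl⟩ := hU W hW
      refine ⟨_, ⟨x, n + 1, rfl⟩, hσP x _, ?_⟩
      rcases hDP x n with hd | hd
      · exact hd.trans hWO
      · exact (disjoint_left.1 hd (hσP x _) hxW).elim
  have hanti : ∀ x, Antitone fun n => P (σ x n) := fun x =>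
    antitone_nat_of_succ_le fun n => (hT n _ (hσi x n)).subP _ (hσ x n)
  have hCpi : IsPiSystem C := by
    have aux : ∀ x n y m, n ≤ m → (P (σ x n) ∩ P (σ y m)).Nonempty →
        P (σ x n) ∩ P (σ y m) ∈ C := by
      rintro x n y m hnm ⟨z, hz1, hz2⟩
      refine ⟨y, m, inter_eq_right.2 ?_⟩
      rw [uP (hσ0 x) (hσ x) (hσ0 y) (hσ y) n hz1 (hanti y hnm hz2)]
      exact hanti y hnm
    rintro _ ⟨x, n, rfl⟩ _ ⟨y, m, rfl⟩ hne
    rcases le_total n m with hnm | hnm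
    · exact aux x n y m hnm hne
    · rw [inter_comm] at hne ⊢
      exact aux y m x n hnm hne
  have hν : μ = μ.map H.symm := by
    refine ext_of_generate_finite C ?_ hCpi ?_ ?_
    · rw [BorelSpace.measurable_eq (α := X)]
      exact hCb.borel_eq_generateFrom
    · rintro _ ⟨x, n, rfl⟩
      rw [Measure.map_apply H.symm.continuous.measurable (hP _ (hσi x n)).isOpen.measurableSet,
        ← Homeomorph.image_eq_preimage_symm, himg, hm _ (hσi x n)]
    · rw [Measure.map_apply H.symm.continuous.measurable MeasurableSet.univ, preimage_univ]
  refine ⟨H, ?_, ?_⟩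
  · intro A hA
    conv_rhs => rw [hν]
    rw [Measure.map_apply H.symm.continuous.measurable hA, ← Homeomorph.image_eq_preimage_symm]
  · intro x
    exact ⟨σ x, hσ0 x, hσi x, fun n => (hT' n _ (hσi x n) _ (hσ x n)).2.1, hσP x, hh x,
      fun n => (hT n _ (hσi x n)).subQ _ (hσ x n), hDQ x⟩

end Scheme

/-! ### Analytic sets outside the σ-ideal -/

section Kernel

variable {X : Type*} [TopologicalSpace X] [MeasurableSpace X]

/-- Membership in the σ-ideal generated by the closed null sets. -/
def InE (μ : Measure X) (A : Set X) : Prop :=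
  ∃ F : ℕ → Set X, (∀ n, IsClosed (F n) ∧ μ (F n) = 0) ∧ A ⊆ ⋃ n, F n

lemma InE.mono {μ : Measure X} {A B : Set X} (h : InE μ A) (hB : B ⊆ A) : InE μ B := by
  obtain ⟨F, hF, hA⟩ := h
  exact ⟨F, hF, hB.trans hA⟩

lemma InE.iUnion {ι : Type*} [Countable ι] {μ : Measure X} {A : ι → Set X}
    (h : ∀ i, InE μ (A i)) : InE μ (⋃ i, A i) := by
  choose F hF hA using h
  rcases isEmpty_or_nonempty ι with hι | hι
  · exact ⟨fun _ => ∅, fun _ => ⟨isClosed_empty, measure_empty⟩, by simp⟩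
  obtain ⟨e, he⟩ := exists_surjective_nat (ι × ℕ)
  refine ⟨fun n => F (e n).1 (e n).2, fun n => hF _ _, ?_⟩
  intro x hx
  obtain ⟨i, hi⟩ := mem_iUnion.1 hx
  obtain ⟨k, hk⟩ := mem_iUnion.1 (hA i hi)
  obtain ⟨n, hn⟩ := he (i, k)
  exact mem_iUnion.2 ⟨n, by simpa [hn] using hk⟩

/-- An analytic set outside the σ-ideal contains a continuous image of a Polish space all of whose
nonempty open subsets have images with closure of positive measure: delete from `ℕ → ℕ` all basic
open sets whose image lies in the σ-ideal. -/
theorem exists_polish_kernel (μ : Measure X) {A : Set X} (hA : AnalyticSet A) (hE : ¬ InE μ A) :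
    ∃ (Z : Type) (_ : TopologicalSpace Z) (_ : PolishSpace Z) (f : Z → X), Nonempty Z ∧
      Continuous f ∧ range f ⊆ A ∧
      ∀ V : Set Z, IsOpen V → V.Nonempty → 0 < μ (closure (f '' V)) := by
  rw [AnalyticSet] at hA
  rcases hA with rfl | ⟨f, hf, rfl⟩
  · exact (hE ⟨fun _ => ∅, fun _ => ⟨isClosed_empty, measure_empty⟩, by simp⟩).elim
  let B := TopologicalSpace.countableBasis (ℕ → ℕ)
  let B' : Set (Set (ℕ → ℕ)) := {b | b ∈ B ∧ InE μ (f '' b)}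
  have hB' : B'.Countable := (TopologicalSpace.countable_countableBasis _).mono fun b hb => hb.1
  have : Countable B' := hB'.to_subtype
  let O : Set (ℕ → ℕ) := ⋃ b : B', (b : Set (ℕ → ℕ))
  have hO : IsOpen O :=
    isOpen_iUnion fun b => TopologicalSpace.isOpen_of_mem_countableBasis b.2.1
  have hOE : InE μ (f '' O) := by
    rw [image_iUnion]
    exact InE.iUnion fun b => b.2.2
  let R : Set (ℕ → ℕ) := Oᶜ
  have hR : IsClosed R := hO.isClosed_compl
  refine ⟨R, inferInstance, hR.polishSpace, fun z => f z, ?_, hf.comp continuous_subtype_val,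
    ?_, ?_⟩
  · by_contra hc
    apply hE
    have : O = univ := by
      rw [eq_univ_iff_forall]
      intro z
      by_contra hz
      exact hc ⟨⟨z, hz⟩⟩
    rwa [this, image_univ] at hOE
  · rintro _ ⟨z, rfl⟩
    exact mem_range_self _
  · rintro V hV ⟨z, hz⟩
    rw [pos_iff_ne_zero]
    intro h0
    obtain ⟨W, hW, rfl⟩ := isOpen_induced_iff.1 hV
    obtain ⟨b, hb, hzb, hbW⟩ :=
      (TopologicalSpace.isBasis_countableBasis (ℕ → ℕ)).exists_subset_of_mem_open hz hW
    refine z.2 (mem_iUnion.2 ⟨⟨b, hb, ?_⟩, hzb⟩)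
    have h1 : InE μ (closure ((fun z : R => f z) '' (Subtype.val ⁻¹' W))) :=
      ⟨fun _ => _, fun _ => ⟨isClosed_closure, h0⟩, (iUnion_const _).ge⟩
    have h2 : InE μ (⋃ i : Bool, if i then f '' O else
        closure ((fun z : R => f z) '' (Subtype.val ⁻¹' W))) :=
      InE.iUnion fun i => by cases i <;> simpa
    refine h2.mono ?_
    rintro _ ⟨y, hy, rfl⟩
    rw [mem_iUnion]
    by_cases hyO : y ∈ O
    · exact ⟨true, by simpa using mem_image_of_mem f hyO⟩
    · exact ⟨false, subset_closure (mem_image_of_mem (fun z : R => f z)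
        (show (⟨y, hyO⟩ : R) ∈ Subtype.val ⁻¹' W from hbW hy))⟩

end Kernel

/-! ### Splitting clopen sets -/

section Splitting

variable {X : Type*} [TopologicalSpace X] [CompactSpace X] [T2Space X]
    [TopologicalSpace.MetrizableSpace X] [TotallyDisconnectedSpace X]
    [MeasurableSpace X] [BorelSpace X] {μ : Measure X} [IsFiniteMeasure μ]

/-- Full support, no atoms, and the Subset Condition. -/
structure IsGood (μ : Measure X) : Prop where
  pos : ∀ U : Set X, IsOpen U → U.Nonempty → 0 < μ U
  cont : ∀ x : X, μ {x} = 0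
  sc : ∀ U V : Set X, IsClopen U → IsClopen V → μ U < μ V →
      ∃ W, W ⊆ V ∧ IsClopen W ∧ μ W = μ U

lemma clopen_meas {A : Set X} (h : IsClopen A) : MeasurableSet A := h.isOpen.measurableSet

lemma IsGood.real_pos (hμ : IsGood μ) {U : Set X} (h : IsOpen U) (hn : U.Nonempty) :
    0 < μ.real U :=
  ENNReal.toReal_pos (hμ.pos U h hn).ne' (measure_ne_top _ _)

lemma real_diff {A C : Set X} (hC : MeasurableSet C) (h : C ⊆ A) :
    μ.real (A \ C) = μ.real A - μ.real C := by
  have := measureReal_inter_add_sdiff (μ := μ) (s := A) hC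
  rw [inter_eq_right.2 h] at this
  linarith

lemma real_split (A : Set X) {C : Set X} (hC : MeasurableSet C) :
    μ.real (A ∩ C) + μ.real (A \ C) = μ.real A :=
  measureReal_inter_add_sdiff hC

lemma IsGood.exact_subset (hμ : IsGood μ) {U V : Set X} (hU : IsClopen U) (hV : IsClopen V)
    (h : μ.real U ≤ μ.real V) : ∃ W, W ⊆ V ∧ IsClopen W ∧ μ.real W = μ.real U := by
  rcases h.eq_or_lt with h | h
  · exact ⟨V, Subset.rfl, hV, h.symm⟩
  · obtain ⟨W, h1, h2, h3⟩ := hμ.sc U V hU hV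
      ((ENNReal.toReal_lt_toReal (measure_ne_top _ _) (measure_ne_top _ _)).1 h)
    exact ⟨W, h1, h2, by simp [Measure.real, h3]⟩

/-- A clopen set can be enlarged inside a prescribed clopen set to any larger clopen measure that
fits. -/
lemma IsGood.fill (hμ : IsGood μ) {C T V : Set X} (hC : IsClopen C) (hT : IsClopen T)
    (hV : IsClopen V) (hd : Disjoint C T) (h1 : μ.real C ≤ μ.real V)
    (h2 : μ.real V ≤ μ.real C + μ.real T) :
    ∃ W, W ⊆ T ∧ IsClopen W ∧ μ.real (C ∪ W) = μ.real V := by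
  obtain ⟨V', hV', hV'c, hV'm⟩ := hμ.exact_subset hC hV h1
  have h3 := real_diff (μ := μ) (clopen_meas hV'c) hV'
  obtain ⟨W, hW, hWc, hWm⟩ := hμ.exact_subset (hV.diff hV'c) hT (by linarith)
  refine ⟨W, hW, hWc, ?_⟩
  rw [measureReal_union (hd.mono_right hW) (clopen_meas hWc)]
  linarith

lemma clopen_approx {A p : Set X} (hA : IsClosed A) (hp : IsClopen p) (hAp : A ⊆ p) {r : ℝ}
    (hr : μ.real A < r) : ∃ C, IsClopen C ∧ A ⊆ C ∧ C ⊆ p ∧ μ.real C < r := by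
  have hr0 : 0 ≤ r := measureReal_nonneg.trans hr.le
  obtain ⟨O, hAO, hO, hOr⟩ := A.exists_isOpen_lt_of_lt (μ := μ) (ENNReal.ofReal r)
    ((ENNReal.lt_ofReal_iff_toReal_lt (measure_ne_top _ _)).2 hr)
  obtain ⟨C, hC, hAC, hCO⟩ := exists_clopen_of_closed_subset_open hA (hO.inter hp.isOpen)
    (subset_inter hAO hAp)
  refine ⟨C, hC, hAC, hCO.trans inter_subset_right, ?_⟩
  exact (ENNReal.lt_ofReal_iff_toReal_lt (measure_ne_top _ _)).1
    ((measure_mono (hCO.trans inter_subset_left)).trans_lt hOr)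

lemma IsGood.small_nhd (hμ : IsGood μ) {p : Set X} (hp : IsClopen p) {x : X} (hx : x ∈ p) {ε : ℝ}
    (hε : 0 < ε) : ∃ C, IsClopen C ∧ x ∈ C ∧ C ⊆ p ∧ μ.real C < ε := by
  obtain ⟨C, h1, h2, h3, h4⟩ := clopen_approx (μ := μ) (A := {x}) isClosed_singleton hp
    (singleton_subset_iff.2 hx) (r := ε) (by simpa [Measure.real, hμ.cont x] using hε)
  exact ⟨C, h1, h2 rfl, h3, h4⟩

lemma IsGood.finite_cover (hμ : IsGood μ) {ε : ℝ} (hε : 0 < ε) :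
    ∃ s : Finset (Set X), (∀ C ∈ s, IsClopen C ∧ μ.real C < ε) ∧ ∀ x, ∃ C ∈ s, x ∈ C := by
  choose N h1 h2 h3 h4 using fun x : X => hμ.small_nhd isClopen_univ (mem_univ x) hε
  obtain ⟨t, ht⟩ := isCompact_univ.elim_finite_subcover N (fun x => (h1 x).isOpen)
    (fun x _ => mem_iUnion.2 ⟨x, h2 x⟩)
  classical
  refine ⟨t.image N, ?_, ?_⟩
  · intro C hC
    obtain ⟨x, -, rfl⟩ := Finset.mem_image.1 hC
    exact ⟨h1 x, h4 x⟩
  · intro x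
    obtain ⟨i, hi, hx⟩ := mem_iUnion₂.1 (ht (mem_univ x))
    exact ⟨N i, Finset.mem_image_of_mem _ hi, hx⟩

/-- Clopen subsets of a clopen set realize a dense set of measures: exhaust it by pieces of measure
less than `b - a`, added one at a time. -/
lemma IsGood.intermediate (hμ : IsGood μ) {D : Set X} (hD : IsClopen D) {a b : ℝ} (hab : a < b)
    (hb : 0 < b) (ha : a < μ.real D) : ∃ C, C ⊆ D ∧ IsClopen C ∧ a < μ.real C ∧ μ.real C < b := by
  by_contra hc
  push Not at hc
  obtain ⟨s, hs, hcov⟩ := hμ.finite_cover (μ := μ) (sub_pos.2 hab)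
  have key : ∀ t : Finset (Set X), t ⊆ s → ∃ E, E ⊆ D ∧ IsClopen E ∧ μ.real E ≤ a ∧
      ∀ C ∈ t, C ∩ D ⊆ E := by
    classical
    intro t
    induction t using Finset.induction_on with
    | empty =>
      intro _
      refine ⟨∅, empty_subset _, isClopen_empty, ?_, by simp⟩
      by_contra h
      have := hc ∅ (empty_subset _) isClopen_empty (not_le.1 h)
      simp at this
      linarith
    | insert C t _ ih =>
      intro ht
      obtain ⟨E, hED, hE, hEa, hEt⟩ := ih ((Finset.subset_insert _ _).trans ht)
      have hCs := hs C (ht (Finset.mem_insert_self _ _))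
      have h1 : μ.real (E ∪ C ∩ D) < b := by
        have h2 : μ.real (E ∪ C ∩ D) ≤ μ.real E + μ.real (C ∩ D) := measureReal_union_le _ _
        have h3 : μ.real (C ∩ D) ≤ μ.real C := measureReal_mono inter_subset_left
        linarith [hCs.2]
      refine ⟨E ∪ C ∩ D, union_subset hED inter_subset_right, hE.union (hCs.1.inter hD), ?_, ?_⟩
      · by_contra h
        exact absurd (hc _ (union_subset hED inter_subset_right) (hE.union (hCs.1.inter hD))
          (not_le.1 h)) (not_le.2 h1)
      · intro C' hC'
        rcases Finset.mem_insert.1 hC' with rfl | hC'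
        · exact subset_union_right
        · exact (hEt C' hC').trans subset_union_left
  obtain ⟨E, hED, hE, hEa, hEt⟩ := key s Finset.Subset.rfl
  have : D ⊆ E := by
    intro x hx
    obtain ⟨C, hC, hxC⟩ := hcov x
    exact hEt C hC ⟨hxC, hx⟩
  have := measureReal_mono (μ := μ) this
  linarith

/-- The pair of cells `(p, q)` leaves strictly more room for `F` in `q` than `K` occupies in `p`,
unless `p` misses `K`. -/
def Fits (μ : Measure X) (K F p q : Set X) : Prop :=
  p ∩ K = ∅ ∨ μ.real (p ∩ K) < μ.real (q ∩ F)

/-- A cut of the left cell can be matched by a cut of the right cell. As `K` has empty interior, a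
nonempty clopen part of `p` has measure larger than its trace on `K`, and this excess absorbs the
error in approximating `q ∩ F` by clopen sets. -/
lemma IsGood.cut_left (hμ : IsGood μ) {K F p q U : Set X} (hK : IsClosed K)
    (hKi : interior K = ∅) (hF : IsClosed F) (hp : IsClopen p) (hq : IsClopen q)
    (hU : IsClopen U) (hpq : μ.real p = μ.real q) (hfit : Fits μ K F p q) :
    ∃ q₁, q₁ ⊆ q ∧ IsClopen q₁ ∧ μ.real (p ∩ U) = μ.real q₁ ∧
      Fits μ K F (p ∩ U) q₁ ∧ Fits μ K F (p \ U) (q \ q₁) := by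
  have hsp := real_split (μ := μ) p (clopen_meas hU)
  by_cases hdead : p ∩ K = ∅
  · obtain ⟨q₁, h1, h2, h3⟩ := hμ.exact_subset (hp.inter hU) hq
      (by linarith [measureReal_nonneg (μ := μ) (s := p \ U)])
    refine ⟨q₁, h1, h2, h3.symm, Or.inl ?_, Or.inl ?_⟩
    · exact subset_empty_iff.1 (hdead ▸ inter_subset_inter_left K inter_subset_left)
    · exact subset_empty_iff.1 (hdead ▸ inter_subset_inter_left K sdiff_subset)
  have hΦ := hfit.resolve_left hdead
  have strict : ∀ r : Set X, IsClopen r → r.Nonempty → μ.real (r ∩ K) < μ.real r := by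
    intro r hr hn
    have h1 : (r \ K).Nonempty := by
      by_contra hc
      rw [not_nonempty_iff_eq_empty, sdiff_eq_empty] at hc
      have := interior_maximal hc hr.isOpen
      rw [hKi] at this
      exact hn.ne_empty (subset_empty_iff.1 this)
    have h2 := hμ.real_pos (hr.isOpen.sdiff hK) h1
    have h3 := real_split (μ := μ) r hK.measurableSet
    linarith
  rcases (p ∩ U).eq_empty_or_nonempty with h1 | hn1
  · refine ⟨∅, empty_subset _, isClopen_empty, by rw [h1], Or.inl (by rw [h1, empty_inter]), ?_⟩
    have : p \ U = p := by
      rw [← sdiff_inter_self_eq_sdiff, inter_comm, h1, sdiff_empty]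
    rw [this, sdiff_empty]
    exact hfit
  rcases (p \ U).eq_empty_or_nonempty with h2 | hn2
  · have : p ∩ U = p := inter_eq_left.2 (sdiff_eq_empty.1 h2)
    refine ⟨q, Subset.rfl, hq, by rw [this, hpq], by rwa [this], Or.inl (by rw [h2, empty_inter])⟩
  have hc1 := strict _ (hp.inter hU) hn1
  have hc2 := strict _ (hp.diff hU) hn2
  have hsK : μ.real (p ∩ U ∩ K) + μ.real ((p \ U) ∩ K) = μ.real (p ∩ K) := by
    rw [← real_split (μ := μ) (p ∩ K) (clopen_meas hU), inter_right_comm, sdiff_inter_right_comm]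
  set c₁ := μ.real (p ∩ U ∩ K)
  set c₂ := μ.real ((p \ U) ∩ K)
  set m₁ := μ.real (p ∩ U)
  set m₂ := μ.real (p \ U)
  have hc1' : 0 ≤ c₁ := measureReal_nonneg
  have hc2' : 0 ≤ c₂ := measureReal_nonneg
  obtain ⟨ε, hε, he1, he2, he3⟩ : ∃ ε > 0, c₁ + 2 * ε ≤ m₁ ∧ c₂ + 2 * ε ≤ m₂ ∧
      c₁ + c₂ + 4 * ε ≤ μ.real (q ∩ F) := by
    refine ⟨min ((m₁ - c₁) / 2) (min ((m₂ - c₂) / 2) ((μ.real (q ∩ F) - (c₁ + c₂)) / 4)),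
      lt_min (by linarith) (lt_min (by linarith) (by linarith)), ?_, ?_, ?_⟩
    · linarith [min_le_left ((m₁ - c₁) / 2) (min ((m₂ - c₂) / 2)
        ((μ.real (q ∩ F) - (c₁ + c₂)) / 4))]
    · linarith [(min_le_right ((m₁ - c₁) / 2) (min ((m₂ - c₂) / 2)
        ((μ.real (q ∩ F) - (c₁ + c₂)) / 4))).trans (min_le_left _ _)]
    · linarith [(min_le_right ((m₁ - c₁) / 2) (min ((m₂ - c₂) / 2)
        ((μ.real (q ∩ F) - (c₁ + c₂)) / 4))).trans (min_le_right _ _)]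
  -- `D` approximates `q ∩ F` up to `ε`, so clopen subsets of `D` are almost contained in `F`
  obtain ⟨D, hD, hFD, hDq, hDm⟩ := clopen_approx (μ := μ) (hq.isClosed.inter hF) hq
    inter_subset_left (r := μ.real (q ∩ F) + ε) (by linarith)
  have hDF : ∀ C, C ⊆ D → IsClopen C → μ.real C - ε ≤ μ.real (C ∩ F) := by
    intro C hC _
    have h1 := real_split (μ := μ) C hF.measurableSet
    have h2 : μ.real (C \ F) ≤ μ.real (D \ (q ∩ F)) := by
      refine measureReal_mono ?_
      rintro x ⟨hx, hxF⟩
      exact ⟨hC hx, fun h => hxF h.2⟩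
    have h3 := real_diff (μ := μ) (hq.isClosed.inter hF).measurableSet hFD
    linarith
  have hDge : μ.real (q ∩ F) ≤ μ.real D := measureReal_mono hFD
  obtain ⟨C₁, hC1D, hC1, hC1l, hC1u⟩ := hμ.intermediate hD (a := c₁ + ε) (b := c₁ + 2 * ε)
    (by linarith) (by linarith) (by linarith)
  have hDC1 := real_diff (μ := μ) (clopen_meas hC1) hC1D
  obtain ⟨C₂, hC2D, hC2, hC2l, hC2u⟩ := hμ.intermediate (hD.diff hC1) (a := c₂ + ε)
    (b := c₂ + 2 * ε) (by linarith) (by linarith) (by linarith)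
  have hC12 : Disjoint C₁ C₂ := disjoint_sdiff_right.mono_right hC2D
  have hC2q : C₂ ⊆ q := hC2D.trans (sdiff_subset.trans hDq)
  have hqC2 := real_diff (μ := μ) (clopen_meas hC2) hC2q
  have hqC12 := real_diff (μ := μ) (clopen_meas hC1)
    (show C₁ ⊆ q \ C₂ from subset_sdiff.2 ⟨hC1D.trans hDq, hC12⟩)
  obtain ⟨W, hWs, hW, hWm⟩ := hμ.fill hC1 ((hq.diff hC2).diff hC1) (hp.inter hU)
    disjoint_sdiff_right (by linarith) (by linarith)
  have hq1 : C₁ ∪ W ⊆ q := union_subset (hC1D.trans hDq) (hWs.trans (sdiff_subset.trans sdiff_subset))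
  refine ⟨C₁ ∪ W, hq1, hC1.union hW, hWm.symm, Or.inr ?_, Or.inr ?_⟩
  · have h1 : μ.real (C₁ ∩ F) ≤ μ.real ((C₁ ∪ W) ∩ F) :=
      measureReal_mono (inter_subset_inter_left _ subset_union_left)
    have h2 := hDF C₁ hC1D hC1
    linarith
  · have h1 : μ.real (C₂ ∩ F) ≤ μ.real ((q \ (C₁ ∪ W)) ∩ F) := by
      refine measureReal_mono (inter_subset_inter_left _ ?_)
      intro x hx
      refine ⟨hC2q hx, ?_⟩
      rintro (h | h)
      · exact disjoint_left.1 hC12 h hx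
      · exact (hWs h).1.2 hx
    have h2 := hDF C₂ (hC2D.trans sdiff_subset) hC2
    linarith

/-- A cut of the right cell can be matched by a cut of the left cell: a clopen neighbourhood of
`p ∩ K` of measure less than that of `q ∩ F` is distributed over the two parts of `q`. -/
lemma IsGood.cut_right (hμ : IsGood μ) {K F p q U : Set X} (hK : IsClosed K)
    (hp : IsClopen p) (hq : IsClopen q)
    (hU : IsClopen U) (hpq : μ.real p = μ.real q) (hfit : Fits μ K F p q) :
    ∃ p₁, p₁ ⊆ p ∧ IsClopen p₁ ∧ μ.real p₁ = μ.real (q ∩ U) ∧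
      Fits μ K F p₁ (q ∩ U) ∧ Fits μ K F (p \ p₁) (q \ U) := by
  have hsq := real_split (μ := μ) q (clopen_meas hU)
  by_cases hdead : p ∩ K = ∅
  · obtain ⟨p₁, h1, h2, h3⟩ := hμ.exact_subset (hq.inter hU) hp
      (by linarith [measureReal_nonneg (μ := μ) (s := q \ U)])
    refine ⟨p₁, h1, h2, h3, Or.inl ?_, Or.inl ?_⟩
    · exact subset_empty_iff.1 (hdead ▸ inter_subset_inter_left K h1)
    · exact subset_empty_iff.1 (hdead ▸ inter_subset_inter_left K sdiff_subset)
  have hΦ := hfit.resolve_left hdead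
  have hsF : μ.real (q ∩ U ∩ F) + μ.real ((q \ U) ∩ F) = μ.real (q ∩ F) := by
    rw [← real_split (μ := μ) (q ∩ F) (clopen_meas hU), inter_right_comm, sdiff_inter_right_comm]
  have hle1 : μ.real (q ∩ U ∩ F) ≤ μ.real (q ∩ U) := measureReal_mono inter_subset_left
  have hle2 : μ.real ((q \ U) ∩ F) ≤ μ.real (q \ U) := measureReal_mono inter_subset_left
  obtain ⟨D, hD, hKD, hDp, hDm⟩ := clopen_approx (μ := μ) (hp.isClosed.inter hK) hp
    inter_subset_left hΦ
  have hD0 : 0 ≤ μ.real D := measureReal_nonneg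
  obtain ⟨C, hCD, hC, hC1, hC2⟩ : ∃ C, C ⊆ D ∧ IsClopen C ∧
      (C = ∅ ∨ μ.real C < μ.real (q ∩ U ∩ F)) ∧
      (D \ C = ∅ ∨ μ.real (D \ C) < μ.real ((q \ U) ∩ F)) := by
    by_cases h2 : μ.real D < μ.real ((q \ U) ∩ F)
    · exact ⟨∅, empty_subset _, isClopen_empty, Or.inl rfl, Or.inr (by rwa [sdiff_empty])⟩
    by_cases h1 : μ.real D < μ.real (q ∩ U ∩ F)
    · exact ⟨D, Subset.rfl, hD, Or.inr h1, Or.inl Set.sdiff_self⟩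
    have hF2 : 0 < μ.real ((q \ U) ∩ F) := by linarith
    obtain ⟨C, h3, h4, h5, h6⟩ := hμ.intermediate hD (a := μ.real D - μ.real ((q \ U) ∩ F))
      (b := μ.real (q ∩ U ∩ F)) (by linarith) (by linarith) (by linarith)
    refine ⟨C, h3, h4, Or.inr h6, Or.inr ?_⟩
    rw [real_diff (clopen_meas h4) h3]
    linarith
  have hCm : μ.real C ≤ μ.real (q ∩ U) := by
    rcases hC1 with rfl | h
    · simp
    · linarith
  have hDCm : μ.real (D \ C) ≤ μ.real (q \ U) := by
    rcases hC2 with h | h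
    · simp [h]
    · linarith
  have hDC := real_diff (μ := μ) (clopen_meas hC) hCD
  have hpD := real_diff (μ := μ) (clopen_meas hD) hDp
  obtain ⟨W, hWs, hW, hWm⟩ := hμ.fill hC (hp.diff hD) (hq.inter hU)
    (disjoint_sdiff_right.mono_left hCD) hCm (by linarith)
  have hKsub : (C ∪ W) ∩ K ⊆ C := by
    rintro x ⟨h | h, hxK⟩
    · exact h
    · exact ((hWs h).2 (hKD ⟨(hWs h).1, hxK⟩)).elim
  have hKsub2 : (p \ (C ∪ W)) ∩ K ⊆ D \ C := by
    rintro x ⟨⟨hxp, hx⟩, hxK⟩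
    exact ⟨hKD ⟨hxp, hxK⟩, fun h => hx (Or.inl h)⟩
  refine ⟨C ∪ W, union_subset (hCD.trans hDp) (hWs.trans sdiff_subset), hC.union hW, hWm, ?_, ?_⟩
  · rcases hC1 with h | h
    · exact Or.inl (subset_empty_iff.1 (h ▸ hKsub))
    · exact Or.inr ((measureReal_mono hKsub).trans_lt h)
  · rcases hC2 with h | h
    · exact Or.inl (subset_empty_iff.1 (h ▸ hKsub2))
    · exact Or.inr ((measureReal_mono hKsub2).trans_lt h)

end Splitting

/-! ### Cells and reserves -/

section Cells

variable {X : Type*} [TopologicalSpace X] [CompactSpace X] [T2Space X]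
    [TopologicalSpace.MetrizableSpace X] [TotallyDisconnectedSpace X]
    [MeasurableSpace X] [BorelSpace X] {μ : Measure X} [IsFiniteMeasure μ]

/-- A fitting pair of cells splits into four fitting pairs lying on one side of `U`. -/
lemma IsGood.exists_match (hμ : IsGood μ) {K F p q U : Set X} (hK : IsClosed K)
    (hKi : interior K = ∅) (hF : IsClosed F) (hp : IsClopen p) (hq : IsClopen q)
    (hU : IsClopen U) (hpq : μ.real p = μ.real q) (hfit : Fits μ K F p q) :
    ∃ P Q : Bool × Bool → Set X, (∀ i, IsClopen (P i) ∧ IsClopen (Q i) ∧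
        μ.real (P i) = μ.real (Q i) ∧ Fits μ K F (P i) (Q i) ∧
        Decided U (P i) ∧ Decided U (Q i)) ∧
      ⋃ i, P i = p ∧ ⋃ i, Q i = q ∧
      (∀ i j x, x ∈ P i → x ∈ P j → i = j) ∧ (∀ i j x, x ∈ Q i → x ∈ Q j → i = j) := by
  obtain ⟨q₁, hq1, hq1c, hm, hf1, hf2⟩ := hμ.cut_left hK hKi hF hp hq hU hpq hfit
  have hm' : μ.real (p \ U) = μ.real (q \ q₁) := by
    have h1 := real_split (μ := μ) p (clopen_meas hU)
    have h2 := real_diff (μ := μ) (clopen_meas hq1c) hq1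
    linarith
  obtain ⟨a, ha, hac, ham, haf, haf'⟩ := hμ.cut_right hK (hp.inter hU) hq1c hU hm hf1
  obtain ⟨b, hb, hbc, hbm, hbf, hbf'⟩ := hμ.cut_right hK (hp.diff hU) (hq.diff hq1c) hU hm' hf2
  have ham' : μ.real ((p ∩ U) \ a) = μ.real (q₁ \ U) := by
    have h1 := real_split (μ := μ) q₁ (clopen_meas hU)
    have h2 := real_diff (μ := μ) (clopen_meas hac) ha
    linarith
  have hbm' : μ.real ((p \ U) \ b) = μ.real ((q \ q₁) \ U) := by
    have h1 := real_split (μ := μ) (q \ q₁) (clopen_meas hU)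
    have h2 := real_diff (μ := μ) (clopen_meas hbc) hb
    linarith
  let P : Bool × Bool → Set X := fun i =>
    if i.1 then (if i.2 then a else (p ∩ U) \ a) else (if i.2 then b else (p \ U) \ b)
  let Q : Bool × Bool → Set X := fun i =>
    if i.1 then (if i.2 then q₁ ∩ U else q₁ \ U) else
      (if i.2 then (q \ q₁) ∩ U else (q \ q₁) \ U)
  refine ⟨P, Q, ?_, ?_, ?_, ?_, ?_⟩
  · rintro ⟨_ | _, _ | _⟩
    · exact ⟨(hp.diff hU).diff hbc, (hq.diff hq1c).diff hU, hbm', hbf',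
        Or.inr (disjoint_sdiff_left.mono_left sdiff_subset), Or.inr disjoint_sdiff_left⟩
    · exact ⟨hbc, (hq.diff hq1c).inter hU, hbm, hbf,
        Or.inr (disjoint_sdiff_left.mono_left hb), Or.inl inter_subset_right⟩
    · exact ⟨(hp.inter hU).diff hac, hq1c.diff hU, ham', haf',
        Or.inl (sdiff_subset.trans inter_subset_right), Or.inr disjoint_sdiff_left⟩
    · exact ⟨hac, hq1c.inter hU, ham, haf, Or.inl (ha.trans inter_subset_right),
        Or.inl inter_subset_right⟩
  · ext x
    have h1 := @ha x
    have h2 := @hb x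
    simp only [mem_iUnion, Prod.exists, Bool.exists_bool, P, mem_inter_iff, mem_sdiff] at h1 h2 ⊢
    simp
    tauto
  · ext x
    have h1 := @hq1 x
    simp only [mem_iUnion, Prod.exists, Bool.exists_bool, Q] at h1 ⊢
    simp
    tauto
  · rintro ⟨_ | _, _ | _⟩ ⟨_ | _, _ | _⟩ x hx hy <;>
    · have h1 := @ha x
      have h2 := @hb x
      simp [P] at h1 h2 hx hy ⊢
      try tauto
  · rintro ⟨_ | _, _ | _⟩ ⟨_ | _, _ | _⟩ x hx hy <;>
    · have h1 := @hq1 x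
      simp [Q] at h1 hx hy ⊢
      try tauto

/-- A null set is covered by an increasing sequence of clopen sets with small union. -/
lemma exists_clopen_exhaustion {M : Set X} (hM : μ M = 0) {δ : ℝ} (hδ : 0 < δ) :
    ∃ D : ℕ → Set X, (∀ n, IsClopen (D n)) ∧ Monotone D ∧ M ⊆ ⋃ n, D n ∧
      μ.real (⋃ n, D n) < δ := by
  let _ := TopologicalSpace.metrizableSpaceMetric X
  obtain ⟨O, hMO, hO, hOm⟩ := M.exists_isOpen_lt_of_lt (μ := μ) (ENNReal.ofReal δ)
    (by rw [hM]; exact ENNReal.ofReal_pos.2 hδ)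
  obtain ⟨F, hF, hFO, hFU, -⟩ := hO.exists_iUnion_isClosed
  choose C hC hFC hCO using fun n => exists_clopen_of_closed_subset_open (hF n) hO (hFO n)
  have hsub : ⋃ n, accumulate C n ⊆ O := by
    rw [iUnion_accumulate]
    exact iUnion_subset hCO
  refine ⟨accumulate C, ?_, monotone_accumulate, ?_, ?_⟩
  · intro n
    rw [accumulate_def]
    exact (finite_Iic n).isClopen_biUnion fun i _ => hC i
  · rw [iUnion_accumulate]
    refine hMO.trans ?_
    rw [← hFU]
    exact iUnion_mono hFC
  · exact (ENNReal.lt_ofReal_iff_toReal_lt (measure_ne_top _ _)).1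
      ((measure_mono hsub).trans_lt hOm)

variable {Z : Type*} [MetricSpace Z]

/-- A node of the construction: a left cell `p` and a right cell `q`, an open set `V` of parameters
for points of `q`, a reserve `(Vs, qs)` for the next parameter set, and an increasing sequence `D`
whose union is to be moved into the reserves. -/
structure Cell (X Z : Type*) where
  p : Set X
  q : Set X
  V : Set Z
  Vs : Set Z
  qs : Set X
  D : ℕ → Set X

/-- The requirements on a cell whose left side meets `K`. The part of `K` in `p` fits into
`closure (f '' V)` outside the reserve `qs`, and the part of `K` in `⋃ n, D n` fits into the
reserve. -/
structure Live (μ : Measure X) (f : Z → X) (K M : Set X) (s : Cell X Z) : Prop where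
  oV : IsOpen s.V
  oVs : IsOpen s.Vs
  neVs : s.Vs.Nonempty
  subV : s.Vs ⊆ s.V
  cqs : IsClopen s.qs
  subq : s.qs ⊆ s.q
  img : f '' s.Vs ⊆ s.qs
  cD : ∀ n, IsClopen (s.D n)
  monoD : Monotone s.D
  covM : M ∩ s.p ⊆ ⋃ n, s.D n
  fitD : μ.real ((⋃ n, s.D n) ∩ (s.p ∩ K)) < μ.real (closure (f '' s.Vs))
  fitK : μ.real (s.p ∩ K) < μ.real ((s.q \ s.qs) ∩ closure (f '' s.V))

/-- Both sides are clopen of equal measure, and the cell is live unless `p` misses `K`. -/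
structure Valid (μ : Measure X) (f : Z → X) (K M : Set X) (s : Cell X Z) : Prop where
  cp : IsClopen s.p
  cq : IsClopen s.q
  meq : μ.real s.p = μ.real s.q
  live : s.p ∩ K = ∅ ∨ Live μ f K M s

/-- Any two points of `A` are at distance less than `1 / (n + 1)`. -/
def Mesh (n : ℕ) (A : Set Z) : Prop := ∀ a ∈ A, ∀ b ∈ A, dist a b < 1 / ((n : ℝ) + 1)

/-- The relation between a cell and its successors at stage `n`. A successor meeting `K` either
keeps its parameter set and has lost the points of `K` in `s.D n`, or passes to the reserved
parameter set. -/
def Rel (K : Set X) (n : ℕ) (s t : Cell X Z) : Prop :=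
  t.p ∩ K = ∅ ∨ (Mesh n t.Vs ∧
    ((t.V = s.V ∧ t.D = s.D ∧ Disjoint (t.p ∩ K) (s.D n)) ∨ t.V = s.Vs))

/-- A small reserve fits into the slack of a fitting pair. -/
lemma IsGood.exists_reserve (hμ : IsGood μ) {f : Z → X} (hf : Continuous f) {V : Set Z}
    (hV : IsOpen V) {q : Set X} (hq : IsClopen q) {c : ℝ} (hc0 : 0 ≤ c)
    (hc : c < μ.real (q ∩ closure (f '' V))) (n : ℕ) :
    ∃ (Vs : Set Z) (qs : Set X), IsOpen Vs ∧ Vs.Nonempty ∧ Vs ⊆ V ∧ IsClopen qs ∧ qs ⊆ q ∧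
      f '' Vs ⊆ qs ∧ Mesh n Vs ∧ c < μ.real ((q \ qs) ∩ closure (f '' V)) := by
  have hne : (q ∩ closure (f '' V)).Nonempty := by
    by_contra h
    rw [not_nonempty_iff_eq_empty] at h
    rw [h, measureReal_empty] at hc
    linarith
  obtain ⟨x, hxq, hx⟩ := hne
  obtain ⟨_, hyq, z, hz, rfl⟩ := mem_closure_iff.1 hx q hq.isOpen hxq
  obtain ⟨qs, h1, h2, h3, h4⟩ := hμ.small_nhd hq hyq (sub_pos.2 hc)
  have hr : (0 : ℝ) < 1 / ((n : ℝ) + 1) / 2 := by positivity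
  refine ⟨V ∩ f ⁻¹' qs ∩ Metric.ball z (1 / ((n : ℝ) + 1) / 2), qs,
    (hV.inter (h1.isOpen.preimage hf)).inter Metric.isOpen_ball,
    ⟨z, ⟨hz, h2⟩, Metric.mem_ball_self hr⟩, fun y hy => hy.1.1, h1, h3, ?_, ?_, ?_⟩
  · rintro _ ⟨y, hy, rfl⟩
    exact hy.1.2
  · intro a ha b hb
    have h5 := Metric.mem_ball.1 ha.2
    have h6 := Metric.mem_ball.1 hb.2
    have h7 := dist_triangle_right a b z
    linarith
  · have h5 : q ∩ closure (f '' V) ⊆ (q \ qs) ∩ closure (f '' V) ∪ qs := by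
      rintro y ⟨h, h'⟩
      by_cases hy : y ∈ qs
      · exact Or.inr hy
      · exact Or.inl ⟨⟨h, hy⟩, h'⟩
    have h6 := (measureReal_mono (μ := μ) h5).trans (measureReal_union_le _ _)
    linarith

/-- The standing hypotheses on the source sets `K ⊇ M` and the parametrization `f`. -/
structure Setup (μ : Measure X) (f : Z → X) (K M : Set X) : Prop where
  good : IsGood μ
  cont : Continuous f
  fat : ∀ V : Set Z, IsOpen V → V.Nonempty → 0 < μ (closure (f '' V))
  closedK : IsClosed K
  intK : interior K = ∅
  nullM : μ M = 0

lemma Setup.real_fat {f : Z → X} {K M : Set X} (h : Setup μ f K M) {V : Set Z} (hV : IsOpen V)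
    (hn : V.Nonempty) : 0 < μ.real (closure (f '' V)) :=
  ENNReal.toReal_pos (h.fat V hV hn).ne' (measure_ne_top _ _)

/-- A fitting pair is the underlying pair of a valid cell. -/
lemma Setup.exists_cell {f : Z → X} {K M : Set X} (h : Setup μ f K M) {p q : Set X} {V : Set Z}
    (hV : IsOpen V) (hp : IsClopen p) (hq : IsClopen q) (hpq : μ.real p = μ.real q)
    (hfit : Fits μ K (closure (f '' V)) p q) (n : ℕ) :
    ∃ t : Cell X Z, t.p = p ∧ t.q = q ∧ Valid μ f K M t ∧
      (t.p ∩ K = ∅ ∨ (Mesh n t.Vs ∧ t.V = V)) := by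
  rcases hfit with h0 | h1
  · exact ⟨⟨p, q, V, V, ∅, fun _ => ∅⟩, rfl, rfl, ⟨hp, hq, hpq, Or.inl h0⟩, Or.inl h0⟩
  · obtain ⟨Vs, qs, a1, a2, a3, a4, a5, a6, a7, a8⟩ :=
      h.good.exists_reserve h.cont hV hq measureReal_nonneg h1 n
    obtain ⟨D, b1, b2, b3, b4⟩ := exists_clopen_exhaustion h.nullM (h.real_fat a1 a2)
    refine ⟨⟨p, q, V, Vs, qs, D⟩, rfl, rfl, ⟨hp, hq, hpq, Or.inr ?_⟩, Or.inr ⟨a7, rfl⟩⟩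
    exact ⟨hV, a1, a2, a3, a4, a5, a6, b1, b2, inter_subset_left.trans b3,
      (measureReal_mono inter_subset_left).trans_lt b4, a8⟩

/-- A fitting pair splits into valid cells on one side of `U`, with the same parameter set. -/
lemma Setup.fresh {f : Z → X} {K M : Set X} (h : Setup μ f K M) {p q U : Set X} {V : Set Z}
    (hV : IsOpen V) (hp : IsClopen p) (hq : IsClopen q) (hU : IsClopen U)
    (hpq : μ.real p = μ.real q) (hfit : Fits μ K (closure (f '' V)) p q) (n : ℕ) :
    ∃ T : Set (Cell X Z), IsPart Cell.p Cell.q p q T ∧ ∀ t ∈ T, Valid μ f K M t ∧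
      Decided U t.p ∧ Decided U t.q ∧ (t.p ∩ K = ∅ ∨ (Mesh n t.Vs ∧ t.V = V)) := by
  obtain ⟨P, Q, hi, hP, hQ, dP, dQ⟩ :=
    h.good.exists_match h.closedK h.intK isClosed_closure hp hq hU hpq hfit
  choose t h1 h2 h3 h4 using fun i => h.exists_cell hV (hi i).1 (hi i).2.1 (hi i).2.2.1
    (hi i).2.2.2.1 n
  refine ⟨range t, IsPart.range t ?_ ?_ ?_ ?_, ?_⟩
  · simpa only [h1] using hP
  · simpa only [h2] using hQ
  · simpa only [h1] using dP
  · simpa only [h2] using dQ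
  · rintro _ ⟨i, rfl⟩
    exact ⟨h3 i, (h1 i).symm ▸ (hi i).2.2.2.2.1, (h2 i).symm ▸ (hi i).2.2.2.2.2, h4 i⟩

end Cells

/-! ### Subdivision of live cells and the homeomorphism -/

section Step

variable {X : Type*} [TopologicalSpace X] [CompactSpace X] [T2Space X]
    [TopologicalSpace.MetrizableSpace X] [TotallyDisconnectedSpace X]
    [MeasurableSpace X] [BorelSpace X] {μ : Measure X} [IsFiniteMeasure μ]
    {Z : Type*} [MetricSpace Z]

lemma exists_tail {D : ℕ → Set X} (hD : ∀ n, IsClopen (D n)) (hmono : Monotone D) {A : Set X}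
    {η : ℝ} (hη : 0 < η) (n : ℕ) :
    ∃ k, n ≤ k ∧ μ.real (((⋃ n, D n) ∩ A) \ D k) < η := by
  have h1 : Filter.Tendsto (fun k => μ.real (D k ∩ A)) Filter.atTop
      (nhds (μ.real ((⋃ n, D n) ∩ A))) := by
    rw [iUnion_inter]
    exact (ENNReal.tendsto_toReal (measure_ne_top _ _)).comp
      (tendsto_measure_iUnion_atTop fun i j hij => inter_subset_inter_left A (hmono hij))
  obtain ⟨k, hk, hnk⟩ := ((h1.eventually (lt_mem_nhds (sub_lt_self _ hη))).and
    (Filter.eventually_ge_atTop n)).exists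
  refine ⟨k, hnk, ?_⟩
  have h2 := real_split (μ := μ) ((⋃ n, D n) ∩ A) (clopen_meas (hD k))
  have h3 : (⋃ n, D n) ∩ A ∩ D k = D k ∩ A := by
    ext x
    have := fun h : x ∈ D k => mem_iUnion.2 ⟨k, h⟩
    simp only [mem_inter_iff]
    tauto
  rw [h3] at h2
  linarith

lemma union_three {α : Type*} {A B C p : Set α} (hC : C ⊆ A) (hA : A ⊆ p) (hB : B ⊆ p \ A) :
    (A \ C) ∪ ((C ∪ B) ∪ ((p \ A) \ B)) = p := by
  ext x
  have h1 := @hC x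
  have h2 := @hA x
  have h3 := @hB x
  simp only [mem_union, mem_sdiff] at *
  tauto

/-- A live cell can be subdivided. The right side outside the reserve is matched with a neighbourhood
`p₀` of `K` in `p`. After new reserves have been chosen in the resulting pieces, a clopen `C ⊆ p₀` is
removed, so large that what remains of `⋃ n, D n` fits into the new reserves. The set `C`, padded
by a set missing `K`, is matched with the old reserve; the measure lost is compensated by pairing
pieces that miss `K` with subsets `g i` of the right cells. -/
lemma Setup.live_step {f : Z → X} {K M : Set X} (h : Setup μ f K M) {s : Cell X Z}
    (hs : Valid μ f K M s) (hl : Live μ f K M s) {U : Set X} (hU : IsClopen U) (n : ℕ) :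
    ∃ T : Set (Cell X Z), IsPart Cell.p Cell.q s.p s.q T ∧ ∀ t ∈ T, Valid μ f K M t ∧
      Rel K n s t ∧ Decided U t.p ∧ Decided U t.q := by
  obtain ⟨p, q, V, Vs, qs, D⟩ := s
  obtain ⟨hp, hq, hpq, -⟩ := hs
  obtain ⟨oV, oVs, neVs, subV, cqs, subq, img, cD, monoD, covM, fitD, fitK⟩ := hl
  dsimp only at *
  have hK := h.closedK
  set F := closure (f '' V) with hFdef
  have hqq := real_diff (μ := μ) (clopen_meas cqs) subq
  have hq' : IsClopen (q \ qs) := hq.diff cqs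
  -- `p₀` is a neighbourhood of `p ∩ K` of the measure of `q \ qs`
  obtain ⟨p₀, hp0, hp0p, hKp0, hp0m⟩ : ∃ p₀, IsClopen p₀ ∧ p₀ ⊆ p ∧ p ∩ K ⊆ p₀ ∧
      μ.real p₀ = μ.real (q \ qs) := by
    obtain ⟨E, hE, hKE, hEp, hEm⟩ := clopen_approx (μ := μ) (hp.isClosed.inter hK) hp
      inter_subset_left (fitK.trans_le (measureReal_mono inter_subset_left))
    have h1 := real_diff (μ := μ) (clopen_meas hE) hEp
    obtain ⟨W, hW, hWc, hWm⟩ := h.good.fill hE (hp.diff hE) hq' disjoint_sdiff_right hEm.le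
      (by linarith [measureReal_nonneg (μ := μ) (s := qs)])
    exact ⟨E ∪ W, hE.union hWc, union_subset hEp (hW.trans sdiff_subset),
      hKE.trans subset_union_left, hWm⟩
  have hp0K : p₀ ∩ K = p ∩ K :=
    Subset.antisymm (inter_subset_inter_left _ hp0p) (subset_inter hKp0 inter_subset_right)
  obtain ⟨P, Q, hi, hP, hQ, dP, dQ⟩ := h.good.exists_match hK h.intK (isClosed_closure (s := f '' V))
    hp0 hq' hU hp0m (Or.inr (by rw [hp0K]; exact fitK))
  have hPp : ∀ i, P i ⊆ p₀ := fun i => hP ▸ subset_iUnion P i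
  have hQq : ∀ i, Q i ⊆ q \ qs := fun i => hQ ▸ subset_iUnion Q i
  -- new reserves with a margin
  have hres : ∀ i, ∃ (Ws : Set Z) (rs : Set X) (η : ℝ), 0 < η ∧ IsClopen rs ∧ rs ⊆ Q i ∧
      ((P i ∩ K = ∅ ∧ rs = ∅) ∨ (IsOpen Ws ∧ Ws.Nonempty ∧ Ws ⊆ V ∧ f '' Ws ⊆ rs ∧ Mesh n Ws ∧
        η ≤ μ.real (closure (f '' Ws)) ∧
        μ.real (P i ∩ K) + η ≤ μ.real ((Q i \ rs) ∩ F))) := by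
    intro i
    rcases (hi i).2.2.2.1 with h0 | h1
    · exact ⟨∅, ∅, 1, one_pos, isClopen_empty, empty_subset _, Or.inl ⟨h0, rfl⟩⟩
    · obtain ⟨Ws, rs, a1, a2, a3, a4, a5, a6, a7, a8⟩ :=
        h.good.exists_reserve h.cont oV (hi i).2.1 measureReal_nonneg h1 n
      refine ⟨Ws, rs, _, lt_min (h.real_fat a1 a2) (sub_pos.2 a8), a4, a5,
        Or.inr ⟨a1, a2, a3, a6, a7, min_le_left _ _, ?_⟩⟩
      linarith [min_le_right (μ.real (closure (f '' Ws)))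
        (μ.real ((Q i \ rs) ∩ closure (f '' V)) - μ.real (P i ∩ K))]
  choose Ws rs η' hη' crs rsQ hWs using hres
  obtain ⟨η, hη, hηi, hη0⟩ : ∃ η > 0, (∀ i, η ≤ η' i) ∧
      η ≤ μ.real (closure (f '' Vs)) - μ.real ((⋃ n, D n) ∩ (p ∩ K)) := by
    obtain ⟨i₀, h0⟩ := Finite.exists_min η'
    exact ⟨_, lt_min (hη' i₀) (sub_pos.2 fitD), fun i => (min_le_left _ _).trans (h0 i),
      min_le_right _ _⟩
  have hpKm : MeasurableSet (p ∩ K) := (hp.isClosed.inter hK).measurableSet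
  obtain ⟨k, hnk, hk⟩ := exists_tail (μ := μ) cD monoD (A := p ∩ K) hη n
  obtain ⟨L, hL, hKL, hLp, hLm⟩ := clopen_approx (μ := μ) (hp.isClosed.inter hK) hp0 hKp0
    (r := μ.real (p ∩ K) + η) (by linarith)
  set C := D k ∩ L with hCdef
  have hC : IsClopen C := (cD k).inter hL
  have hCp0 : C ⊆ p₀ := inter_subset_right.trans hLp
  have hCK : μ.real (C \ K) < η := by
    have h1 := real_diff (μ := μ) hpKm hKL
    have h2 : μ.real (C \ K) ≤ μ.real (L \ (p ∩ K)) := by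
      refine measureReal_mono ?_
      rintro x ⟨hx, hxK⟩
      exact ⟨hx.2, fun h => hxK h.2⟩
    linarith
  have hCK' : μ.real (C ∩ K) ≤ μ.real ((⋃ n, D n) ∩ (p ∩ K)) := by
    refine measureReal_mono ?_
    rintro x ⟨hx, hxK⟩
    exact ⟨mem_iUnion.2 ⟨k, hx.1⟩, hp0p (hCp0 hx), hxK⟩
  have himgcl : closure (f '' Vs) ⊆ qs := closure_minimal img cqs.isClosed
  have hVsqs : μ.real (closure (f '' Vs)) ≤ μ.real qs := measureReal_mono himgcl
  have hCsplit := real_split (μ := μ) C hK.measurableSet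
  have hpp0 := real_diff (μ := μ) (clopen_meas hp0) hp0p
  obtain ⟨w, hw, cw, hwm⟩ := h.good.fill hC (hp.diff hp0) cqs
    (disjoint_sdiff_right.mono_left hCp0) (by linarith)
    (by linarith [measureReal_nonneg (μ := μ) (s := C)])
  have hwK : w ∩ K = ∅ := by
    rw [← subset_empty_iff]
    rintro x ⟨hx, hxK⟩
    exact (hw hx).2 (hKp0 ⟨(hw hx).1, hxK⟩)
  -- the sets of measure `μ (C ∩ P i)` given up by the right cells
  have hg : ∀ i, ∃ g, g ⊆ Q i \ rs i ∧ IsClopen g ∧ μ.real g = μ.real (C ∩ P i) := by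
    intro i
    refine h.good.exact_subset (hC.inter (hi i).1) ((hi i).2.1.diff (crs i)) ?_
    rcases hWs i with ⟨-, h0⟩ | ⟨-, -, -, -, -, -, h1⟩
    · rw [h0, sdiff_empty, ← (hi i).2.2.1]
      exact measureReal_mono inter_subset_right
    · have h2 := real_split (μ := μ) (C ∩ P i) hK.measurableSet
      have h3 : μ.real (C ∩ P i ∩ K) ≤ μ.real (P i ∩ K) :=
        measureReal_mono (inter_subset_inter_left _ inter_subset_right)
      have h4 : μ.real ((C ∩ P i) \ K) ≤ μ.real (C \ K) :=
        measureReal_mono (sdiff_subset_sdiff_left inter_subset_left)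
      have h5 : μ.real ((Q i \ rs i) ∩ F) ≤ μ.real (Q i \ rs i) :=
        measureReal_mono inter_subset_left
      linarith [hηi i]
  choose g hgQ cg hgm using hg
  have hgsub : ⋃ i, g i ⊆ q \ qs :=
    iUnion_subset fun i => (hgQ i).trans (sdiff_subset.trans (hQq i))
  have cgU : IsClopen (⋃ i, g i) := isClopen_iUnion_of_finite cg
  have hgU : μ.real (⋃ i, g i) = μ.real C := by
    have e1 : C = ⋃ i, C ∩ P i := by
      rw [← inter_iUnion, hP, inter_eq_left.2 hCp0]
    have e2 : μ (⋃ i, g i) = μ (⋃ i, C ∩ P i) := by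
      rw [measure_iUnion, measure_iUnion]
      · congr 1
        ext i
        exact (ENNReal.toReal_eq_toReal_iff' (measure_ne_top _ _) (measure_ne_top _ _)).1 (hgm i)
      · intro i j hij
        exact disjoint_left.2 fun x hx hy => hij (dP i j x hx.2 hy.2)
      · exact fun i => clopen_meas (hC.inter (hi i).1)
      · intro i j hij
        exact disjoint_left.2 fun x hx hy => hij (dQ i j x (hgQ i hx).1 (hgQ j hy).1)
      · exact fun i => clopen_meas (cg i)
    rw [← e1] at e2
    simp only [Measure.real, e2]
  -- the three families of successors
  let t : Bool × Bool → Cell X Z := fun i => ⟨P i \ C, Q i \ g i, V, Ws i, rs i, D⟩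
  have hpart1 : IsPart Cell.p Cell.q (p₀ \ C) ((q \ qs) \ ⋃ i, g i) (range t) := by
    refine IsPart.range t ?_ ?_ ?_ ?_
    · rw [← hP, iUnion_sdiff]
    · ext x
      simp only [mem_iUnion, t, mem_sdiff, ← hQ]
      constructor
      · rintro ⟨i, h1, h2⟩
        refine ⟨⟨i, h1⟩, ?_⟩
        rintro ⟨j, hj⟩
        rw [dQ i j x h1 (hgQ j hj).1] at h2
        exact h2 hj
      · rintro ⟨⟨i, h1⟩, h2⟩
        exact ⟨i, h1, fun h3 => h2 ⟨i, h3⟩⟩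
    · exact fun i j x hx hy => dP i j x hx.1 hy.1
    · exact fun i j x hx hy => dQ i j x hx.1 hy.1
  have hval1 : ∀ u ∈ range t, Valid μ f K M u ∧
      Rel K n ⟨p, q, V, Vs, qs, D⟩ u ∧ Decided U u.p ∧ Decided U u.q := by
    rintro _ ⟨i, rfl⟩
    have hdis : Disjoint ((P i \ C) ∩ K) (D n) := by
      rw [disjoint_left]
      rintro x ⟨⟨hx, hxC⟩, hxK⟩ hxD
      exact hxC ⟨monoD hnk hxD, hKL ⟨hp0p (hPp i hx), hxK⟩⟩
    have hPC := real_split (μ := μ) (P i) (clopen_meas hC)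
    have hQg := real_diff (μ := μ) (clopen_meas (cg i)) ((hgQ i).trans sdiff_subset)
    refine ⟨⟨(hi i).1.diff hC, (hi i).2.1.diff (cg i), ?_, ?_⟩, ?_,
      (hi i).2.2.2.2.1.mono sdiff_subset, (hi i).2.2.2.2.2.mono sdiff_subset⟩
    · change μ.real (P i \ C) = μ.real (Q i \ g i)
      rw [hQg, hgm, ← (hi i).2.2.1, inter_comm C]
      linarith
    · rcases hWs i with ⟨h0, -⟩ | ⟨a1, a2, a3, a4, -, a6, a7⟩
      · exact Or.inl (subset_empty_iff.1 (h0 ▸ inter_subset_inter_left K sdiff_subset))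
      · refine Or.inr ⟨oV, a1, a2, a3, crs i, ?_, a4, cD, monoD, ?_, ?_, ?_⟩
        · exact fun x hx => ⟨rsQ i hx, fun hxg => (hgQ i hxg).2 hx⟩
        · exact (inter_subset_inter_right _ (sdiff_subset.trans ((hPp i).trans hp0p))).trans covM
        · refine (measureReal_mono ?_).trans_lt (hk.trans_le ((hηi i).trans a6))
          rintro x ⟨hxD, hx, hxK⟩
          have hxp := hp0p (hPp i hx.1)
          exact ⟨⟨hxD, hxp, hxK⟩, fun hx' => hx.2 ⟨hx', hKL ⟨hxp, hxK⟩⟩⟩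
        · change μ.real ((P i \ C) ∩ K) < μ.real (((Q i \ g i) \ rs i) ∩ F)
          have h1 := real_split (μ := μ) ((Q i \ rs i) ∩ F) (clopen_meas (cg i))
          have h2 : ((Q i \ rs i) ∩ F) \ g i = ((Q i \ g i) \ rs i) ∩ F := by
            ext x
            simp only [mem_inter_iff, mem_sdiff]
            tauto
          have h3 : μ.real ((Q i \ rs i) ∩ F ∩ g i) ≤ μ.real (g i) :=
            measureReal_mono inter_subset_right
          have h4 := real_split (μ := μ) (P i ∩ K) (clopen_meas hC)
          have h5 : (P i ∩ K) \ C = (P i \ C) ∩ K := by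
            ext x
            simp only [mem_inter_iff, mem_sdiff]
            tauto
          have h6 := real_split (μ := μ) (C ∩ P i) hK.measurableSet
          have h7 : C ∩ P i ∩ K = P i ∩ K ∩ C := by
            ext x
            simp only [mem_inter_iff]
            tauto
          have h8 : μ.real ((C ∩ P i) \ K) ≤ μ.real (C \ K) :=
            measureReal_mono (sdiff_subset_sdiff_left inter_subset_left)
          rw [h2] at h1
          rw [h5] at h4
          rw [h7] at h6
          linarith [hηi i, hgm i]
    · rcases hWs i with ⟨h0, -⟩ | ⟨-, -, -, -, a5, -, -⟩
      · exact Or.inl (subset_empty_iff.1 (h0 ▸ inter_subset_inter_left K sdiff_subset))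
      · exact Or.inr ⟨a5, Or.inl ⟨rfl, rfl, hdis⟩⟩
  obtain ⟨T₂, hpart2, hval2⟩ := h.fresh oVs (hC.union cw) cqs hU hwm (n := n) (by
    right
    rw [union_inter_distrib_right, hwK, union_empty, inter_eq_right.2 himgcl]
    linarith)
  have hrest : μ.real ((p \ p₀) \ w) = μ.real (⋃ i, g i) := by
    rw [measureReal_union (disjoint_sdiff_right.mono hCp0 hw) (clopen_meas cw)] at hwm
    rw [real_diff (clopen_meas cw) hw, hgU]
    linarith
  have hrestK : ((p \ p₀) \ w) ∩ K = ∅ := by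
    rw [← subset_empty_iff]
    rintro x ⟨hx, hxK⟩
    exact hx.1.2 (hKp0 ⟨hx.1.1, hxK⟩)
  obtain ⟨T₃, hpart3, hval3⟩ := h.fresh oV ((hp.diff hp0).diff cw) cgU hU hrest (n := n)
    (Or.inl hrestK)
  refine ⟨range t ∪ (T₂ ∪ T₃), ?_, ?_⟩
  · have e1 := union_three hCp0 hp0p hw
    have e2 : ((q \ qs) \ ⋃ i, g i) ∪ (qs ∪ ⋃ i, g i) = q := by
      ext x
      have h1 := @hgsub x
      have h2 := @subq x
      simp only [mem_union, mem_sdiff] at *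
      tauto
    have h23 := hpart2.union hpart3
      (disjoint_left.2 fun x hx hx' => hx.elim (fun h => hx'.1.2 (hCp0 h)) fun h => hx'.2 h)
      (disjoint_left.2 fun x hx hx' => (hgsub hx').2 hx)
    have h123 := hpart1.union h23
      (disjoint_left.2 fun x hx hx' => hx'.elim
        (fun h => h.elim (fun h => hx.2 h) (fun h => (hw h).2 hx.1)) fun h => h.1.2 hx.1)
      (disjoint_left.2 fun x hx hx' => hx'.elim (fun h => hx.1.2 h) fun h => hx.2 h)
    rwa [e1, e2] at h123
  · rintro u (hu | hu | hu)
    · exact hval1 u hu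
    · obtain ⟨a1, a2, a3, a4⟩ := hval2 u hu
      exact ⟨a1, a4.imp id fun h => ⟨h.1, Or.inr h.2⟩, a2, a3⟩
    · obtain ⟨a1, a2, a3, -⟩ := hval3 u hu
      refine ⟨a1, Or.inl (subset_empty_iff.1 ?_), a2, a3⟩
      rw [← hrestK]
      exact inter_subset_inter_left _ (hpart3.subP u hu)

/-- A null subset `M` of a closed nowhere dense set `K` can be moved into the range of `f` if `K` is
smaller than the closure of that range. -/
theorem Setup.exists_homeo [CompleteSpace Z] [Nonempty Z] {f : Z → X} {K M : Set X}
    (h : Setup μ f K M) (hMK : M ⊆ K) (hlt : μ.real K < μ.real (closure (range f))) :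
    ∃ e : X ≃ₜ X, (∀ A : Set X, MeasurableSet A → μ (e '' A) = μ A) ∧ ∀ x ∈ M, e x ∈ range f := by
  have hc : Countable (TopologicalSpace.Clopens X) :=
    TopologicalSpace.Clopens.countable_iff_secondCountable.2 inferInstance
  obtain ⟨U', hU'⟩ := exists_surjective_nat (TopologicalSpace.Clopens X)
  let U : ℕ → Set X := fun n => U' n
  have hUc : ∀ n, IsClopen (U n) := fun n => (U' n).isClopen
  have hU : ∀ W : Set X, IsClopen W → ∃ n, U n = W := by
    intro W hW
    obtain ⟨n, hn⟩ := hU' ⟨W, hW⟩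
    exact ⟨n, by simp [U, hn]⟩
  obtain ⟨s₀, hp₀, hq₀, hv₀, -⟩ := h.exists_cell (V := univ) isOpen_univ isClopen_univ isClopen_univ
    rfl (by right; simpa using hlt) 0
  have hmeas : ∀ s : Cell X Z, Valid μ f K M s → μ s.p = μ s.q := fun s hs =>
    (ENNReal.toReal_eq_toReal_iff' (measure_ne_top _ _) (measure_ne_top _ _)).1 hs.meq
  obtain ⟨e, he, hbr⟩ := exists_homeo_of_scheme μ h.good.pos U hU (Cell.p) (Cell.q)
    (Valid μ f K M) (Rel K) (fun s hs => hs.cp) (fun s hs => hs.cq) hmeas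
    (by
      intro n s hs
      rcases hs.live with h0 | hl
      · obtain ⟨T, hT, hT'⟩ := h.fresh (V := univ) isOpen_univ hs.cp hs.cq (hUc n) hs.meq
          (Or.inl h0) n
        refine ⟨T, hT, fun t ht => ⟨(hT' t ht).1, Or.inl ?_, (hT' t ht).2.1, (hT' t ht).2.2.1⟩⟩
        exact subset_empty_iff.1 (h0 ▸ inter_subset_inter_left K (hT.subP t ht))
      · exact h.live_step hs hl (hUc n) n)
    s₀ hv₀ hp₀ hq₀
  refine ⟨e, he, ?_⟩
  intro x hx
  obtain ⟨σ, -, hval, hrel, hP, hQ, hQs, hdec⟩ := hbr x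
  have hnd : ∀ n, ¬ (σ n).p ∩ K = ∅ := fun n h0 => by
    have : x ∈ (σ n).p ∩ K := ⟨hP n, hMK hx⟩
    rw [h0] at this
    exact this
  have hlive : ∀ n, Live μ f K M (σ n) := fun n => (hval n).live.resolve_left (hnd n)
  have hR : ∀ n, Mesh n (σ (n + 1)).Vs ∧ (((σ (n + 1)).V = (σ n).V ∧ (σ (n + 1)).D = (σ n).D ∧
      Disjoint ((σ (n + 1)).p ∩ K) ((σ n).D n)) ∨ (σ (n + 1)).V = (σ n).Vs) :=
    fun n => (hrel n).resolve_left (hnd (n + 1))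
  have hVanti : Antitone fun n => (σ n).V := by
    refine antitone_nat_of_succ_le fun n => ?_
    rcases (hR n).2 with h1 | h1
    · exact h1.1.le
    · exact h1.le.trans (hlive n).subV
  -- the branch passes to the reserved parameter set infinitely often, because `x` lies in some `D k`
  have hinf : ∀ N, ∃ n ≥ N, (σ (n + 1)).V = (σ n).Vs := by
    intro N
    by_contra hcon
    push Not at hcon
    have h1 : ∀ n ≥ N, (σ (n + 1)).D = (σ n).D ∧ Disjoint ((σ (n + 1)).p ∩ K) ((σ n).D n) :=
      fun n hn => ((hR n).2.resolve_right (hcon n hn)).2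
    have h2 : ∀ n ≥ N, (σ n).D = (σ N).D := by
      intro n hn
      induction n, hn using Nat.le_induction with
      | base => rfl
      | succ n hn ih => rw [(h1 n hn).1, ih]
    obtain ⟨k, hk⟩ := mem_iUnion.1 ((hlive N).covM ⟨hx, hP N⟩)
    have h3 := (h1 (max N k) (le_max_left _ _)).2
    rw [h2 _ (le_max_left _ _)] at h3
    exact disjoint_left.1 h3 ⟨hP _, hMK hx⟩ ((hlive N).monoD (le_max_right _ _) hk)
  have hmesh : ∀ ε > 0, ∃ n, ∀ a ∈ (σ n).V, ∀ b ∈ (σ n).V, dist a b < ε := by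
    intro ε hε
    obtain ⟨m, hm⟩ := exists_nat_one_div_lt hε
    obtain ⟨n, hn, hV⟩ := hinf (m + 1)
    obtain ⟨l, rfl⟩ : ∃ l, n = l + 1 := ⟨n - 1, by omega⟩
    refine ⟨l + 1 + 1, fun a ha b hb => ?_⟩
    rw [hV] at ha hb
    refine ((hR l).1 a ha b hb).trans_le (le_trans ?_ hm.le)
    have : (m : ℝ) ≤ l := by exact_mod_cast (by omega : m ≤ l)
    gcongr
  have hz : ∀ n, ∃ z ∈ (σ n).V, f z ∈ (σ n).q := by
    intro n
    have h1 := (hlive n).fitK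
    have h2 : (((σ n).q \ (σ n).qs) ∩ closure (f '' (σ n).V)).Nonempty := by
      by_contra h0
      rw [not_nonempty_iff_eq_empty] at h0
      rw [h0, measureReal_empty] at h1
      exact absurd h1 (not_lt.2 measureReal_nonneg)
    obtain ⟨y, hy, hy'⟩ := h2
    obtain ⟨_, h3, z, h4, rfl⟩ := mem_closure_iff.1 hy' _ (hval n).cq.isOpen hy.1
    exact ⟨z, h4, h3⟩
  choose z hzV hzq using hz
  have hcau : CauchySeq z := by
    rw [Metric.cauchySeq_iff]
    intro ε hε
    obtain ⟨n, hn⟩ := hmesh ε hε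
    exact ⟨n, fun a ha b hb => hn _ (hVanti ha (hzV a)) _ (hVanti hb (hzV b))⟩
  obtain ⟨y, hy⟩ := cauchySeq_tendsto_of_complete hcau
  refine ⟨y, tendsto_nhds_unique ((h.cont.tendsto y).comp hy) ?_⟩
  have hQanti : Antitone fun n => (σ n).q := antitone_nat_of_succ_le hQs
  rw [isTopologicalBasis_isClopen.nhds_hasBasis.tendsto_right_iff]
  rintro W ⟨hW, hxW⟩
  obtain ⟨n, rfl⟩ := hU W hW
  filter_upwards [Filter.eventually_ge_atTop (n + 1)] with m hm
  rcases hdec n with hd | hd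
  · exact hd (hQanti hm (hzq m))
  · exact (disjoint_left.1 hd (hQ (n + 1)) hxW).elim

end Step

end GoodCantor

/-- An invariant ideal with analytic base not contained in the σ-ideal generated
by closed null sets contains every nowhere dense null set. -/
theorem stmt11 {X : Type*} [TopologicalSpace X] [CompactSpace X] [T2Space X]
    [TopologicalSpace.MetrizableSpace X] [TotallyDisconnectedSpace X]
    [MeasurableSpace X] [BorelSpace X]
    (μ : MeasureTheory.Measure X) [MeasureTheory.IsFiniteMeasure μ]
    (hperf : ∀ x : X, ¬ IsOpen ({x} : Set X))
    (hcont : ∀ x : X, μ {x} = 0)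
    (hpos : ∀ U : Set X, IsOpen U → U.Nonempty → 0 < μ U)
    (hsc : ∀ U V : Set X, IsClopen U → IsClopen V → μ U < μ V →
      ∃ W, W ⊆ V ∧ IsClopen W ∧ μ W = μ U)
    (I : Set (Set X))
    (hdown : ∀ A ∈ I, ∀ B : Set X, B ⊆ A → B ∈ I)
    (hcup : ∀ A ∈ I, ∀ B ∈ I, A ∪ B ∈ I)
    (hinv : ∀ h : X ≃ₜ X, (∀ S : Set X, MeasurableSet S → μ (h '' S) = μ S) →
      ∀ A ∈ I, h '' A ∈ I)
    (hbase : ∀ A ∈ I, ∃ B ∈ I, A ⊆ B ∧ MeasureTheory.AnalyticSet B)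
    (hbig : ∃ A ∈ I, ¬ ∃ F : ℕ → Set X, (∀ n, IsClosed (F n) ∧ μ (F n) = 0) ∧ A ⊆ ⋃ n, F n) :
    ∀ N : Set X, IsNowhereDense N → μ N = 0 → N ∈ I := by
  have hμ : GoodCantor.IsGood μ := ⟨hpos, hcont, hsc⟩
  intro N hN hN0
  obtain ⟨A, hAI, hA⟩ := hbig
  obtain ⟨B, hBI, hAB, hBan⟩ := hbase A hAI
  have hB : ¬ GoodCantor.InE μ B := fun h => hA (h.mono hAB)
  obtain ⟨Z, _, _, f, hZ, hf, hfB, hfat⟩ := GoodCantor.exists_polish_kernel μ hBan hB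
  let _ := TopologicalSpace.upgradeIsCompletelyMetrizable Z
  have hε : 0 < μ.real (closure (range f)) := by
    have h := hfat univ isOpen_univ univ_nonempty
    rw [image_univ] at h
    exact ENNReal.toReal_pos h.ne' (measure_ne_top _ _)
  obtain ⟨s, hs, hcov⟩ := hμ.finite_cover hε
  have hpiece : ∀ C ∈ s, N ∩ C ∈ I := by
    intro C hC
    obtain ⟨hCc, hCμ⟩ := hs C hC
    have hset : GoodCantor.Setup μ f (closure N ∩ C) (N ∩ C) :=
      { good := hμ
        cont := hf
        fat := hfat
        closedK := isClosed_closure.inter hCc.isClosed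
        intK := subset_empty_iff.1 ((interior_mono inter_subset_left).trans hN.subset)
        nullM := measure_mono_null inter_subset_left hN0 }
    obtain ⟨e, he, heM⟩ := hset.exists_homeo
      (inter_subset_inter_left _ subset_closure)
      ((measureReal_mono inter_subset_right).trans_lt hCμ)
    have hsymm : ∀ S : Set X, MeasurableSet S → μ (e.symm '' S) = μ S := by
      intro S hS
      have hm : MeasurableSet (e.symm '' S) := by
        rw [e.image_symm]
        exact e.continuous.measurable hS
      rw [← he _ hm, e.image_symm, e.image_preimage]
    refine hdown _ (hinv e.symm hsymm B hBI) _ fun x hx => ?_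
    exact ⟨e x, hfB (heM x hx), e.symm_apply_apply x⟩
  have hfin : ∀ t : Finset (Set X), t ⊆ s → N ∩ (⋃ C ∈ t, C) ∈ I := by
    classical
    intro t
    induction t using Finset.induction_on with
    | empty => exact fun _ => hdown A hAI _ (by simp)
    | insert C t _ ih =>
      intro ht
      rw [Finset.set_biUnion_insert, inter_union_distrib_left]
      exact hcup _ (hpiece C (ht (Finset.mem_insert_self _ _))) _
        (ih ((Finset.subset_insert _ _).trans ht))
  refine hdown _ (hfin s subset_rfl) _ fun x hx => ⟨hx, ?_⟩
  obtain ⟨C, hC, hxC⟩ := hcov x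
  exact mem_biUnion hC hxC
end
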